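/- Let n ≥ 2 and k ≥ 1. Every element x of the singular homology group H_k(C_n(ℂ)/(ℂ⋊ℂ*); ℤ) satisfies n! · x = 0; equivalently, the order of every homology class of M_{0,n+1}/Σ_n in positive degree divides n!. -/

import Mathlib

open Complex Topology CategoryTheory

/-- Ordered configuration space of `n` points in the subset `X ⊆ ℂ`. -/
abbrev OrdConfig (n : ℕ) (X : Set ℂ) : Type :=
  {f : Fin n → ℂ // Function.Injective f ∧ ∀ i, f i ∈ X}

/-- Two ordered configurations are related if they differ by a permutation of labels. -/
def permRel (n : ℕ) (X : Set ℂ) (f g : OrdConfig n X) : Prop :=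
  ∃ σ : Equiv.Perm (Fin n), g.1 = f.1 ∘ σ

/-- The unordered configuration space `C_n(X)` with the quotient topology. -/
abbrev UConfig (n : ℕ) (X : Set ℂ) : Type := Quot (permRel n X)

/-- The affine group relation on unordered configurations: `d` is obtained from `c` by
applying `z ↦ b z + a` with `b ≠ 0` to every point. -/
def affRel (n : ℕ) (c d : UConfig n Set.univ) : Prop :=
  ∃ a b : ℂ, b ≠ 0 ∧ ∃ f g : OrdConfig n Set.univ,
    Quot.mk _ f = c ∧ Quot.mk _ g = d ∧ ∀ i, g.1 i = b * f.1 i + a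

/-- `C_n(ℂ)/(ℂ⋊ℂ*)`, the orbit space with the quotient topology. -/
abbrev ConfigModAff (n : ℕ) : Type := Quot (affRel n)

/-- Singular homology of a topological space `Y` with coefficients in the ring `R`:
the `k`-th homology of the alternating face map complex of the free simplicial `R`-module
on the singular simplicial set of `Y`. -/
noncomputable def SingularHomology (R : Type) [CommRing R] (k : ℕ)
    (Y : Type) [TopologicalSpace Y] : ModuleCat R :=
  (((AlgebraicTopology.alternatingFaceMapComplex (ModuleCat R)).obj
      (((CategoryTheory.SimplicialObject.whiskering _ _).obj (ModuleCat.free R)).obj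
        (TopCat.toSSet.obj (TopCat.of Y)))).homology k)


/-! Part 1 -/

namespace TC

/-! ### Elementary singular chains (augmented, shifted indexing) -/

abbrev Del (k : ℕ) : Type := stdSimplex ℝ (Fin k)
abbrev Sing (k : ℕ) (X : Type) [TopologicalSpace X] : Type := C(Del k, X)
abbrev Ch (k : ℕ) (X : Type) [TopologicalSpace X] : Type := Sing k X →₀ ℤ

noncomputable def dmap {i j : ℕ} (f : Fin i → Fin j) : C(Del i, Del j) :=
  ⟨stdSimplex.map f, stdSimplex.continuous_map f⟩

lemma dmap_comp {i j k : ℕ} (f : Fin i → Fin j) (g : Fin j → Fin k) :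
    (dmap g).comp (dmap f) = dmap (g ∘ f) := by
  ext1 x
  exact stdSimplex.map_comp_apply f g x

lemma dmap_id {i : ℕ} : dmap (id : Fin i → Fin i) = ContinuousMap.id _ := by
  ext1 x
  exact stdSimplex.map_id_apply x

section gen
variable {A B A' B' : Type}

/-- pushforward of formal chains -/
noncomputable def mp (f : A → B) : (A →₀ ℤ) →ₗ[ℤ] (B →₀ ℤ) := Finsupp.lmapDomain ℤ ℤ f

@[simp] lemma mp_single (f : A → B) (a : A) (c : ℤ) :
    mp f (Finsupp.single a c) = Finsupp.single (f a) c := by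
  simp [mp]

/-- linear extension -/
noncomputable def ext {M : Type*} [AddCommGroup M] (f : A → M) : (A →₀ ℤ) →ₗ[ℤ] M :=
  Finsupp.linearCombination ℤ f

@[simp] lemma ext_single {M : Type*} [AddCommGroup M] (f : A → M) (a : A) (c : ℤ) :
    ext f (Finsupp.single a c) = c • f a := by
  simp [ext]

lemma lin_ext {M : Type*} [AddCommGroup M] {f g : (A →₀ ℤ) →ₗ[ℤ] M}
    (h : ∀ a, f (Finsupp.single a 1) = g (Finsupp.single a 1)) (x : A →₀ ℤ) : f x = g x := by
  have : f = g := by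
    apply Finsupp.lhom_ext'
    intro a
    apply LinearMap.ext_ring
    exact h a
  rw [this]

lemma mp_mp {C : Type} (f : A → B) (g : B → C) (x : A →₀ ℤ) :
    mp g (mp f x) = mp (fun a => g (f a)) x :=
  lin_ext (f := (mp g).comp (mp f)) (g := mp (fun a => g (f a))) (fun a => by simp) x

lemma mp_id (x : A →₀ ℤ) : mp (fun a => a) x = x :=
  lin_ext (f := mp (fun a => a)) (g := LinearMap.id) (fun a => by simp) x

lemma mp_ext (f : A → B) {M : Type*} [AddCommGroup M] (g : B → M) (x : A →₀ ℤ) :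
    ext g (mp f x) = ext (fun a => g (f a)) x :=
  lin_ext (f := (ext g).comp (mp f)) (g := ext (fun a => g (f a))) (fun a => by simp) x

lemma map_ext {M N : Type*} [AddCommGroup M] [AddCommGroup N] (φ : M →ₗ[ℤ] N) (g : A → M)
    (x : A →₀ ℤ) : φ (ext g x) = ext (fun a => φ (g a)) x :=
  lin_ext (f := φ.comp (ext g)) (g := ext (fun a => φ (g a))) (fun a => by simp) x

/-- alternating sum of faces -/
noncomputable def dG {k : ℕ} (F : Fin (k + 1) → A → B) : (A →₀ ℤ) →ₗ[ℤ] (B →₀ ℤ) :=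
  ext (fun a => ∑ i : Fin (k + 1), (-1 : ℤ) ^ (i : ℕ) • Finsupp.single (F i a) 1)

lemma dG_single {k : ℕ} (F : Fin (k + 1) → A → B) (a : A) :
    dG F (Finsupp.single a 1) = ∑ i : Fin (k + 1), (-1 : ℤ) ^ (i : ℕ) • Finsupp.single (F i a) 1 := by
  simp [dG]

lemma mp_dG {k : ℕ} (F : Fin (k + 1) → A → B) (F' : Fin (k + 1) → A' → B') (f : A → A')
    (g : B → B') (h : ∀ i a, g (F i a) = F' i (f a)) (x : A →₀ ℤ) :
    mp g (dG F x) = dG F' (mp f x) :=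
  lin_ext (f := (mp g).comp (dG F)) (g := (dG F').comp (mp f)) (fun a => by
    simp [dG_single, map_sum, h]) x
end gen

/-! ### Formal tuples -/

section tup
variable {s s' : Type}

noncomputable def dT {k : ℕ} : ((Fin (k + 1) → s) →₀ ℤ) →ₗ[ℤ] ((Fin k → s) →₀ ℤ) :=
  dG (fun i v => v ∘ i.succAbove)

/-- cone operator -/
noncomputable def cone {k : ℕ} (b : s) : ((Fin k → s) →₀ ℤ) →ₗ[ℤ] ((Fin (k + 1) → s) →₀ ℤ) :=
  mp (fun v => Fin.cons b v)

noncomputable def mpT {k : ℕ} (f : s → s') :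
    ((Fin k → s) →₀ ℤ) →ₗ[ℤ] ((Fin k → s') →₀ ℤ) := mp (fun v => f ∘ v)

lemma mpT_dT {k : ℕ} (f : s → s') (x : (Fin (k + 1) → s) →₀ ℤ) :
    mpT f (dT x) = dT (mpT f x) :=
  mp_dG (fun i v => v ∘ i.succAbove) (fun i v => v ∘ i.succAbove) (fun v => f ∘ v) (fun v => f ∘ v)
    (fun _ _ => rfl) x

lemma mpT_cone {k : ℕ} (f : s → s') (b : s) (x : (Fin k → s) →₀ ℤ) :
    mpT f (cone b x) = cone (f b) (mpT f x) := by
  simp only [mpT, cone, mp_mp]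
  congr 2
  funext v
  funext i
  refine Fin.cases ?_ (fun i => ?_) i <;> simp

lemma dT_cone {k : ℕ} (b : s) (x : (Fin (k + 1) → s) →₀ ℤ) :
    dT (cone b x) = x - cone b (dT x) := by
  refine lin_ext (f := dT.comp (cone b)) (g := LinearMap.id - (cone b).comp dT) (fun v => ?_) x
  simp only [LinearMap.comp_apply, LinearMap.sub_apply, LinearMap.id_apply, cone, mp_single,
    dT, dG_single]
  rw [Fin.sum_univ_succ, map_sum, sub_eq_add_neg, ← Finset.sum_neg_distrib]
  congr 1
  · simp [Function.comp_def]
  · apply Finset.sum_congr rfl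
    intro i _
    simp only [map_smul, mp_single, Fin.val_succ, pow_succ, mul_neg, mul_one, neg_smul]
    congr 3
    funext j
    refine Fin.cases ?_ (fun j => ?_) j <;> simp

lemma dT_cone_zero (b : s) (x : (Fin 0 → s) →₀ ℤ) :
    dT (cone b x) = x := by
  refine lin_ext (f := dT.comp (cone b)) (g := LinearMap.id) (fun v => ?_) x
  simp only [LinearMap.comp_apply, LinearMap.id_apply, cone, mp_single, dT, dG_single]
  rw [Fin.sum_univ_succ]
  simp only [Fin.val_zero, pow_zero, one_smul, Finset.univ_eq_empty, Finset.sum_empty, add_zero]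
  congr 1

lemma dT_dT : ∀ {k : ℕ} (x : (Fin (k + 2) → s) →₀ ℤ), dT (dT x) = 0 := by
  intro k
  induction k with
  | zero =>
    intro x
    refine lin_ext (f := dT.comp dT) (g := 0) (fun v => ?_) x
    have : Finsupp.single v 1 = cone (v 0) (Finsupp.single (Fin.tail v) (1:ℤ)) := by
      simp [cone]
    rw [LinearMap.comp_apply, this, dT_cone, map_sub, dT_cone_zero]
    simp
  | succ k ih =>
    intro x
    refine lin_ext (f := dT.comp dT) (g := 0) (fun v => ?_) x
    have : Finsupp.single v 1 = cone (v 0) (Finsupp.single (Fin.tail v) (1:ℤ)) := by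
      simp [cone]
    rw [LinearMap.comp_apply, this, dT_cone, map_sub, dT_cone, ih]
    simp
end tup

/-! ### Convex spaces -/

class Cvx (s : Type) [TopologicalSpace s] where
  comb : ∀ {j : ℕ}, (Fin j → s) → C(Del j, s)
  comb_map : ∀ {i j : ℕ} (f : Fin i → Fin j) (v : Fin j → s),
    (comb v).comp (dmap f) = comb (v ∘ f)

lemma sum_map {E : Type*} [AddCommGroup E] [Module ℝ E] {i j : ℕ} (f : Fin i → Fin j)
    (t : Del i) (v : Fin j → E) :
    ∑ l, (stdSimplex.map f t) l • v l = ∑ l, t l • v (f l) := by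
  classical
  simp only [stdSimplex.map_coe, FunOnFinite.linearMap_apply_apply, Finset.sum_smul]
  rw [← Finset.sum_fiberwise Finset.univ f]
  apply Finset.sum_congr rfl
  intro l _
  apply Finset.sum_congr rfl
  intro m hm
  simp at hm
  rw [hm]

noncomputable def convexComb {E : Type} [AddCommGroup E] [Module ℝ E] [TopologicalSpace E]
    [ContinuousAdd E] [ContinuousSMul ℝ E] (s : Set E) (hs : Convex ℝ s) {j : ℕ} (v : Fin j → s) :
    C(Del j, s) where
  toFun t := ⟨∑ l, t l • (v l : E), hs.sum_mem (fun l _ => t.2.1 l) t.2.2 (fun l _ => (v l).2)⟩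
  continuous_toFun := by
    apply Continuous.subtype_mk
    apply continuous_finsetSum
    intro l _
    exact ((continuous_apply l).comp continuous_subtype_val).smul continuous_const

@[reducible] noncomputable def cvxOfConvex {E : Type} [AddCommGroup E] [Module ℝ E] [TopologicalSpace E]
    [ContinuousAdd E] [ContinuousSMul ℝ E] (s : Set E) (hs : Convex ℝ s) : Cvx s where
  comb := convexComb s hs
  comb_map f v := by
    ext1 t
    apply Subtype.ext
    exact sum_map f t (fun l => (v l : E))

noncomputable instance (k : ℕ) : Cvx (Del k) := cvxOfConvex _ (convex_stdSimplex ℝ (Fin k))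
noncomputable instance : Cvx unitInterval := cvxOfConvex _ (convex_Icc 0 1)
noncomputable instance {s s' : Type} [TopologicalSpace s] [TopologicalSpace s'] [Cvx s] [Cvx s'] :
    Cvx (s × s') where
  comb v := (Cvx.comb (Prod.fst ∘ v)).prodMk (Cvx.comb (Prod.snd ∘ v))
  comb_map f v := by
    have h1 := Cvx.comb_map f (Prod.fst ∘ v)
    have h2 := Cvx.comb_map f (Prod.snd ∘ v)
    rw [Function.comp_assoc] at h1 h2
    rw [← h1, ← h2]
    rfl

/-- vertices of the simplex -/
noncomputable def vtx {k : ℕ} : Fin k → Del k := fun i => stdSimplex.vertex i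

lemma comb_vtx {k : ℕ} : Cvx.comb (vtx (k := k)) = ContinuousMap.id _ := by
  ext t l
  change (∑ l, t l • (vtx l : Fin k → ℝ)) l = t l
  simp [vtx, Finset.sum_apply, Pi.single_apply]

lemma dmap_vtx {i j : ℕ} (f : Fin i → Fin j) : dmap f ∘ vtx = vtx ∘ f := by
  funext l
  exact stdSimplex.map_vertex f l

lemma comb_vtx_comp {i j : ℕ} (f : Fin i → Fin j) :
    Cvx.comb (vtx ∘ f) = dmap f := by
  rw [← Cvx.comb_map, comb_vtx]; rfl

/-! ### Singular boundary -/

section sing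
variable {X Y Z : Type} [TopologicalSpace X] [TopologicalSpace Y] [TopologicalSpace Z]

noncomputable def pull {i j : ℕ} (f : Fin i → Fin j) (σ : Sing j X) : Sing i X := σ.comp (dmap f)

lemma pull_pull {i j k : ℕ} (f : Fin i → Fin j) (g : Fin j → Fin k) (σ : Sing k X) :
    pull f (pull g σ) = pull (g ∘ f) σ := by
  unfold pull
  rw [ContinuousMap.comp_assoc, dmap_comp]

noncomputable def dS {k : ℕ} : Ch (k + 1) X →ₗ[ℤ] Ch k X := dG (fun i σ => pull i.succAbove σ)

/-- pushforward of singular chains -/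
noncomputable def push {k : ℕ} (f : C(X, Y)) : Ch k X →ₗ[ℤ] Ch k Y := mp (fun σ => f.comp σ)

@[simp] lemma push_single {k : ℕ} (f : C(X, Y)) (σ : Sing k X) (c : ℤ) :
    push f (Finsupp.single σ c) = Finsupp.single (f.comp σ) c := by simp [push]

lemma push_dS {k : ℕ} (f : C(X, Y)) (x : Ch (k + 1) X) : push f (dS x) = dS (push f x) :=
  mp_dG (fun i σ => pull i.succAbove σ) (fun i σ => pull i.succAbove σ) (fun σ => f.comp σ)
    (fun σ => f.comp σ) (fun _ _ => rfl) x

lemma push_push {k : ℕ} (f : C(X, Y)) (g : C(Y, Z)) (x : Ch k X) :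
    push g (push f x) = push (g.comp f) x := by
  simp only [push, mp_mp]; rfl

lemma push_id {k : ℕ} (x : Ch k X) : push (ContinuousMap.id X) x = x := mp_id x

/-- realization of formal tuple chains -/
noncomputable def real {s : Type} [TopologicalSpace s] [Cvx s] {k : ℕ} (φ : C(s, X)) :
    ((Fin k → s) →₀ ℤ) →ₗ[ℤ] Ch k X := mp (fun v => φ.comp (Cvx.comb v))

lemma real_dT {s : Type} [TopologicalSpace s] [Cvx s] {k : ℕ} (φ : C(s, X))
    (x : (Fin (k + 1) → s) →₀ ℤ) : real φ (dT x) = dS (real φ x) :=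
  mp_dG _ _ _ _ (fun i v => by rw [← Cvx.comb_map, pull, ContinuousMap.comp_assoc]) x

lemma push_real {s : Type} [TopologicalSpace s] [Cvx s] {k : ℕ} (φ : C(s, X)) (f : C(X, Y))
    (x : (Fin k → s) →₀ ℤ) : push f (real φ x) = real (f.comp φ) x := by
  simp only [push, real, mp_mp]; rfl

/-- realization along an affine map -/
lemma real_mpT {s s' : Type} [TopologicalSpace s] [Cvx s] [TopologicalSpace s'] [Cvx s'] {k : ℕ}
    (φ : C(s', X)) (f : C(s, s')) (hf : ∀ v : Fin k → s, f.comp (Cvx.comb v) = Cvx.comb (f ∘ v))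
    (x : (Fin k → s) →₀ ℤ) : real φ (mpT f x) = real (φ.comp f) x := by
  simp only [real, mpT, mp_mp]
  congr 2
  funext v
  rw [← hf, ContinuousMap.comp_assoc]

/-- universal tuple -/
noncomputable def iot (k : ℕ) : (Fin k → Del k) →₀ ℤ := Finsupp.single vtx 1

lemma real_iot {k : ℕ} (σ : Sing k X) : real σ (iot k) = Finsupp.single σ 1 := by
  simp [real, iot, comb_vtx]

lemma dT_iot (k : ℕ) : dT (iot (k + 1)) =
    ∑ i : Fin (k + 1), (-1 : ℤ) ^ (i : ℕ) • mpT (dmap i.succAbove) (iot k) := by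
  simp [dT, iot, dG_single, mpT, dmap_vtx]

lemma dS_dS {k : ℕ} (x : Ch (k + 2) X) : dS (dS x) = 0 := by
  refine lin_ext (f := dS.comp dS) (g := 0) (fun σ => ?_) x
  rw [LinearMap.comp_apply, ← real_iot, ← real_dT, ← real_dT, dT_dT]
  simp

lemma dmap_affine {i j k : ℕ} (f : Fin i → Fin j) (v : Fin k → Del i) :
    (dmap f).comp (Cvx.comb v) = Cvx.comb (dmap f ∘ v) := by
  ext t l
  change FunOnFinite.linearMap ℝ ℝ f (∑ l, t l • (v l : Fin i → ℝ)) l =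
    (∑ l, t l • (FunOnFinite.linearMap ℝ ℝ f (v l) : Fin j → ℝ)) l
  simp [map_sum]

end sing
end TC

/-! Part 2 -/
namespace TC

section prism
variable {s s' : Type}

noncomputable def lft {k : ℕ} (e : unitInterval) :
    ((Fin k → s) →₀ ℤ) →ₗ[ℤ] ((Fin k → s × unitInterval) →₀ ℤ) := mpT (fun x => (x, e))

noncomputable def PT : ∀ k : ℕ,
    ((Fin k → s) →₀ ℤ) →ₗ[ℤ] ((Fin (k + 1) → s × unitInterval) →₀ ℤ)
  | 0 => 0
  | (k + 1) => ext (fun v => cone (v 0, 0)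
      (lft 1 (Finsupp.single v 1) - lft 0 (Finsupp.single v 1) - PT k (dT (Finsupp.single v 1))))

lemma lft_zero (x : (Fin 0 → s) →₀ ℤ) : lft 1 x = lft 0 x := by
  unfold lft mpT
  congr 2
  funext v
  exact Subsingleton.elim _ _

lemma dT_PT : ∀ (k : ℕ) (x : (Fin (k + 1) → s) →₀ ℤ),
    dT (PT (k + 1) x) = lft 1 x - lft 0 x - PT k (dT x) := by
  intro k
  induction k with
  | zero =>
    intro x
    refine lin_ext (f := dT.comp (PT 1)) (g := lft 1 - lft 0 - (PT 0).comp dT) (fun v => ?_) x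
    simp only [LinearMap.comp_apply, LinearMap.sub_apply, PT, ext_single, one_smul]
    rw [dT_cone]
    have : dT (lft 1 (Finsupp.single v 1) - lft 0 (Finsupp.single v 1) -
        (0 : ((Fin 0 → s) →₀ ℤ) →ₗ[ℤ] ((Fin 1 → s × unitInterval) →₀ ℤ)) (dT (Finsupp.single v 1))) = 0 := by
      simp only [LinearMap.zero_apply, sub_zero, map_sub]
      simp only [lft, ← mpT_dT]
      exact sub_eq_zero.2 (lft_zero _)
    rw [this]; simp
  | succ k ih =>
    intro x
    refine lin_ext (f := dT.comp (PT (k + 2))) (g := lft 1 - lft 0 - (PT (k + 1)).comp dT)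
      (fun v => ?_) x
    simp only [LinearMap.comp_apply, LinearMap.sub_apply]
    rw [PT, ext_single, one_smul, dT_cone]
    have : dT (lft 1 (Finsupp.single v 1) - lft 0 (Finsupp.single v 1) -
        PT (k + 1) (dT (Finsupp.single v 1))) = 0 := by
      simp only [map_sub, ih, dT_dT, map_zero, sub_zero]
      simp only [lft, ← mpT_dT]
      simp
    rw [this]; simp

lemma mpT_PT (f : s → s') : ∀ (k : ℕ) (x : (Fin k → s) →₀ ℤ),
    mpT (Prod.map f id) (PT k x) = PT k (mpT f x) := by
  intro k
  induction k with
  | zero => intro x; simp [PT]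
  | succ k ih =>
    intro x
    refine lin_ext (f := (mpT (Prod.map f id)).comp (PT (k+1))) (g := (PT (k + 1)).comp (mpT f))
      (fun v => ?_) x
    have hv : mpT f (Finsupp.single v 1) = Finsupp.single (f ∘ v) 1 := by simp [mpT]
    simp only [LinearMap.comp_apply, hv]
    rw [PT, ext_single, one_smul, PT, ext_single, one_smul, mpT_cone, map_sub, map_sub, ih, mpT_dT, hv]
    simp [lft, mpT, Function.comp_def]
end prism

section sd
variable {s s' : Type} [TopologicalSpace s] [TopologicalSpace s'] [Cvx s] [Cvx s']

noncomputable def bary {k : ℕ} (v : Fin (k + 1) → s) : s := Cvx.comb v stdSimplex.barycenter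

noncomputable def SdT : ∀ k : ℕ, ((Fin k → s) →₀ ℤ) →ₗ[ℤ] ((Fin k → s) →₀ ℤ)
  | 0 => LinearMap.id
  | (k + 1) => ext (fun v => cone (bary v) (SdT k (dT (Finsupp.single v 1))))

lemma SdT_single (k : ℕ) (v : Fin (k + 1) → s) : SdT (k + 1) (Finsupp.single v 1) =
    cone (bary v) (SdT k (dT (Finsupp.single v 1))) := by
  rw [SdT, ext_single, one_smul]

lemma dT_SdT : ∀ (k : ℕ) (x : (Fin (k + 1) → s) →₀ ℤ), dT (SdT (k + 1) x) = SdT k (dT x) := by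
  intro k
  induction k with
  | zero =>
    intro x
    have h := lin_ext (f := (dT (k := 0)).comp (SdT (s := s) (0 + 1))) (g := dT (k := 0))
      (fun v => by
        rw [LinearMap.comp_apply, SdT_single, dT_cone_zero]
        rfl) x
    rw [LinearMap.comp_apply] at h
    rw [h, SdT, LinearMap.id_apply]
  | succ k ih =>
    intro x
    have h := lin_ext (f := (dT (k := k + 1)).comp (SdT (s := s) (k + 1 + 1)))
      (g := (SdT (s := s) (k + 1)).comp (dT (k := k + 1))) (fun v => by
        rw [LinearMap.comp_apply, LinearMap.comp_apply, SdT_single, dT_cone, ih, dT_dT]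
        rw [map_zero, map_zero, sub_zero]) x
    rwa [LinearMap.comp_apply] at h

noncomputable def DT : ∀ k : ℕ, ((Fin k → s) →₀ ℤ) →ₗ[ℤ] ((Fin (k + 1) → s) →₀ ℤ)
  | 0 => 0
  | (k + 1) => ext (fun v => cone (bary v) (Finsupp.single v 1 - SdT (k + 1) (Finsupp.single v 1)
      - DT k (dT (Finsupp.single v 1))))

lemma DT_single (k : ℕ) (v : Fin (k + 1) → s) : DT (k + 1) (Finsupp.single v 1) =
    cone (bary v) (Finsupp.single v 1 - SdT (k + 1) (Finsupp.single v 1)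
      - DT k (dT (Finsupp.single v 1))) := by
  rw [DT, ext_single, one_smul]

lemma dT_DT : ∀ (k : ℕ) (x : (Fin (k + 1) → s) →₀ ℤ),
    dT (DT (k + 1) x) = x - SdT (k + 1) x - DT k (dT x) := by
  intro k
  induction k with
  | zero =>
    intro x
    refine lin_ext (f := dT.comp (DT 1)) (g := LinearMap.id - SdT 1 - (DT 0).comp dT) (fun v => ?_) x
    simp only [LinearMap.comp_apply, LinearMap.sub_apply, LinearMap.id_apply]
    rw [DT_single, dT_cone]
    have : dT (Finsupp.single v 1 - SdT 1 (Finsupp.single v 1) - DT 0 (dT (Finsupp.single v 1))) = 0 := by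
      rw [map_sub, map_sub, dT_SdT]
      simp [SdT, DT]
    rw [this]; simp
  | succ k ih =>
    intro x
    refine lin_ext (f := dT.comp (DT (k+2))) (g := LinearMap.id - SdT (k+2) - (DT (k+1)).comp dT)
      (fun v => ?_) x
    simp only [LinearMap.comp_apply, LinearMap.sub_apply, LinearMap.id_apply]
    rw [DT_single, dT_cone]
    have : dT (Finsupp.single v 1 - SdT (k+2) (Finsupp.single v 1)
        - DT (k+1) (dT (Finsupp.single v 1))) = 0 := by
      rw [map_sub, map_sub, dT_SdT, ih, dT_dT]
      simp
    rw [this]; simp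

def IsAff (f : C(s, s')) : Prop :=
  ∀ {j : ℕ} (v : Fin j → s), f.comp (Cvx.comb v) = Cvx.comb (f ∘ v)

lemma IsAff.bary {f : C(s, s')} (hf : IsAff f) {k : ℕ} (v : Fin (k + 1) → s) :
    f (bary v) = TC.bary (f ∘ v) := DFunLike.congr_fun (hf v) _

lemma mpT_single {s s' : Type} {k : ℕ} (f : s → s') (v : Fin k → s) (c : ℤ) :
    mpT f (Finsupp.single v c) = Finsupp.single (f ∘ v) c := by simp [mpT]

lemma mpT_SdT {f : C(s, s')} (hf : IsAff f) : ∀ (k : ℕ) (x : (Fin k → s) →₀ ℤ),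
    mpT f (SdT k x) = SdT k (mpT f x) := by
  intro k
  induction k with
  | zero => intro x; simp [SdT]
  | succ k ih =>
    intro x
    refine lin_ext (f := (mpT f).comp (SdT (k+1))) (g := (SdT (k + 1)).comp (mpT f))
      (fun v => ?_) x
    simp only [LinearMap.comp_apply, mpT_single]
    rw [SdT_single, SdT_single, mpT_cone, ih, mpT_dT, mpT_single,
      hf.bary]

lemma mpT_DT {f : C(s, s')} (hf : IsAff f) : ∀ (k : ℕ) (x : (Fin k → s) →₀ ℤ),
    mpT f (DT k x) = DT k (mpT f x) := by
  intro k
  induction k with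
  | zero => intro x; simp [DT]
  | succ k ih =>
    intro x
    refine lin_ext (f := (mpT f).comp (DT (k+1))) (g := (DT (k + 1)).comp (mpT f))
      (fun v => ?_) x
    simp only [LinearMap.comp_apply, mpT_single]
    rw [DT_single, DT_single, mpT_cone, map_sub (mpT f), map_sub (mpT f), ih, mpT_dT,
      mpT_SdT hf, mpT_single, hf.bary]
end sd

lemma comb_vtx' {m k : ℕ} (v : Fin k → Del m) : Cvx.comb v ∘ vtx = v := by
  funext i
  apply Subtype.ext
  change ∑ l, (vtx i : Fin k → ℝ) l • (v l : Fin m → ℝ) = v i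
  simp [vtx, Pi.single_apply]

lemma comb_aff {m k : ℕ} (v : Fin k → Del m) : IsAff (Cvx.comb v : C(Del k, Del m)) := by
  intro j w
  ext1 t
  apply Subtype.ext
  change ∑ l, (∑ i, t i • (w i : Fin k → ℝ)) l • (v l : Fin m → ℝ)
    = ∑ i, t i • ∑ l, (w i : Fin k → ℝ) l • (v l : Fin m → ℝ)
  simp only [Finset.sum_apply, Finset.sum_smul, Finset.smul_sum, Pi.smul_apply, smul_eq_mul, mul_smul]
  rw [Finset.sum_comm]

section sing
variable {X Y Z : Type} [TopologicalSpace X] [TopologicalSpace Y] [TopologicalSpace Z]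

lemma real_single {s : Type} [TopologicalSpace s] [Cvx s] {k : ℕ} (φ : C(s, X)) (v : Fin k → s) :
    real φ (Finsupp.single v 1) = Finsupp.single (φ.comp (Cvx.comb v)) 1 := by simp [real]

/-- subdivision -/
noncomputable def sd (k : ℕ) : Ch k X →ₗ[ℤ] Ch k X := ext (fun σ => real σ (SdT k (iot k)))
noncomputable def sD (k : ℕ) : Ch k X →ₗ[ℤ] Ch (k + 1) X := ext (fun σ => real σ (DT k (iot k)))
noncomputable def prism (H : C(X × unitInterval, Y)) (k : ℕ) : Ch k X →ₗ[ℤ] Ch (k + 1) Y :=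
  ext (fun σ => real (H.comp (σ.prodMap (ContinuousMap.id _))) (PT k (iot k)))

lemma sd_real {m k : ℕ} (σ : Sing m X) (x : (Fin k → Del m) →₀ ℤ) :
    sd k (real σ x) = real σ (SdT k x) := by
  refine lin_ext (f := (sd k).comp (real σ)) (g := (real σ).comp (SdT k)) (fun v => ?_) x
  simp only [LinearMap.comp_apply]
  rw [real_single, sd, ext_single, one_smul, ← real_mpT σ (Cvx.comb v) (comb_aff v),
    mpT_SdT (comb_aff v), iot, mpT_single, comb_vtx']

lemma sD_real {m k : ℕ} (σ : Sing m X) (x : (Fin k → Del m) →₀ ℤ) :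
    sD k (real σ x) = real σ (DT k x) := by
  refine lin_ext (f := (sD k).comp (real σ)) (g := (real σ).comp (DT k)) (fun v => ?_) x
  simp only [LinearMap.comp_apply]
  rw [real_single, sD, ext_single, one_smul, ← real_mpT σ (Cvx.comb v) (comb_aff v),
    mpT_DT (comb_aff v), iot, mpT_single, comb_vtx']

lemma prism_real (H : C(X × unitInterval, Y)) {m k : ℕ} (σ : Sing m X) (x : (Fin k → Del m) →₀ ℤ) :
    prism H k (real σ x) = real (H.comp (σ.prodMap (ContinuousMap.id _))) (PT k x) := by
  refine lin_ext (f := (prism H k).comp (real σ))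
    (g := (real (H.comp (σ.prodMap (ContinuousMap.id _)))).comp (PT k)) (fun v => ?_) x
  simp only [LinearMap.comp_apply]
  have h1 : H.comp ((σ.comp (Cvx.comb v)).prodMap (ContinuousMap.id _)) =
    (H.comp (σ.prodMap (ContinuousMap.id _))).comp
      ((Cvx.comb v).prodMap (ContinuousMap.id unitInterval)) := rfl
  rw [real_single, prism, ext_single, one_smul, h1, ← real_mpT]
  · have := mpT_PT (Cvx.comb v) k (iot k)
    rw [iot, mpT_single, comb_vtx'] at this
    exact congrArg _ this
  · intro w
    have := comb_aff v (Prod.fst ∘ w)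
    change ((Cvx.comb v).comp (Cvx.comb (Prod.fst ∘ w))).prodMk (Cvx.comb (Prod.snd ∘ w)) = _
    rw [this]
    rfl

lemma dS_sd {k : ℕ} (x : Ch (k + 1) X) : dS (sd (k + 1) x) = sd k (dS x) := by
  refine lin_ext (f := dS.comp (sd (k+1))) (g := (sd k).comp dS) (fun σ => ?_) x
  simp only [LinearMap.comp_apply]
  rw [← real_iot, sd_real, ← real_dT, dT_SdT, ← sd_real, real_dT]

lemma dS_sD {k : ℕ} (x : Ch (k + 1) X) :
    dS (sD (k + 1) x) = x - sd (k + 1) x - sD k (dS x) := by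
  refine lin_ext (f := dS.comp (sD (k+1))) (g := LinearMap.id - sd (k+1) - (sD k).comp dS)
    (fun σ => ?_) x
  simp only [LinearMap.comp_apply, LinearMap.sub_apply, LinearMap.id_apply]
  rw [← real_iot, sD_real, ← real_dT, dT_DT, sd_real, ← real_dT, sD_real, map_sub, map_sub]

lemma sd_zero (x : Ch 0 X) : sd 0 x = x := by
  refine lin_ext (f := sd 0) (g := LinearMap.id) (fun σ => ?_) x
  rw [← real_iot, sd_real]; rfl

lemma prism_zero (H : C(X × unitInterval, Y)) (x : Ch 0 X) : prism H 0 x = 0 := by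
  refine lin_ext (f := prism H 0) (g := 0) (fun σ => ?_) x
  rw [← real_iot, prism_real]; simp [PT]

lemma dS_prism (H : C(X × unitInterval, Y)) (f g : C(X, Y)) (hf : ∀ x, H (x, 0) = f x)
    (hg : ∀ x, H (x, 1) = g x) {k : ℕ} (x : Ch (k + 1) X) :
    dS (prism H (k + 1) x) = push g x - push f x - prism H k (dS x) := by
  refine lin_ext (f := dS.comp (prism H (k+1))) (g := push g - push f - (prism H k).comp dS)
    (fun σ => ?_) x
  simp only [LinearMap.comp_apply, LinearMap.sub_apply]
  rw [← real_iot, prism_real, ← real_dT, dT_PT, ← real_dT, prism_real, map_sub, map_sub]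
  congr 2
  · simp only [lft, iot, mpT_single, real_single, push_single, comb_vtx]
    congr 1
    ext t
    simp only [ContinuousMap.comp_apply, ContinuousMap.id_apply]
    rw [← hg]
    have h1 := DFunLike.congr_fun (comb_vtx (k := k+1)) t
    change H (σ (Cvx.comb vtx t), ⟨∑ l, t l • (1:ℝ), _⟩) = _
    rw [h1]
    congr 2
    apply Subtype.ext
    simp
  · simp only [lft, iot, mpT_single, real_single, push_single, comb_vtx]
    congr 1
    ext t
    simp only [ContinuousMap.comp_apply, ContinuousMap.id_apply]
    rw [← hf]
    have h1 := DFunLike.congr_fun (comb_vtx (k := k+1)) t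
    change H (σ (Cvx.comb vtx t), ⟨∑ l, t l • (0:ℝ), _⟩) = _
    rw [h1]
    congr 2
    apply Subtype.ext
    simp

end sing
end TC

/-! Part 3 -/
namespace TC
set_option linter.unusedSectionVars false

lemma sup_map {A : Type} {M : Type*} [AddCommGroup M] {S : Set A} {x : A →₀ ℤ}
    (hx : x ∈ Finsupp.supported ℤ ℤ S) (f : (A →₀ ℤ) →ₗ[ℤ] M) (N : Submodule ℤ M)
    (h : ∀ a ∈ S, f (Finsupp.single a 1) ∈ N) : f x ∈ N := by
  rw [Finsupp.supported_eq_span_single] at hx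
  induction hx using Submodule.span_induction with
  | mem y hy => obtain ⟨a, ha, rfl⟩ := hy; exact h a ha
  | zero => simp
  | add y z _ _ hy hz => rw [map_add]; exact N.add_mem hy hz
  | smul c y _ hy => rw [map_smul]; exact N.smul_mem _ hy

lemma mem_sup_single {A : Type} {S : Set A} {a : A} (c : ℤ) (h : a ∈ S) :
    Finsupp.single a c ∈ Finsupp.supported ℤ ℤ S := Finsupp.single_mem_supported ℤ c h

lemma sup_mp {A B : Type} {S : Set A} {S' : Set B} (f : A → B) (h : ∀ a ∈ S, f a ∈ S')
    {x : A →₀ ℤ} (hx : x ∈ Finsupp.supported ℤ ℤ S) : mp f x ∈ Finsupp.supported ℤ ℤ S' :=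
  sup_map hx _ _ (fun a ha => by rw [mp_single]; exact mem_sup_single _ (h a ha))

lemma mem_univ_sup {A : Type} (x : A →₀ ℤ) : x ∈ Finsupp.supported ℤ ℤ (Set.univ : Set A) := by
  simp

section
variable {X Y Z : Type} [TopologicalSpace X] [TopologicalSpace Y] [TopologicalSpace Z]

/-- chains all of whose simplices have range satisfying `P` -/
noncomputable def sm (P : Set X → Prop) (k : ℕ) : Submodule ℤ (Ch k X) :=
  Finsupp.supported ℤ ℤ {σ | P (Set.range σ)}

/-- chains supported in a set -/
noncomputable def inS (S : Set X) (k : ℕ) : Submodule ℤ (Ch k X) := sm (fun A => A ⊆ S) k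

def Dn (P : Set X → Prop) : Prop := ∀ A B, A ⊆ B → P B → P A

lemma Dn_sub (S : Set X) : Dn (fun A => A ⊆ S) := fun _ _ h h' => h.trans h'

lemma sm_mono {P Q : Set X → Prop} (h : ∀ A, P A → Q A) {k : ℕ} {x : Ch k X} (hx : x ∈ sm P k) :
    x ∈ sm Q k := Finsupp.supported_mono (fun _ hσ => h _ hσ) hx

lemma inS_mono {S T : Set X} (h : S ⊆ T) {k : ℕ} {x : Ch k X} (hx : x ∈ inS S k) : x ∈ inS T k :=
  sm_mono (fun _ hA => hA.trans h) hx

lemma inS_inter {S T : Set X} {k : ℕ} {x : Ch k X} (hx : x ∈ inS S k) (hy : x ∈ inS T k) :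
    x ∈ inS (S ∩ T) k := by
  have := Submodule.mem_inf.2 ⟨hx, hy⟩
  unfold inS sm at this
  rw [← Finsupp.supported_inter] at this
  exact Finsupp.supported_mono (fun σ hσ => Set.subset_inter hσ.1 hσ.2) this

lemma inS_univ {k : ℕ} (x : Ch k X) : x ∈ inS Set.univ k := by
  unfold inS sm; simp

lemma real_sm {P : Set X → Prop} (hP : Dn P) {s : Type} [TopologicalSpace s] [Cvx s] {k : ℕ}
    (φ : C(s, X)) (h : P (Set.range φ)) (x : (Fin k → s) →₀ ℤ) : real φ x ∈ sm P k :=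
  sup_mp (fun v => φ.comp (Cvx.comb v)) (fun v _ => hP (Set.range (φ.comp (Cvx.comb v))) _ (by
    rintro _ ⟨t, rfl⟩; exact ⟨_, rfl⟩) h) (mem_univ_sup x)

lemma dS_sm {P : Set X → Prop} (hP : Dn P) {k : ℕ} {x : Ch (k + 1) X} (hx : x ∈ sm P (k + 1)) :
    dS x ∈ sm P k :=
  sup_map hx _ _ (fun σ hσ => by rw [← real_iot, ← real_dT]; exact real_sm hP σ hσ _)

lemma sd_sm {P : Set X → Prop} (hP : Dn P) {k : ℕ} {x : Ch k X} (hx : x ∈ sm P k) :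
    sd k x ∈ sm P k :=
  sup_map hx _ _ (fun σ hσ => by rw [← real_iot, sd_real]; exact real_sm hP σ hσ _)

lemma sD_sm {P : Set X → Prop} (hP : Dn P) {k : ℕ} {x : Ch k X} (hx : x ∈ sm P k) :
    sD k x ∈ sm P (k + 1) :=
  sup_map hx _ _ (fun σ hσ => by rw [← real_iot, sD_real]; exact real_sm hP σ hσ _)

lemma dS_inS {S : Set X} {k : ℕ} {x : Ch (k + 1) X} (hx : x ∈ inS S (k + 1)) :
    dS x ∈ inS S k := dS_sm (Dn_sub S) hx

lemma push_inS {S : Set X} {T : Set Y} {f : C(X, Y)} (h : Set.MapsTo f S T) {k : ℕ} {x : Ch k X}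
    (hx : x ∈ inS S k) : push f x ∈ inS T k :=
  sup_mp _ (fun σ hσ => by
    rintro _ ⟨t, rfl⟩
    exact h (hσ ⟨t, rfl⟩)) hx

lemma prism_inS {S : Set X} {T : Set Y} {H : C(X × unitInterval, Y)}
    (h : ∀ x ∈ S, ∀ t, H (x, t) ∈ T) {k : ℕ} {x : Ch k X}
    (hx : x ∈ inS S k) : prism H k x ∈ inS T (k + 1) :=
  sup_map hx _ _ (fun σ hσ => by
    rw [← real_iot, prism_real]
    refine real_sm (Dn_sub T) _ ?_ _
    rintro _ ⟨⟨t, u⟩, rfl⟩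
    exact h _ (hσ ⟨t, rfl⟩) u)

/-! chains on a subtype -/
def incl (S : Set X) : C(S, X) := ⟨Subtype.val, continuous_subtype_val⟩

lemma push_injective {f : C(X, Y)} (hf : Function.Injective f) (k : ℕ) :
    Function.Injective (push f : Ch k X →ₗ[ℤ] Ch k Y) := by
  apply Finsupp.mapDomain_injective
  intro σ τ h
  ext t
  exact hf (DFunLike.congr_fun h t)

lemma incl_injective (S : Set X) (k : ℕ) :
    Function.Injective (push (incl S) : Ch k S →ₗ[ℤ] Ch k X) :=
  push_injective Subtype.val_injective k

lemma push_incl_mem {S : Set X} {k : ℕ} (y : Ch k S) : push (incl S) y ∈ inS S k :=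
  sup_mp _ (fun σ _ => by rintro _ ⟨t, rfl⟩; exact (σ t).2) (mem_univ_sup y)

lemma exists_incl {S : Set X} {k : ℕ} {x : Ch k X} (hx : x ∈ inS S k) :
    ∃ y : Ch k S, push (incl S) y = x := by
  have : x ∈ LinearMap.range (push (incl S) : Ch k S →ₗ[ℤ] Ch k X) := by
    refine sup_map hx LinearMap.id _ (fun σ hσ => ?_)
    refine ⟨Finsupp.single ⟨fun t => ⟨σ t, hσ ⟨t, rfl⟩⟩, by fun_prop⟩ 1, ?_⟩
    rw [push_single]; rfl
  exact this

end

/-! ### mesh estimates -/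

lemma mesh {m : ℕ} (K : ℕ) : ∀ (k : ℕ) (_ : k ≤ K + 1) (v : Fin k → Del m) (D : ℝ) (_ : 0 ≤ D)
    (_ : ∀ i j, dist (v i) (v j) ≤ D),
    SdT k (Finsupp.single v 1) ∈ Finsupp.supported ℤ ℤ
      {w : Fin k → Del m | (∀ i j, dist (w i) (w j) ≤ K / (K + 1) * D) ∧
        ∀ i, w i ∈ Set.range (Cvx.comb v)} := by
  intro k
  induction k with
  | zero =>
    intro _ v D _ _
    exact mem_sup_single 1 ⟨fun i => i.elim0, fun i => i.elim0⟩
  | succ k ih =>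
    intro hk v D hD hv
    have key : ∀ t, dist (bary v) (Cvx.comb v t) ≤ K / (K + 1) * D := by
      intro t
      have h1 : ∀ l, ‖((bary v : Del m) : Fin m → ℝ) - v l‖ ≤ K / (K + 1) * D := by
        intro l
        have hb : ((bary v : Del m) : Fin m → ℝ) = ∑ i, ((k : ℝ) + 1)⁻¹ • (v i : Fin m → ℝ) := by
          change ∑ i, ((stdSimplex.barycenter : Del (k+1)) : Fin (k+1) → ℝ) i • (v i : Fin m → ℝ) = _
          apply Finset.sum_congr rfl
          intro i _
          congr 1
          refine (stdSimplex.barycenter_apply (𝕜 := ℝ) (X := Fin (k+1)) i).trans ?_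
          simp
        have hb' : ((bary v : Del m) : Fin m → ℝ) - v l =
            ((k : ℝ) + 1)⁻¹ • ∑ i, ((v i : Fin m → ℝ) - v l) := by
          rw [hb, Finset.sum_sub_distrib, smul_sub, Finset.smul_sum]
          simp only [Finset.sum_const, Finset.card_univ, Fintype.card_fin]
          rw [← Nat.cast_smul_eq_nsmul ℝ, smul_smul]
          push_cast
          rw [inv_mul_cancel₀ (by positivity), one_smul]
        rw [hb', norm_smul]
        have h2 : ‖∑ i, ((v i : Fin m → ℝ) - v l)‖ ≤ k * D := by
          rw [← Finset.sum_erase_add _ _ (Finset.mem_univ l)]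
          simp only [sub_self, add_zero]
          refine (norm_sum_le _ _).trans ?_
          refine (Finset.sum_le_card_nsmul _ _ D (fun i _ => ?_)).trans ?_
          · rw [← dist_eq_norm]; exact hv i l
          · simp [Finset.card_erase_of_mem]
        have h3 : ‖((k : ℝ) + 1)⁻¹‖ = ((k : ℝ) + 1)⁻¹ := by
          rw [Real.norm_of_nonneg]; positivity
        rw [h3]
        calc ((k : ℝ) + 1)⁻¹ * _ ≤ ((k : ℝ) + 1)⁻¹ * (k * D) := by gcongr
          _ = (k / (k + 1)) * D := by ring
          _ ≤ K / (K + 1) * D := by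
            gcongr ?_ * D
            have : (k : ℝ) ≤ K := by exact_mod_cast (by omega : k ≤ K)
            rw [div_le_div_iff₀ (by positivity) (by positivity)]
            nlinarith
      rw [Subtype.dist_eq, dist_eq_norm]
      have h4 : ((bary v : Del m) : Fin m → ℝ) - (Cvx.comb v t : Del m) =
          ∑ l, t l • (((bary v : Del m) : Fin m → ℝ) - v l) := by
        simp only [smul_sub, Finset.sum_sub_distrib, ← Finset.sum_smul]
        rw [stdSimplex.sum_eq_one, one_smul]
        rfl
      refine (congrArg norm h4).trans_le ?_
      refine (norm_sum_le _ _).trans ?_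
      calc ∑ l, ‖t l • (((bary v : Del m) : Fin m → ℝ) - v l)‖
          ≤ ∑ l, t l * (K / (K + 1) * D) := by
            apply Finset.sum_le_sum
            intro l _
            rw [norm_smul, Real.norm_of_nonneg (stdSimplex.zero_le t l)]
            exact mul_le_mul_of_nonneg_left (h1 l) (stdSimplex.zero_le t l)
        _ = K / (K + 1) * D := by
            rw [← Finset.sum_mul, stdSimplex.sum_eq_one, one_mul]
    rw [SdT_single]
    have : SdT k (dT (Finsupp.single v 1)) ∈ Finsupp.supported ℤ ℤ
        {w : Fin k → Del m | (∀ i j, dist (w i) (w j) ≤ K / (K + 1) * D) ∧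
        ∀ i, w i ∈ Set.range (Cvx.comb v)} := by
      rw [dT, dG_single, map_sum]
      apply Submodule.sum_mem
      intro i _
      rw [map_smul]
      apply Submodule.smul_mem
      refine Finsupp.supported_mono ?_ (ih (by omega) (v ∘ i.succAbove) D hD (fun a b => hv _ _))
      rintro w ⟨h1, h2⟩
      refine ⟨h1, fun j => ?_⟩
      obtain ⟨t, ht⟩ := h2 j
      rw [← ht, ← Cvx.comb_map]
      exact ⟨_, rfl⟩
    refine sup_mp _ ?_ this
    rintro w ⟨h1, h2⟩
    constructor
    · intro i j
      have hc : 0 ≤ K / (K + 1) * D := by positivity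
      refine Fin.cases ?_ (fun i => ?_) i <;> refine Fin.cases ?_ (fun j => ?_) j
      · simpa using hc
      · simp only [Fin.cons_zero, Fin.cons_succ]
        obtain ⟨t, ht⟩ := h2 j
        rw [← ht]; exact key t
      · simp only [Fin.cons_zero, Fin.cons_succ]
        obtain ⟨t, ht⟩ := h2 i
        rw [← ht, dist_comm]; exact key t
      · simpa using h1 i j
    · intro i
      refine Fin.cases ?_ (fun i => ?_) i
      · exact ⟨_, rfl⟩
      · simpa using h2 i

lemma mesh_iter (k r : ℕ) : ((SdT k) ^ r : Module.End ℤ ((Fin k → Del k) →₀ ℤ)) (iot k) ∈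
    Finsupp.supported ℤ ℤ
      {w : Fin k → Del k | ∀ i j, dist (w i) (w j) ≤ ((k : ℝ) / (k + 1)) ^ r * 1} := by
  induction r with
  | zero =>
    refine mem_sup_single 1 ?_
    intro i j
    rw [Subtype.dist_eq]
    simp only [pow_zero, one_mul]
    exact (Metric.dist_le_diam_of_mem (bounded_stdSimplex (Fin k)) (vtx i).2 (vtx j).2).trans
      (diam_stdSimplex_le)
  | succ r ih =>
    have h0 : ((SdT k) ^ (r + 1) : Module.End ℤ ((Fin k → Del k) →₀ ℤ)) (iot k) =
        SdT k (((SdT k) ^ r : Module.End ℤ ((Fin k → Del k) →₀ ℤ)) (iot k)) := by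
      rw [pow_succ', Module.End.mul_apply]
    rw [h0]
    refine sup_map ih _ _ ?_
    intro w hw
    refine Finsupp.supported_mono ?_ (mesh k k (by omega) w _ (by positivity) hw)
    rintro w' ⟨h1, _⟩ i j
    rw [pow_succ', mul_assoc]
    exact h1 i j

section
variable {X Y Z : Type} [TopologicalSpace X] [TopologicalSpace Y] [TopologicalSpace Z]

lemma sd_pow_real {k : ℕ} (σ : Sing k X) (r : ℕ) (x) :
    ((sd k) ^ r : Module.End ℤ (Ch k X)) (real σ x) =
      real σ (((SdT k) ^ r : Module.End ℤ ((Fin k → Del k) →₀ ℤ)) x) := by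
  induction r with
  | zero => rfl
  | succ r ih => rw [pow_succ', Module.End.mul_apply, ih, sd_real, pow_succ', Module.End.mul_apply]

lemma comb_ball {m k : ℕ} (v : Fin (k + 1) → Del m) (δ : ℝ) (h : ∀ i j, dist (v i) (v j) < δ) :
    Set.range (Cvx.comb v) ⊆ Metric.ball (v 0) δ := by
  rintro _ ⟨t, rfl⟩
  have hc := convex_ball ((v 0 : Del m) : Fin m → ℝ) δ
  exact hc.sum_mem (fun l _ => t.2.1 l) t.2.2 (fun l _ => h l 0)

def cov {ι : Type} (U : ι → Set X) : Set X → Prop := fun A => ∃ i, A ⊆ U i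

lemma Dn_cov {ι : Type} (U : ι → Set X) : Dn (cov U) := fun _ _ h ⟨i, hi⟩ => ⟨i, h.trans hi⟩

lemma sd_small {ι : Type} [Nonempty ι] (U : ι → Set X) (hU : ∀ i, IsOpen (U i))
    (hc : ∀ x, ∃ i, x ∈ U i) {k : ℕ} (f : Ch k X) :
    ∃ N, ∀ r ≥ N, ((sd k) ^ r : Module.End ℤ (Ch k X)) f ∈ sm (cov U) k := by
  induction f using Finsupp.induction_linear with
  | zero => exact ⟨0, fun r _ => by simp⟩
  | add f g hf hg =>
    obtain ⟨a, ha⟩ := hf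
    obtain ⟨b, hb⟩ := hg
    exact ⟨max a b, fun r hr => by
      rw [map_add]
      exact Submodule.add_mem _ (ha r ((le_max_left _ _).trans hr))
        (hb r ((le_max_right _ _).trans hr))⟩
  | single σ c =>
    suffices h : ∃ N, ∀ r ≥ N, ((sd k) ^ r : Module.End ℤ (Ch k X)) (Finsupp.single σ 1) ∈
        sm (cov U) k by
      obtain ⟨N, hN⟩ := h
      refine ⟨N, fun r hr => ?_⟩
      have : Finsupp.single σ c = c • Finsupp.single σ (1 : ℤ) := by simp
      rw [this, map_smul]
      exact Submodule.smul_mem _ _ (hN r hr)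
    rcases k with _ | k
    · refine ⟨0, fun r _ => ?_⟩
      obtain ⟨i⟩ := ‹Nonempty ι›
      refine sup_map (mem_univ_sup (Finsupp.single σ 1)) _ _ (fun τ _ => ?_)
      rw [← real_iot, sd_pow_real]
      refine real_sm (Dn_cov U) _ ⟨i, ?_⟩ _
      rintro _ ⟨t, rfl⟩
      have := t.2.2
      simp at this
    obtain ⟨δ, hδ, hleb⟩ := lebesgue_number_lemma_of_metric (s := (Set.univ : Set (Del (k+1))))
      isCompact_univ (c := fun i => σ ⁻¹' (U i)) (fun i => (hU i).preimage σ.continuous)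
      (fun x _ => Set.mem_iUnion.2 (hc (σ x)))
    have hlt : ((k + 1 : ℕ) : ℝ) / ((k + 1 : ℕ) + 1) < 1 := by
      rw [div_lt_one (by positivity)]; linarith
    obtain ⟨N, hN⟩ := exists_pow_lt_of_lt_one hδ hlt
    refine ⟨N, fun r hr => ?_⟩
    rw [← real_iot, sd_pow_real]
    refine sup_mp _ ?_ (mesh_iter (k+1) r)
    intro w hw
    have hw' : ∀ i j, dist (w i) (w j) < δ := by
      intro i j
      refine (hw i j).trans_lt ?_
      rw [mul_one]
      exact (pow_le_pow_of_le_one (by positivity) hlt.le hr).trans_lt hN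
    obtain ⟨i, hi⟩ := hleb (w 0) (Set.mem_univ _)
    refine ⟨i, ?_⟩
    rintro _ ⟨t, rfl⟩
    exact hi (comb_ball w δ hw' ⟨t, rfl⟩)

lemma sd_pow_homotopy (r : ℕ) {k : ℕ} (f : Ch (k + 1) X) : ∃ e : Ch (k + 2) X, ∃ g : Ch (k + 1) X,
    f - dS e = ((sd (k + 1)) ^ r : Module.End ℤ (Ch (k + 1) X)) f + g ∧
    ∀ P : Set X → Prop, Dn P → dS f ∈ sm P k → g ∈ sm P (k + 1) := by
  induction r with
  | zero => exact ⟨0, 0, by simp, fun P _ _ => Submodule.zero_mem _⟩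
  | succ r ih =>
    obtain ⟨e, g, h, hg⟩ := ih
    set y := ((sd (k + 1)) ^ r : Module.End ℤ (Ch (k + 1) X)) f with hy
    have hd : dS y = ((sd k) ^ r : Module.End ℤ (Ch k X)) (dS f) := by
      rw [hy]
      clear * -
      induction r with
      | zero => rfl
      | succ r ih => rw [pow_succ', Module.End.mul_apply, dS_sd, ih, pow_succ', Module.End.mul_apply]
    refine ⟨e + sD (k + 1) y, g + sD k (dS y), ?_, ?_⟩
    · rw [map_add, dS_sD, pow_succ', Module.End.mul_apply, ← hy]
      rw [sub_eq_iff_eq_add] at h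
      nth_rewrite 1 [h]
      abel
    · intro P hP hf
      refine Submodule.add_mem _ (hg P hP hf) (sD_sm hP ?_)
      rw [hd]
      clear * - hP hf
      induction r with
      | zero => exact hf
      | succ r ih => rw [pow_succ', Module.End.mul_apply]; exact sd_sm hP ih

theorem SS {ι : Type} [Nonempty ι] (U : ι → Set X) (hU : ∀ i, IsOpen (U i))
    (hc : ∀ x, ∃ i, x ∈ U i) {k : ℕ} (f : Ch (k + 1) X) (hf : dS f ∈ sm (cov U) k) :
    ∃ e, f - dS e ∈ sm (cov U) (k + 1) := by
  obtain ⟨N, hN⟩ := sd_small U hU hc f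
  obtain ⟨e, g, h, hg⟩ := sd_pow_homotopy N f
  refine ⟨e, ?_⟩
  rw [h]
  exact Submodule.add_mem _ (hN N le_rfl) (hg _ (Dn_cov U) hf)

lemma sm_cov_bool {S T : Set X} {k : ℕ} {x : Ch k X}
    (hx : x ∈ sm (cov (fun b : Bool => if b then S else T)) k) :
    ∃ a ∈ inS S k, ∃ b ∈ inS T k, x = a + b := by
  have : x ∈ inS S k ⊔ inS T k := by
    refine sup_map hx LinearMap.id _ ?_
    rintro σ ⟨b, hb⟩
    rcases b with _ | _
    · exact Submodule.mem_sup_right (mem_sup_single 1 (by simpa using hb))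
    · exact Submodule.mem_sup_left (mem_sup_single 1 (by simpa using hb))
  obtain ⟨a, ha, b, hb, h⟩ := Submodule.mem_sup.1 this
  exact ⟨a, ha, b, hb, h.symm⟩

/-- Mayer-Vietoris detection. -/
theorem mv_detect {S T : Set X} (hS : IsOpen S) (hT : IsOpen T) (hST : ∀ x, x ∈ S ∨ x ∈ T) {k : ℕ}
    (hcyc : ∀ x : Ch (k + 2) X, dS x = 0 → ∃ e ∈ inS T (k + 2), ∃ f, x - e = dS f)
    (c : Ch (k + 1) X) (ha : ∃ a ∈ inS S (k + 2), dS a = c) (hb : ∃ b ∈ inS T (k + 2), dS b = c) :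
    ∃ h ∈ inS (S ∩ T) (k + 2), dS h = c := by
  obtain ⟨a, haS, ha⟩ := ha
  obtain ⟨b, hbT, hb⟩ := hb
  obtain ⟨e, he, f, hf⟩ := hcyc (a - b) (by rw [map_sub, ha, hb, sub_self])
  have hsm : dS f ∈ sm (cov (fun b : Bool => if b then S else T)) (k + 2) := by
    rw [← hf]
    refine Submodule.sub_mem _ (Submodule.sub_mem _ ?_ ?_) ?_
    · exact sm_mono (fun A hA => ⟨true, by simpa using hA⟩) haS
    · exact sm_mono (fun A hA => ⟨false, by simpa using hA⟩) hbT
    · exact sm_mono (fun A hA => ⟨false, by simpa using hA⟩) he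
  obtain ⟨e', he'⟩ := SS (fun b : Bool => if b then S else T)
    (by intro b; cases b <;> simp [hS, hT])
    (by
      intro x
      rcases hST x with h | h
      · exact ⟨true, by simpa using h⟩
      · exact ⟨false, by simpa using h⟩) f hsm
  obtain ⟨f1, hf1, f2, hf2, h12⟩ := sm_cov_bool he'
  have hd : dS f = dS f1 + dS f2 := by
    rw [← map_add, ← h12, map_sub, dS_dS, sub_zero]
  refine ⟨a - dS f1, inS_inter (Submodule.sub_mem _ haS (dS_inS hf1)) ?_, ?_⟩
  · have : a - dS f1 = b + e + dS f2 := by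
      rw [hd] at hf
      have : a = b + e + (dS f1 + dS f2) := by rw [← hf]; abel
      rw [this]; abel
    rw [this]
    exact Submodule.add_mem _ (Submodule.add_mem _ hbT he) (dS_inS hf2)
  · rw [map_sub, dS_dS, ha, sub_zero]

/-- homotopic maps agree on cycles up to boundaries -/
lemma homotopy_bd (H : C(X × unitInterval, Y)) (f g : C(X, Y)) (hf : ∀ x, H (x, 0) = f x)
    (hg : ∀ x, H (x, 1) = g x) {k : ℕ} (x : Ch (k + 1) X) (hx : dS x = 0) :
    dS (prism H (k + 1) x) = push g x - push f x := by
  rw [dS_prism H f g hf hg, hx, map_zero, sub_zero]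

/-- fibrewise complement detection -/
theorem fib_detect {B : Type} [TopologicalSpace B] {ι : Type} (s : ι → C(B, ℂ))
    (I : Finset ι) (hI : I.Nonempty) (hs : ∀ i ∈ I, ∀ j ∈ I, i ≠ j → ∀ b, s i b ≠ s j b) {k : ℕ}
    (c : Ch (k + 1) (B × ℂ))
    (h : ∀ i ∈ I, ∃ a ∈ inS {p : B × ℂ | p.2 ≠ s i p.1} (k + 2), dS a = c) :
    ∃ a ∈ inS {p : B × ℂ | ∀ i ∈ I, p.2 ≠ s i p.1} (k + 2), dS a = c := by
  classical
  induction hI using Finset.Nonempty.cons_induction with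
  | singleton i => simpa using h
  | cons i J hi hJ ih =>
    have hop : ∀ i, IsOpen {p : B × ℂ | p.2 ≠ s i p.1} := fun i =>
      isOpen_ne_fun continuous_snd ((s i).continuous.comp continuous_fst)
    have hS : IsOpen {p : B × ℂ | ∀ i ∈ J, p.2 ≠ s i p.1} := by
      have : {p : B × ℂ | ∀ i ∈ J, p.2 ≠ s i p.1} = ⋂ i ∈ J, {p : B × ℂ | p.2 ≠ s i p.1} := by
        ext; simp
      rw [this]
      exact isOpen_biInter_finset (fun i _ => hop i)
    have := mv_detect hS (hop i) ?_ (k := k) ?_ c (ih ?_ ?_) (h i (by simp))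
    · obtain ⟨a, ha, hc⟩ := this
      refine ⟨a, inS_mono ?_ ha, hc⟩
      rintro p ⟨h1, h2⟩ j hj
      rcases Finset.mem_cons.1 hj with rfl | hj
      · exact h2
      · exact h1 j hj
    · rintro ⟨b, z⟩
      by_cases hz : z = s i b
      · left
        intro j hj
        simp only [hz]
        exact hs i (by simp) j (by simp [hj]) (by rintro rfl; exact hi hj) b
      · right; exact hz
    · intro x hx
      let ρ : C(B × ℂ, B × ℂ) := ⟨fun p => (p.1, s i p.1 + 1), by fun_prop⟩
      let H : C((B × ℂ) × unitInterval, B × ℂ) :=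
        ⟨fun q => (q.1.1, (1 - ((q.2 : ℝ) : ℂ)) * (s i q.1.1 + 1) + ((q.2 : ℝ) : ℂ) * q.1.2), by fun_prop⟩
      refine ⟨push ρ x, ?_, prism H _ x, ?_⟩
      · refine push_inS (S := Set.univ) ?_ (inS_univ x)
        intro p _
        simp [ρ]
      · have := homotopy_bd H ρ (ContinuousMap.id _) (by intro x; simp [H, ρ]) (by intro x; simp [H]) x hx
        rw [this, push_id]
    · intro j hj l hl
      exact hs j (by simp [hj]) l (by simp [hl])
    · intro j hj
      exact h j (by simp [hj])
end
end TC

/-! Part 4 -/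
namespace TC
set_option linter.unusedSectionVars false

section cap
variable {X Y Z : Type} [TopologicalSpace X] [TopologicalSpace Y] [TopologicalSpace Z]

def e01 {k : ℕ} : Fin 2 → Fin (k + 2) := ![0, 1]
def e012 {k : ℕ} : Fin 3 → Fin (k + 3) := ![0, 1, 2]

noncomputable def cap (η : Sing 2 X → ℤ) {k : ℕ} : Ch (k + 2) X →ₗ[ℤ] Ch (k + 1) X :=
  ext (fun σ => η (pull e01 σ) • Finsupp.single (pull Fin.succ σ) 1)

noncomputable def cap2 (f : Sing 3 X → ℤ) {k : ℕ} : Ch (k + 3) X →ₗ[ℤ] Ch (k + 1) X :=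
  ext (fun σ => f (pull e012 σ) • Finsupp.single (pull (Fin.succ ∘ Fin.succ) σ) 1)

noncomputable def del1 (η : Sing 2 X → ℤ) : Sing 3 X → ℤ := fun σ =>
  η (pull (Fin.succAbove 0) σ) - η (pull (Fin.succAbove 1) σ) + η (pull (Fin.succAbove 2) σ)

noncomputable def pt0 {k : ℕ} (σ : Sing (k + 1) X) : X := σ (vtx 0)

noncomputable def del0 (g : X → ℤ) : Sing 2 X → ℤ := fun τ => g (τ (vtx 1)) - g (τ (vtx 0))

noncomputable def mulg (g : X → ℤ) {k : ℕ} : Ch (k + 1) X →ₗ[ℤ] Ch (k + 1) X :=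
  ext (fun σ => g (pt0 σ) • Finsupp.single σ 1)

lemma dS_single_succ {k : ℕ} (σ : Sing (k + 2) X) : dS (Finsupp.single σ (1:ℤ)) =
    Finsupp.single (pull Fin.succ σ) 1 -
      ∑ i : Fin (k + 1), (-1 : ℤ) ^ (i : ℕ) • Finsupp.single (pull i.succ.succAbove σ) 1 := by
  rw [dS, dG_single, Fin.sum_univ_succ, sub_eq_add_neg, ← Finset.sum_neg_distrib]
  congr 1
  · simp
  · apply Finset.sum_congr rfl
    intro i _
    simp [pow_succ]

lemma succ_face {k : ℕ} (i : Fin (k + 1)) (σ : Sing (k + 2) X) :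
    pull Fin.succ (pull i.succ.succAbove σ) = pull i.succAbove (pull Fin.succ σ) := by
  rw [pull_pull, pull_pull]
  congr 1
  funext j
  simp

lemma cap_single (η : Sing 2 X → ℤ) {k : ℕ} (σ : Sing (k + 2) X) :
    cap η (Finsupp.single σ 1) = η (pull e01 σ) • Finsupp.single (pull Fin.succ σ) 1 := by
  simp [cap]

lemma cap_dS (η : Sing 2 X → ℤ) {k : ℕ} (x : Ch (k + 3) X) :
    dS (cap η x) + cap η (dS x) = cap2 (del1 η) x := by
  refine lin_ext (f := dS.comp (cap η) + (cap η).comp dS) (g := cap2 (del1 η)) (fun σ => ?_) x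
  simp only [LinearMap.add_apply, LinearMap.comp_apply]
  rw [dS_single_succ, cap_single, map_sub, map_smul, map_sum, cap_single]
  simp only [map_smul, cap_single, succ_face]
  rw [dS, dG_single, Fin.sum_univ_succ, Fin.sum_univ_succ (n := k + 1)]
  have h0 : pull e01 (pull (Fin.succ (0 : Fin (k+2))).succAbove σ) =
      pull (Fin.succAbove 1) (pull e012 σ) := by
    rw [pull_pull, pull_pull]
    congr 1
    funext j
    fin_cases j
    · simp [e01, e012]
    · simp [e01, e012]
  have h1 : pull e01 (pull Fin.succ σ) = pull (Fin.succAbove 0) (pull e012 σ) := by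
    rw [pull_pull, pull_pull]
    congr 1
    funext j
    fin_cases j <;> rfl
  have h2 : pull e01 σ = pull (Fin.succAbove 2) (pull e012 σ) := by
    rw [pull_pull]
    congr 1
    funext j
    fin_cases j <;> rfl
  have h3 : ∀ i : Fin (k+1), pull e01 (pull i.succ.succ.succAbove σ) = pull e01 σ := by
    intro i
    rw [pull_pull]
    congr 1
    funext j
    fin_cases j
    · simp [e01]
    · simp [e01]
  simp only [h3, h0]
  have h4 : pull (Fin.succAbove 0) (pull Fin.succ σ) = pull (Fin.succ ∘ Fin.succ) σ := by
    rw [pull_pull]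
    congr 1
  have h5 : pull Fin.succ (pull Fin.succ σ) = pull (Fin.succ ∘ Fin.succ) σ := by
    rw [pull_pull]
  rw [h4, h5, h1]
  simp only [cap2, ext_single, one_smul, del1, ← h2, Fin.val_zero, pow_zero, smul_add,
    Finset.smul_sum]
  have h6 : ∀ i : Fin (k + 1), (-1 : ℤ) ^ ((i.succ : Fin (k+2)) : ℕ) • η (pull e01 σ) •
      Finsupp.single (pull i.succ.succAbove (pull Fin.succ σ)) (1:ℤ) = η (pull e01 σ) •
      (-1 : ℤ) ^ ((i.succ : Fin (k+2)) : ℕ) •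
      Finsupp.single (pull i.succ.succAbove (pull Fin.succ σ)) (1:ℤ) := fun i => smul_comm _ _ _
  simp only [h6]
  rw [add_smul, sub_smul]
  abel

lemma cap_cap (α β : Sing 2 X → ℤ) {k : ℕ} (x : Ch (k + 3) X) :
    cap β (cap α x) =
      cap2 (fun σ => α (pull (Fin.succAbove 2) σ) * β (pull (Fin.succAbove 0) σ)) x := by
  refine lin_ext (f := (cap β).comp (cap α)) (g := cap2 _) (fun σ => ?_) x
  simp only [LinearMap.comp_apply, cap_single, map_smul, cap2, ext_single, one_smul]
  have h1 : pull e01 (pull Fin.succ σ) = pull (Fin.succAbove 0) (pull e012 σ) := by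
    rw [pull_pull, pull_pull]
    congr 1
    funext j
    fin_cases j <;> rfl
  have h2 : pull e01 σ = pull (Fin.succAbove 2) (pull e012 σ) := by
    rw [pull_pull]
    congr 1
    funext j
    fin_cases j <;> rfl
  have h5 : pull Fin.succ (pull Fin.succ σ) = pull (Fin.succ ∘ Fin.succ) σ := pull_pull _ _ _
  rw [h1, ← h2, h5, smul_smul]

lemma cap_add (α β : Sing 2 X → ℤ) {k : ℕ} (x : Ch (k + 2) X) :
    cap (fun τ => α τ + β τ) x = cap α x + cap β x := by
  refine lin_ext (f := cap _) (g := cap α + cap β) (fun σ => ?_) x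
  simp only [LinearMap.add_apply, cap_single, add_smul]

lemma cap2_add (α β : Sing 3 X → ℤ) {k : ℕ} (x : Ch (k + 3) X) :
    cap2 (fun τ => α τ + β τ) x = cap2 α x + cap2 β x := by
  refine lin_ext (f := cap2 _) (g := cap2 α + cap2 β) (fun σ => ?_) x
  simp only [LinearMap.add_apply, cap2, ext_single, add_smul, one_smul]

lemma cap2_neg (α : Sing 3 X → ℤ) {k : ℕ} (x : Ch (k + 3) X) :
    cap2 (fun τ => - α τ) x = - cap2 α x := by
  refine lin_ext (f := cap2 _) (g := - cap2 α) (fun σ => ?_) x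
  simp only [LinearMap.neg_apply, cap2, ext_single, neg_smul, one_smul]

lemma cap2_zero {k : ℕ} (x : Ch (k + 3) X) :
    cap2 (fun _ => 0) x = 0 := by
  refine lin_ext (f := cap2 _) (g := 0) (fun σ => ?_) x
  simp [cap2]

lemma cap_del0 (g : X → ℤ) {k : ℕ} (x : Ch (k + 2) X) :
    cap (del0 g) x = mulg g (dS x) - dS (mulg g x) := by
  refine lin_ext (f := cap _) (g := (mulg g).comp dS - dS.comp (mulg g)) (fun σ => ?_) x
  simp only [LinearMap.sub_apply, LinearMap.comp_apply]
  have h1 : mulg g (Finsupp.single σ 1) = g (pt0 σ) • Finsupp.single σ (1:ℤ) := by simp [mulg]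
  rw [h1, map_smul, dS_single_succ, cap_single, map_sub, map_sum]
  have h2 : ∀ τ : Sing (k+1) X, mulg g (Finsupp.single τ 1) = g (pt0 τ) • Finsupp.single τ (1:ℤ) := by
    intro τ; simp [mulg]
  simp only [map_smul, h2]
  have h3 : ∀ i : Fin (k+1), pt0 (pull i.succ.succAbove σ) = pt0 σ := by
    intro i
    unfold pt0 pull
    rw [ContinuousMap.comp_apply]
    congr 1
    have := congrFun (dmap_vtx i.succ.succAbove) 0
    simpa using this
  simp only [h3]
  have h4 : (pull (e01 (k := k)) σ) (vtx 1) = pt0 (pull Fin.succ σ) := by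
    unfold pt0 pull
    simp only [ContinuousMap.comp_apply]
    congr 1
    have := congrFun (dmap_vtx (e01 (k := k))) 1
    have h := congrFun (dmap_vtx (Fin.succ : Fin (k + 1) → Fin (k + 2))) 0
    simp only [Function.comp_apply] at this h
    rw [this, h]
    rfl
  have h5 : (pull (e01 (k := k)) σ) (vtx 0) = pt0 σ := by
    unfold pt0 pull
    simp only [ContinuousMap.comp_apply]
    congr 1
    exact congrFun (dmap_vtx (e01 (k := k))) 0
  rw [del0, h4, h5, smul_sub, sub_smul, Finset.smul_sum]
  simp only [smul_comm (g (pt0 σ))]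
  abel

lemma push_cap (f : C(X, Y)) (η : Sing 2 Y → ℤ) {k : ℕ} (x : Ch (k + 2) X) :
    push f (cap (fun τ => η (f.comp τ)) x) = cap η (push f x) := by
  refine lin_ext (f := (push f).comp (cap _)) (g := (cap η).comp (push f)) (fun σ => ?_) x
  simp only [LinearMap.comp_apply, cap_single, push_single, map_smul]
  rfl

/-! ### Total unaugmented chains -/

abbrev Tot (X : Type) [TopologicalSpace X] : Type := ∀ k, Ch (k + 1) X

noncomputable def dd : Tot X →ₗ[ℤ] Tot X where
  toFun c k := dS (c (k + 1))
  map_add' a b := by funext k; simp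
  map_smul' a b := by funext k; simp

def Cocyc (η : Sing 2 X → ℤ) : Prop := ∀ σ, del1 η σ = 0

noncomputable def tcap (η : Sing 2 X → ℤ) : Tot X →ₗ[ℤ] Tot X where
  toFun c k := cap η (c (k + 1))
  map_add' a b := by funext k; simp
  map_smul' a b := by funext k; simp

noncomputable def tpush (f : C(X, Y)) : Tot X →ₗ[ℤ] Tot Y where
  toFun c k := push f (c k)
  map_add' a b := by funext k; simp
  map_smul' a b := by funext k; simp

lemma dd_dd (c : Tot X) : dd (dd c) = 0 := by
  funext k; exact dS_dS _

lemma dd_tcap {η : Sing 2 X → ℤ} (h : Cocyc η) (c : Tot X) : dd (tcap η c) = - tcap η (dd c) := by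
  funext k
  have := cap_dS η (c (k + 2))
  have h0 : del1 η = fun _ => 0 := funext h
  rw [h0, cap2_zero] at this
  exact eq_neg_of_add_eq_zero_left this

lemma tpush_dd (f : C(X, Y)) (c : Tot X) : tpush f (dd c) = dd (tpush f c) := by
  funext k; exact push_dS f _

/-- total homology -/
noncomputable def bdy (X : Type) [TopologicalSpace X] : Submodule ℤ (LinearMap.ker (dd (X := X))) :=
  (LinearMap.range (dd (X := X))).comap (LinearMap.ker (dd (X := X))).subtype

abbrev HT (X : Type) [TopologicalSpace X] : Type := LinearMap.ker (dd (X := X)) ⧸ bdy X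

noncomputable def cl (c : Tot X) (hc : dd c = 0) : HT X := Submodule.Quotient.mk ⟨c, hc⟩

lemma cl_eq {c c' : Tot X} {hc : dd c = 0} {hc' : dd c' = 0} :
    cl c hc = cl c' hc' ↔ ∃ y, c - c' = dd y := by
  unfold cl
  rw [Submodule.Quotient.eq]
  constructor
  · rintro ⟨y, hy⟩; exact ⟨y, hy.symm⟩
  · rintro ⟨y, hy⟩; exact ⟨y, hy.symm⟩

lemma cl_eq_zero {c : Tot X} {hc : dd c = 0} : cl c hc = 0 ↔ ∃ y, c = dd y := by
  unfold cl
  rw [Submodule.Quotient.mk_eq_zero]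
  constructor
  · rintro ⟨y, hy⟩; exact ⟨y, hy.symm⟩
  · rintro ⟨y, hy⟩; exact ⟨y, hy.symm⟩

lemma HT_ex (x : HT X) : ∃ c hc, x = cl c hc := by
  obtain ⟨⟨c, hc⟩, rfl⟩ := Submodule.Quotient.mk_surjective _ x
  exact ⟨c, hc, rfl⟩

/-- cap with a cocycle on homology -/
noncomputable def hcap (η : Sing 2 X → ℤ) (h : Cocyc η) : HT X →ₗ[ℤ] HT X :=
  Submodule.mapQ _ _ ((tcap η).restrict (p := LinearMap.ker (dd (X := X)))
    (q := LinearMap.ker (dd (X := X))) (fun c hc => by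
      rw [LinearMap.mem_ker] at hc ⊢
      rw [dd_tcap h, hc, map_zero, neg_zero])) (by
    rintro ⟨c, hc⟩ ⟨y, hy⟩
    refine ⟨- tcap η y, ?_⟩
    rw [map_neg, dd_tcap h, neg_neg, hy]
    rfl)

lemma hcap_cl (η : Sing 2 X → ℤ) (h : Cocyc η) (c : Tot X) (hc : dd c = 0) :
    hcap η h (cl c hc) = cl (tcap η c) (by rw [dd_tcap h, hc, map_zero, neg_zero]) := rfl

noncomputable def hpush (f : C(X, Y)) : HT X →ₗ[ℤ] HT Y :=
  Submodule.mapQ _ _ ((tpush f).restrict (p := LinearMap.ker (dd (X := X)))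
    (q := LinearMap.ker (dd (X := Y))) (fun c hc => by
      rw [LinearMap.mem_ker] at hc ⊢
      rw [← tpush_dd, hc, map_zero])) (by
    rintro ⟨c, hc⟩ ⟨y, hy⟩
    refine ⟨tpush f y, ?_⟩
    rw [← tpush_dd, hy]
    rfl)

lemma hpush_cl (f : C(X, Y)) (c : Tot X) (hc : dd c = 0) :
    hpush f (cl c hc) = cl (tpush f c) (by rw [← tpush_dd, hc, map_zero]) := rfl

lemma hpush_hpush (f : C(X, Y)) (g : C(Y, Z)) (x : HT X) :
    hpush g (hpush f x) = hpush (g.comp f) x := by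
  obtain ⟨c, hc, rfl⟩ := HT_ex x
  rw [hpush_cl, hpush_cl, hpush_cl]
  congr 1
  funext k
  exact push_push f g (c k)

lemma hpush_id (x : HT X) : hpush (ContinuousMap.id X) x = x := by
  obtain ⟨c, hc, rfl⟩ := HT_ex x
  rw [hpush_cl]
  congr 1
  funext k
  exact push_id (c k)

lemma hcap_anti (α β : Sing 2 X → ℤ) (hα : Cocyc α) (hβ : Cocyc β) (x : HT X) :
    hcap β hβ (hcap α hα x) = - hcap α hα (hcap β hβ x) := by
  obtain ⟨c, hc, rfl⟩ := HT_ex x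
  rw [eq_neg_iff_add_eq_zero]
  simp only [hcap_cl]
  have hadd : ∀ (a b : Tot X) (ha : dd a = 0) (hb : dd b = 0), cl a ha + cl b hb =
    cl (a + b) (by rw [map_add, ha, hb, add_zero]) := fun a b ha hb => rfl
  rw [hadd, cl_eq_zero]
  refine ⟨- tcap (fun τ => α τ * β τ) c, ?_⟩
  funext k
  have h1 := cap_dS (fun τ => α τ * β τ) (c (k + 2))
  have h2 : dS (c (k + 2)) = 0 := congrFun hc (k + 1)
  rw [h2, map_zero, add_zero] at h1
  have : dd (-(tcap (fun τ => α τ * β τ)) c) k = - dS (cap (fun τ => α τ * β τ) (c (k + 2))) := by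
    rw [map_neg]; rfl
  rw [this, h1, ← cap2_neg]
  change cap β (cap α (c (k + 2))) + cap α (cap β (c (k + 2))) = _
  rw [cap_cap, cap_cap, ← cap2_add]
  congr 2
  funext σ
  have ha := hα σ
  have hb := hβ σ
  unfold del1 at *
  have ha' : α (pull (Fin.succAbove 1) σ) = α (pull (Fin.succAbove 0) σ) +
    α (pull (Fin.succAbove 2) σ) := by linarith
  have hb' : β (pull (Fin.succAbove 1) σ) = β (pull (Fin.succAbove 0) σ) +
    β (pull (Fin.succAbove 2) σ) := by linarith
  beta_reduce
  rw [ha', hb']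
  ring

lemma hcap_add (α β γ : Sing 2 X → ℤ) (hα : Cocyc α) (hβ : Cocyc β) (hγ : Cocyc γ) (g : X → ℤ)
    (h : ∀ τ, γ τ = α τ + β τ + del0 g τ) (x : HT X) :
    hcap γ hγ x = hcap α hα x + hcap β hβ x := by
  obtain ⟨c, hc, rfl⟩ := HT_ex x
  simp only [hcap_cl]
  have hadd : ∀ (a b : Tot X) (ha : dd a = 0) (hb : dd b = 0), cl a ha + cl b hb =
    cl (a + b) (by rw [map_add, ha, hb, add_zero]) := fun a b ha hb => rfl
  rw [hadd, cl_eq]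
  refine ⟨fun k => - mulg g (c k), ?_⟩
  funext k
  have hγ' : γ = fun τ => (fun τ => α τ + β τ) τ + del0 g τ := funext h
  have h2 : dS (c (k + 1)) = 0 := congrFun hc k
  change cap γ (c (k + 1)) - (cap α (c (k + 1)) + cap β (c (k + 1))) = dS (- mulg g (c (k+1)))
  rw [hγ', cap_add, cap_add, cap_del0, h2, map_zero, map_neg]
  abel

lemma hpush_hcap (f : C(X, Y)) (η : Sing 2 Y → ℤ) (h : Cocyc η)
    (h' : Cocyc (fun τ => η (f.comp τ))) (x : HT X) :
    hpush f (hcap _ h' x) = hcap η h (hpush f x) := by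
  obtain ⟨c, hc, rfl⟩ := HT_ex x
  simp only [hcap_cl, hpush_cl]
  congr 1
  funext k
  exact push_cap f η _

/-- augmentation -/
noncomputable def aug : Ch 0 X →ₗ[ℤ] ℤ := ext (fun _ => 1)

lemma aug_injective : Function.Injective (aug (X := X)) := by
  intro x y h
  have : Subsingleton (Sing 0 X) := ⟨fun a b => by
    ext t
    have := t.2.2
    simp at this⟩
  have hs : ∀ x : Ch 0 X, ∀ σ, aug x = x σ := by
    intro x σ
    refine lin_ext (f := aug) (g := Finsupp.lapply σ) (fun τ => ?_) x
    rw [Subsingleton.elim τ σ]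
    simp [aug]
  ext σ
  rw [← hs, ← hs, h]

lemma aug_push (f : C(X, Y)) (x : Ch 0 X) : aug (push f x) = aug x := by
  rw [aug, push, mp_ext]; rfl

noncomputable def eps : HT X →ₗ[ℤ] ℤ :=
  Submodule.liftQ _ ((aug.comp (dS.comp (LinearMap.proj 0 : Tot X →ₗ[ℤ] Ch 1 X))).comp
    (LinearMap.ker (dd (X := X))).subtype) (by
    rintro ⟨c, hc⟩ ⟨y, hy⟩
    rw [LinearMap.mem_ker]
    have : c 0 = dS (y 1) := congrFun hy.symm 0
    simp [this, dS_dS])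

lemma eps_cl (c : Tot X) (hc : dd c = 0) : eps (cl c hc) = aug (dS (c 0)) := rfl

lemma eps_hpush (f : C(X, Y)) (x : HT X) : eps (hpush f x) = eps x := by
  obtain ⟨c, hc, rfl⟩ := HT_ex x
  rw [hpush_cl, eps_cl, eps_cl]
  change aug (dS (push f (c 0))) = _
  rw [← push_dS, aug_push]
end cap
end TC

/-! Part 5 -/
namespace TC
set_option linter.unusedSectionVars false

section wind
variable {X Y Z : Type} [TopologicalSpace X] [TopologicalSpace Y] [TopologicalSpace Z]

noncomputable def tpi : ℂ := 2 * Real.pi * Complex.I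

lemma tpi_ne : tpi ≠ 0 := Complex.two_pi_I_ne_zero

lemma exp_int (n : ℤ) : Complex.exp (n * tpi) = 1 := Complex.exp_int_mul_two_pi_mul_I n

lemma exp_eq {x y : ℂ} (h : Complex.exp x = Complex.exp y) : ∃ n : ℤ, x = y + n * tpi :=
  Complex.exp_eq_exp_iff_exists_int.1 h

instance (k : ℕ) : PreconnectedSpace (Del k) :=
  Subtype.preconnectedSpace (convex_stdSimplex ℝ (Fin k)).isPreconnected

instance (k : ℕ) : ContractibleSpace (Del (k + 1)) :=
  (convex_stdSimplex ℝ (Fin (k + 1))).contractibleSpace ⟨_, (vtx 0 : Del (k + 1)).2⟩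

lemma lift_unique {k : ℕ} {F G : C(Del k, ℂ)} (h : ∀ t, Complex.exp (F t) = Complex.exp (G t))
    (a : Del k) (ha : F a = G a) : F = G := by
  have := Complex.isCoveringMap_exp.eq_of_comp_eq F.continuous G.continuous (by
    funext t; exact Subtype.ext (h t)) a ha
  exact DFunLike.coe_injective this

lemma lift_exists {k : ℕ} (f : C(Del (k + 1), ℂˣ)) :
    ∃ F : C(Del (k + 1), ℂ), ∀ t, Complex.exp (F t) = f t := by
  obtain ⟨y, ⟨H⟩⟩ := id_nullhomotopic (Del (k + 1))
  let H' := H.symm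
  let f' : C(Del (k+1), {z : ℂ // z ≠ 0}) := ⟨fun t => ⟨f t, (f t).ne_zero⟩,
    by
      apply Continuous.subtype_mk
      exact Units.continuous_val.comp f.continuous⟩
  have h0 : ∀ a, (f'.comp H'.toContinuousMap) (0, a) =
      (fun z : ℂ ↦ (⟨_, z.exp_ne_zero⟩ : {z : ℂ // z ≠ 0}))
      ((ContinuousMap.const (Del (k+1)) (Complex.log (f y))) a) := by
    intro a
    apply Subtype.ext
    have : H'.toContinuousMap (0, a) = y := H'.apply_zero a
    simp only [ContinuousMap.comp_apply, this, ContinuousMap.const_apply]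
    rw [Complex.exp_log (f y).ne_zero]
    rfl
  let G := Complex.isCoveringMap_exp.liftHomotopy (f'.comp H'.toContinuousMap) _ h0
  have hG := Complex.isCoveringMap_exp.liftHomotopy_lifts (f'.comp H'.toContinuousMap) _ h0
  refine ⟨G.comp ⟨fun t => (1, t), by fun_prop⟩, fun t => ?_⟩
  have h1 := congrArg Subtype.val (congrFun hG (1, t))
  have h2 : H'.toContinuousMap (1, t) = t := H'.apply_one t
  simp only [ContinuousMap.comp_apply, h2] at h1
  exact h1

lemma lift_exists0 {k : ℕ} (f : C(Del (k + 1), ℂˣ)) :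
    ∃ F : C(Del (k + 1), ℂ), (∀ t, Complex.exp (F t) = f t) ∧
      F (vtx 0) = Complex.log (f (vtx 0)) := by
  obtain ⟨F, hF⟩ := lift_exists f
  obtain ⟨n, hn⟩ := exp_eq (x := Complex.log (f (vtx 0))) (y := F (vtx 0)) (by
    rw [hF, Complex.exp_log (f (vtx 0)).ne_zero])
  refine ⟨F + ContinuousMap.const _ (n * tpi), fun t => ?_, ?_⟩
  · simp [Complex.exp_add, exp_int, hF]
  · simp [hn]

/-- the logarithm of a simplex of nonzero numbers, principal at the initial vertex -/
noncomputable def Lf {k : ℕ} (f : C(Del (k + 1), ℂˣ)) : C(Del (k + 1), ℂ) :=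
  (lift_exists0 f).choose

lemma exp_Lf {k : ℕ} (f : C(Del (k + 1), ℂˣ)) (t) : Complex.exp (Lf f t) = f t :=
  (lift_exists0 f).choose_spec.1 t

lemma Lf_zero {k : ℕ} (f : C(Del (k + 1), ℂˣ)) : Lf f (vtx 0) = Complex.log (f (vtx 0)) :=
  (lift_exists0 f).choose_spec.2

lemma wind_exists (u : C(X, ℂˣ)) (τ : Sing 2 X) : ∃ n : ℤ, Lf (u.comp τ) (vtx 1) =
    Complex.log (u (τ (vtx 1))) + n * tpi := by
  apply exp_eq
  rw [exp_Lf, Complex.exp_log (u (τ (vtx 1))).ne_zero]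
  rfl

/-- the winding cocycle -/
noncomputable def wd (u : C(X, ℂˣ)) (τ : Sing 2 X) : ℤ := (wind_exists u τ).choose

lemma wd_spec2 (u : C(X, ℂˣ)) (τ : Sing 2 X) (F : C(Del 2, ℂ))
    (hF : ∀ t, Complex.exp (F t) = u (τ t)) :
    F (vtx 1) - F (vtx 0) = Complex.log (u (τ (vtx 1))) - Complex.log (u (τ (vtx 0))) +
      wd u τ * tpi := by
  have h1 := (wind_exists u τ).choose_spec
  have h0 := Lf_zero (u.comp τ)
  have h2 : F = Lf (u.comp τ) + ContinuousMap.const _ (F (vtx 0) - Lf (u.comp τ) (vtx 0)) := by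
    apply lift_unique _ (vtx 0)
    · simp
    · intro t
      simp only [ContinuousMap.add_apply, ContinuousMap.const_apply, Complex.exp_add, hF, exp_Lf,
        Complex.exp_sub]
      simp
  have h3 := congrArg (fun G : C(Del 2, ℂ) => G (vtx 1)) h2
  simp only [ContinuousMap.add_apply, ContinuousMap.const_apply] at h3
  rw [h3, h1, h0]
  unfold wd
  simp only [ContinuousMap.comp_apply]
  ring

lemma dmap_vtx' {i j : ℕ} (f : Fin i → Fin j) (l : Fin i) : dmap f (vtx l) = vtx (f l) :=
  congrFun (dmap_vtx f) l

lemma wd_spec (u : C(X, ℂˣ)) {k : ℕ} (σ : Sing k X) (F : C(Del k, ℂ))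
    (hF : ∀ t, Complex.exp (F t) = u (σ t)) (f : Fin 2 → Fin k) :
    wd u (pull f σ) * tpi = F (vtx (f 1)) - F (vtx (f 0)) -
      (Complex.log (u (σ (vtx (f 1)))) - Complex.log (u (σ (vtx (f 0))))) := by
  have := wd_spec2 u (pull f σ) (F.comp (dmap f)) (fun t => hF _)
  simp only [ContinuousMap.comp_apply, pull, dmap_vtx'] at this
  rw [this]
  simp only [pull]
  ring

lemma pull_self {k : ℕ} (σ : Sing k X) : pull id σ = σ := by
  unfold pull
  rw [dmap_id]
  rfl

lemma wd_spec' (u : C(X, ℂˣ)) (σ : Sing 2 X) (F : C(Del 2, ℂ))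
    (hF : ∀ t, Complex.exp (F t) = u (σ t)) :
    wd u σ * tpi = F (vtx 1) - F (vtx 0) -
      (Complex.log (u (σ (vtx 1))) - Complex.log (u (σ (vtx 0)))) := by
  have := wd_spec u σ F hF id
  rwa [pull_self] at this

lemma int_tpi {m n : ℤ} (h : (m : ℂ) * tpi = n * tpi) : m = n := by
  have := mul_right_cancel₀ tpi_ne h
  exact_mod_cast this

lemma wd_cocyc (u : C(X, ℂˣ)) : Cocyc (wd u) := by
  intro σ
  apply int_tpi
  unfold del1
  have hF : ∀ t, Complex.exp (Lf (u.comp σ) t) = u (σ t) := exp_Lf (u.comp σ)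
  push_cast
  rw [add_mul, sub_mul, wd_spec u σ _ hF, wd_spec u σ _ hF, wd_spec u σ _ hF]
  have h1 : (Fin.succAbove 0 0 : Fin 3) = 1 := rfl
  have h2 : (Fin.succAbove 0 1 : Fin 3) = 2 := rfl
  have h3 : (Fin.succAbove 1 0 : Fin 3) = 0 := rfl
  have h4 : (Fin.succAbove 1 1 : Fin 3) = 2 := rfl
  have h5 : (Fin.succAbove 2 0 : Fin 3) = 0 := rfl
  have h6 : (Fin.succAbove 2 1 : Fin 3) = 1 := rfl
  simp only [h1, h2, h3, h4, h5, h6]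
  ring

lemma log_exists (a b : ℂˣ) : ∃ n : ℤ, Complex.log a + Complex.log b =
    Complex.log ((a * b : ℂˣ) : ℂ) + n * tpi := by
  apply exp_eq
  rw [Complex.exp_add, Complex.exp_log a.ne_zero, Complex.exp_log b.ne_zero,
    Complex.exp_log (a * b).ne_zero]
  simp

noncomputable def logdef (a b : ℂˣ) : ℤ := (log_exists a b).choose
lemma logdef_spec (a b : ℂˣ) : (logdef a b : ℂ) * tpi = Complex.log a + Complex.log b -
    Complex.log ((a * b : ℂˣ) : ℂ) := by
  have := (log_exists a b).choose_spec
  rw [this]; unfold logdef; ring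

lemma wd_mul (u v : C(X, ℂˣ)) (τ : Sing 2 X) : wd (u * v) τ = wd u τ + wd v τ +
    del0 (fun x => logdef (u x) (v x)) τ := by
  apply int_tpi
  have hF : ∀ t, Complex.exp (Lf (u.comp τ) t) = u (τ t) := exp_Lf (u.comp τ)
  have hG : ∀ t, Complex.exp (Lf (v.comp τ) t) = v (τ t) := exp_Lf (v.comp τ)
  have hFG : ∀ t, Complex.exp ((Lf (u.comp τ) + Lf (v.comp τ)) t) = (u * v) (τ t) := by
    intro t
    rw [ContinuousMap.add_apply, Complex.exp_add, hF, hG]; simp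
  unfold del0
  push_cast
  rw [wd_spec' _ _ _ hFG, add_mul, add_mul, sub_mul, wd_spec' _ _ _ hF, wd_spec' _ _ _ hG,
    logdef_spec, logdef_spec]
  simp only [ContinuousMap.add_apply, ContinuousMap.mul_apply]
  ring

lemma wd_const (a : ℂˣ) (τ : Sing 2 X) : wd (ContinuousMap.const X a) τ = 0 := by
  apply int_tpi
  rw [wd_spec' _ _ (ContinuousMap.const _ (Complex.log a)) (by
    intro t; simp [Complex.exp_log a.ne_zero])]
  simp

lemma wd_comp (f : C(X, Y)) (u : C(Y, ℂˣ)) (τ : Sing 2 X) : wd (u.comp f) τ = wd u (f.comp τ) := rfl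

/-- cap with the winding class on homology -/
noncomputable def KK (u : C(X, ℂˣ)) : HT X →ₗ[ℤ] HT X := hcap (wd u) (wd_cocyc u)

lemma KK_mul (u v : C(X, ℂˣ)) (x : HT X) : KK (u * v) x = KK u x + KK v x :=
  hcap_add _ _ _ (wd_cocyc u) (wd_cocyc v) (wd_cocyc (u * v)) _ (wd_mul u v) x

lemma KK_one (x : HT X) : KK (1 : C(X, ℂˣ)) x = 0 := by
  have := KK_mul 1 1 x
  rw [mul_one] at this
  exact left_eq_add.1 this

lemma KK_const (a : ℂˣ) (x : HT X) : KK (ContinuousMap.const X a) x = 0 := by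
  obtain ⟨c, hc, rfl⟩ := HT_ex x
  unfold KK
  rw [hcap_cl, cl_eq_zero]
  refine ⟨0, ?_⟩
  rw [map_zero]
  funext k
  change cap _ (c (k + 1)) = 0
  have h : wd (ContinuousMap.const X a) = fun _ => 0 := funext (wd_const a)
  rw [h]
  refine lin_ext (f := cap _) (g := 0) (fun σ => ?_) _
  rw [cap_single]; simp

lemma KK_inv (u : C(X, ℂˣ)) (x : HT X) : KK u⁻¹ x = - KK u x := by
  have := KK_mul u⁻¹ u x
  rw [inv_mul_cancel, KK_one] at this
  exact eq_neg_of_add_eq_zero_left this.symm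

lemma KK_div (u v : C(X, ℂˣ)) (x : HT X) : KK (u / v) x = KK u x - KK v x := by
  rw [div_eq_mul_inv, KK_mul, KK_inv, sub_eq_add_neg]

lemma KK_anti (u v : C(X, ℂˣ)) (x : HT X) : KK u (KK v x) = - KK v (KK u x) :=
  hcap_anti _ _ _ _ x

lemma hpush_KK (f : C(X, Y)) (u : C(Y, ℂˣ)) (x : HT X) :
    hpush f (KK (u.comp f) x) = KK u (hpush f x) :=
  hpush_hcap f (wd u) (wd_cocyc u) (wd_cocyc (u.comp f)) x

/-! ### point and contractions -/

lemma pt_acyc {k : ℕ} (c : Ch (k + 1) Unit) (hc : dS c = 0) : ∃ b, c = dS b := by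
  let H : C(Unit × unitInterval, Unit) := ⟨fun _ => (), by fun_prop⟩
  let K : Ch k Unit →ₗ[ℤ] Ch (k + 1) Unit := mp (fun _ => ContinuousMap.const _ ())
  let K' : Ch (k + 1) Unit →ₗ[ℤ] Ch (k + 1 + 1) Unit := mp (fun _ => ContinuousMap.const _ ())
  refine ⟨K' c, ?_⟩
  have : ∀ x : Ch (k + 1) Unit, dS (K' x) = x - K (dS x) := by
    intro x
    have h := lin_ext (f := dS.comp K') (g := LinearMap.id - K.comp dS) (fun σ => ?_) x
    · simpa using h
    simp only [LinearMap.comp_apply, LinearMap.sub_apply, LinearMap.id_apply]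
    have : K' (Finsupp.single σ 1) = Finsupp.single (ContinuousMap.const _ ()) 1 := mp_single _ _ _
    rw [this, dS_single_succ]
    refine congrArg₂ (· - ·) ?_ ?_
    · congr 1
    · rw [dS, dG_single, map_sum]
      apply Finset.sum_congr rfl
      intro i _
      have h2 : K (Finsupp.single (pull i.succAbove σ) 1) =
        Finsupp.single (ContinuousMap.const _ ()) 1 := mp_single _ _ _
      rw [map_smul, h2]
      rfl
  rw [this, hc, map_zero, sub_zero]

/-- deformation to a retract -/
lemma retract_bd (f : C(X, Y)) (g : C(Y, X)) (H : C(X × unitInterval, X))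
    (h0 : ∀ x, H (x, 0) = g (f x)) (h1 : ∀ x, H (x, 1) = x) {k : ℕ} (c : Ch (k + 1) X)
    (hc : dS c = 0) (hf : ∃ b, push f c = dS b) : ∃ b, c = dS b := by
  obtain ⟨b, hb⟩ := hf
  have := homotopy_bd H (g.comp f) (ContinuousMap.id X) h0 h1 c hc
  rw [push_id, ← push_push, hb, push_dS] at this
  exact ⟨prism H (k+1) c + push g b, by rw [map_add, this]; abel⟩

lemma contr_bd (x0 : X) (H : C(X × unitInterval, X))
    (h0 : ∀ x, H (x, 0) = x0) (h1 : ∀ x, H (x, 1) = x) {k : ℕ} (c : Ch (k + 1) X)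
    (hc : dS c = 0) : ∃ b, c = dS b :=
  retract_bd (ContinuousMap.const X ()) (ContinuousMap.const Unit x0) H h0 h1 c hc
    (pt_acyc _ (by rw [← push_dS, hc, map_zero]))

end wind
end TC

/-! Part 6 -/
namespace TC
set_option linter.unusedSectionVars false

section wang
variable {E B : Type} [TopologicalSpace E] [TopologicalSpace B]

noncomputable def tr (B : Type) [TopologicalSpace B] (n : ℤ) : C(B × ℂ, B × ℂ) :=
  ⟨fun p => (p.1, p.2 + n * tpi), by fun_prop⟩

def prB (B : Type) [TopologicalSpace B] : C(B × ℂ, B) := ⟨Prod.fst, continuous_fst⟩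

lemma prB_tr (n : ℤ) : (prB B).comp (tr B n) = prB B := rfl

lemma tr_add (m n : ℤ) : (tr B m).comp (tr B n) = tr B (n + m) := by
  ext p
  · rfl
  · simp [tr]; ring

lemma tr_zero : tr B 0 = ContinuousMap.id _ := by
  ext p
  · rfl
  · simp [tr]

lemma tr_solve {k : ℕ} (x : Ch k (B × ℂ)) (n : ℤ) : ∃ e : Ch k (B × ℂ),
    push (tr B 1) e - e = push (tr B n) x - x ∧ push (prB B) e = n • push (prB B) x := by
  induction n using Int.induction_on with
  | zero => exact ⟨0, by simp [tr_zero, push_id], by simp⟩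
  | succ n ih =>
    obtain ⟨e, h1, h2⟩ := ih
    refine ⟨e + push (tr B n) x, ?_, ?_⟩
    · rw [map_add, push_push, tr_add]
      calc _ = (push (tr B 1) e - e) + push (tr B (n + 1)) x - push (tr B n) x := by abel
        _ = _ := by rw [h1]; abel
    · rw [map_add, h2, push_push, prB_tr, add_smul, one_smul]
  | pred n ih =>
    obtain ⟨e, h1, h2⟩ := ih
    refine ⟨e - push (tr B (-n - 1)) x, ?_, ?_⟩
    · rw [map_sub, push_push, tr_add, sub_add_cancel]
      calc _ = (push (tr B 1) e - e) + push (tr B (-n - 1)) x - push (tr B (-n)) x := by abel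
        _ = _ := by rw [h1]; abel
    · rw [map_sub, h2, push_push, prB_tr, sub_smul, one_smul]

lemma tr_inj {k : ℕ} (x : Ch (k + 1) (B × ℂ)) (h : push (tr B 1) x = x) : x = 0 := by
  by_contra hx
  obtain ⟨σ, hσ⟩ := Finsupp.support_nonempty_iff.2 hx
  have hinj : Function.Injective (fun τ : Sing (k + 1) (B × ℂ) => (tr B 1).comp τ) := by
    intro a b hab
    ext t
    · have := congrArg (fun f : Sing (k + 1) (B × ℂ) => (f t).1) hab
      simpa [tr] using this
    · have := congrArg (fun f : Sing (k + 1) (B × ℂ) => (f t).2) hab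
      simpa [tr] using this
  have hstep : ∀ τ, x ((tr B 1).comp τ) = x τ := by
    intro τ
    have : (push (tr B 1) x) ((tr B 1).comp τ) = x τ := Finsupp.mapDomain_apply hinj x τ
    rw [h] at this
    exact this
  have hall : ∀ n : ℕ, x ((tr B n).comp σ) ≠ 0 := by
    intro n
    induction n with
    | zero =>
      have : (tr B ((0 : ℕ) : ℤ)).comp σ = σ := by
        rw [Nat.cast_zero, tr_zero]; rfl
      rw [this]
      exact Finsupp.mem_support_iff.1 hσ
    | succ n ih =>
      have : (tr B ((n + 1 : ℕ) : ℤ)).comp σ = (tr B 1).comp ((tr B n).comp σ) := by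
        rw [← ContinuousMap.comp_assoc, tr_add]; rfl
      rw [this, hstep]
      exact ih
  have : Set.Infinite (x.support : Set (Sing (k + 1) (B × ℂ))) := by
    refine Set.infinite_of_injective_forall_mem (f := fun n : ℕ => (tr B n).comp σ) ?_ ?_
    · intro m n hmn
      have := congrArg (fun f : Sing (k + 1) (B × ℂ) => (f (vtx 0)).2) hmn
      simp [tr, tpi_ne] at this
      exact this
    · intro n
      exact Finsupp.mem_support_iff.2 (hall n)
  exact this (Finset.finite_toSet _)

lemma pr_detect {k : ℕ} (x : Ch (k + 1) (B × ℂ)) (hx : dS x = 0)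
    (h : ∃ b, push (prB B) x = dS b) : ∃ b, x = dS b :=
  retract_bd (prB B) ⟨fun b => (b, 0), by fun_prop⟩
    ⟨fun q => (q.1.1, ((q.2 : ℝ) : ℂ) * q.1.2), by fun_prop⟩ (by intro x; simp [prB])
    (by intro x; simp) x hx h

lemma push_inj0 {X Y : Type} [TopologicalSpace X] [TopologicalSpace Y] (f : C(X, Y)) {x : Ch 0 X}
    (h : push f x = 0) : x = 0 := by
  apply aug_injective
  rw [← aug_push f, h, map_zero, map_zero]

variable (p : C(E, B)) (u : C(E, ℂˣ))

noncomputable def lam {k : ℕ} (σ : Sing (k + 1) E) : Sing (k + 1) (B × ℂ) :=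
  (p.comp σ).prodMk (Lf (u.comp σ))

lemma lam_face {k : ℕ} (i : Fin (k + 1)) (σ : Sing (k + 2) E) :
    lam p u (pull i.succ.succAbove σ) = pull i.succ.succAbove (lam p u σ) := by
  have : Lf (u.comp (pull i.succ.succAbove σ)) = (Lf (u.comp σ)).comp (dmap i.succ.succAbove) := by
    apply lift_unique _ (vtx 0)
    · rw [Lf_zero]
      simp only [ContinuousMap.comp_apply, pull, dmap_vtx']
      simp [Lf_zero]
    · intro t
      rw [exp_Lf]
      simp only [ContinuousMap.comp_apply, pull]
      rw [exp_Lf]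
      rfl
  unfold lam
  rw [this]
  rfl

lemma lam_succ {k : ℕ} (σ : Sing (k + 2) E) :
    pull Fin.succ (lam p u σ) = (tr B (wd u (pull e01 σ))).comp (lam p u (pull Fin.succ σ)) := by
  have h : ∀ t, Complex.exp (Lf (u.comp σ) t) = u (σ t) := exp_Lf (u.comp σ)
  have : (Lf (u.comp σ)).comp (dmap Fin.succ) = Lf (u.comp (pull Fin.succ σ)) +
      ContinuousMap.const _ (wd u (pull e01 σ) * tpi) := by
    apply lift_unique _ (vtx 0)
    · rw [wd_spec u σ _ h, ContinuousMap.add_apply, ContinuousMap.comp_apply, dmap_vtx', Lf_zero]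
      simp only [ContinuousMap.comp_apply, pull, dmap_vtx', ContinuousMap.const_apply]
      have e0 : (e01 (k := k)) 0 = 0 := rfl
      have e1 : (e01 (k := k)) 1 = Fin.succ 0 := rfl
      rw [e0, e1, Lf_zero]
      simp
    · intro t
      rw [ContinuousMap.add_apply, Complex.exp_add, exp_Lf, ContinuousMap.const_apply, exp_int,
        ContinuousMap.comp_apply, exp_Lf]
      simp [pull]
  ext t
  · rfl
  · exact congrArg (fun f : C(Del (k+1), ℂ) => f t) this

noncomputable def ee {k : ℕ} (σ : Sing (k + 2) E) : Ch (k + 1) (B × ℂ) :=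
  (tr_solve (Finsupp.single (lam p u (pull Fin.succ σ)) 1) (wd u (pull e01 σ))).choose

lemma ee_spec {k : ℕ} (σ : Sing (k + 2) E) : push (tr B 1) (ee p u σ) - ee p u σ =
    push (tr B (wd u (pull e01 σ))) (Finsupp.single (lam p u (pull Fin.succ σ)) 1) -
      Finsupp.single (lam p u (pull Fin.succ σ)) 1 ∧
    push (prB B) (ee p u σ) = wd u (pull e01 σ) •
      push (prB B) (Finsupp.single (lam p u (pull Fin.succ σ)) 1) :=
  (tr_solve (Finsupp.single (lam p u (pull Fin.succ σ)) 1) (wd u (pull e01 σ))).choose_spec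

noncomputable def Lam {k : ℕ} : Ch (k + 1) E →ₗ[ℤ] Ch (k + 1) (B × ℂ) := mp (lam p u)
noncomputable def Ee {k : ℕ} : Ch (k + 2) E →ₗ[ℤ] Ch (k + 1) (B × ℂ) := ext (ee p u)

lemma Lam_single {k : ℕ} (σ : Sing (k + 1) E) : Lam p u (Finsupp.single σ 1) =
    Finsupp.single (lam p u σ) 1 := mp_single _ _ _

lemma dS_Lam {k : ℕ} (x : Ch (k + 2) E) :
    dS (Lam p u x) = Lam p u (dS x) + (push (tr B 1) (Ee p u x) - Ee p u x) := by
  have h := lin_ext (f := dS.comp (Lam p u (k := k + 1))) (g := (Lam p u (k := k)).comp dS +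
    ((push (tr B 1)).comp (Ee p u) - Ee p u)) (fun σ => ?_) x
  · simpa using h
  simp only [LinearMap.comp_apply, LinearMap.add_apply, LinearMap.sub_apply, Lam_single]
  have h1 : Ee p u (Finsupp.single σ 1) = ee p u σ := by simp [Ee]
  rw [h1, (ee_spec p u σ).1, dS_single_succ, dS_single_succ, map_sub, map_sum, Lam_single, lam_succ,
    push_single]
  simp only [map_smul, Lam_single, lam_face]
  abel

lemma prB_Lam {k : ℕ} (x : Ch (k + 1) E) : push (prB B) (Lam p u x) = push p x :=
  mp_mp (lam p u) (fun σ => (prB B).comp σ) x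

lemma prB_Ee {k : ℕ} (x : Ch (k + 2) E) : push (prB B) (Ee p u x) = push p (cap (wd u) x) := by
  have h := lin_ext (f := (push (prB B)).comp (Ee p u (k := k)))
    (g := (push p).comp (cap (wd u))) (fun σ => ?_) x
  · exact h
  simp only [LinearMap.comp_apply]
  have h1 : Ee p u (Finsupp.single σ 1) = ee p u σ := by simp [Ee]
  rw [h1, (ee_spec p u σ).2, cap_single, map_smul, push_single, push_single]
  rfl

variable (q : C(B × ℂ, E))

lemma q_Lam (hq : ∀ x y, Complex.exp y = u x → q (p x, y) = x) {k : ℕ} (x : Ch (k + 1) E) : push q (Lam p u x) = x := by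
  have h : push q (Lam p u x) = mp (fun σ : Sing (k+1) E => q.comp (lam p u σ)) x := mp_mp _ _ x
  rw [h]
  have h2 : (fun σ : Sing (k+1) E => q.comp (lam p u σ)) = fun σ => σ := by
    funext σ
    ext t
    exact hq _ _ (exp_Lf (u.comp σ) t)
  rw [h2, mp_id]

theorem wang_one (hq : ∀ x y, Complex.exp y = u x → q (p x, y) = x) (c : Ch 1 E) (hc : dS c = 0) (hp : ∃ b, push p c = dS b) : ∃ b, c = dS b := by
  have h1 : dS (Lam p u c) = 0 := by
    apply push_inj0 (prB B)
    rw [push_dS, prB_Lam, ← push_dS, hc, map_zero]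
  obtain ⟨b, hb⟩ := pr_detect (Lam p u c) h1 (by rwa [prB_Lam])
  refine ⟨push q b, ?_⟩
  rw [← push_dS, ← hb, q_Lam p u q hq]

theorem wang_succ (hq : ∀ x y, Complex.exp y = u x → q (p x, y) = x)
    (hq' : ∀ b y, q (b, y + tpi) = q (b, y)) {k : ℕ} (c : Ch (k + 2) E) (hc : dS c = 0) (hp : ∃ b, push p c = dS b)
    (hp' : ∃ b, push p (cap (wd u) c) = dS b) : ∃ b, c = dS b := by
  have h1 := dS_Lam p u c
  rw [hc, map_zero, zero_add] at h1
  have h2 : dS (Ee p u c) = 0 := by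
    cases k with
    | zero =>
      apply push_inj0 (prB B)
      obtain ⟨b, hb⟩ := hp'
      rw [push_dS, prB_Ee, hb, dS_dS]
    | succ k =>
      apply tr_inj
      have := congrArg dS h1
      rw [dS_dS, map_sub, ← push_dS] at this
      exact (sub_eq_zero.1 this.symm)
  obtain ⟨f, hf⟩ := pr_detect (Ee p u c) h2 (by rwa [prB_Ee])
  have hqt : q.comp (tr B 1) = q := by
    ext x
    have := hq' x.1 x.2
    simpa [tr] using this
  obtain ⟨b, hb⟩ := pr_detect (Lam p u c - (push (tr B 1) f - f)) (by
    rw [map_sub, map_sub, ← push_dS, ← hf, h1, sub_self]) (by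
    rw [map_sub, map_sub, push_push, prB_tr, sub_self, sub_zero, prB_Lam]
    exact hp)
  refine ⟨push q b, ?_⟩
  rw [← push_dS, ← hb, map_sub, map_sub, push_push, hqt, sub_self, sub_zero, q_Lam p u q hq]
end wang
end TC

/-! Part 7 -/
namespace TC
set_option linter.unusedSectionVars false

section comb
variable {α : Type}

/-- edges of a path -/
def pe : List α → List (α × α)
  | [] => []
  | [_] => []
  | a :: b :: l => (a, b) :: pe (b :: l)

lemma pe_app (l : List α) (a : α) (m : List α) : pe (l ++ a :: m) = pe (l ++ [a]) ++ pe (a :: m) := by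
  induction l with
  | nil => simp [pe]
  | cons x l ih =>
    cases l with
    | nil => simp [pe]
    | cons y l => simpa [pe] using ih

lemma pe_snoc_len (l : List α) (a : α) : (pe (l ++ [a])).length = l.length := by
  induction l with
  | nil => simp [pe]
  | cons x l ih =>
    cases l with
    | nil => simp [pe]
    | cons y l => simpa [pe] using ih

/-- the relations satisfied by the pairings -/
structure Arn (V : List (α × α) → ℤ) : Prop where
  swap : ∀ l1 a b l2, V (l1 ++ a :: b :: l2) = - V (l1 ++ b :: a :: l2)
  sym : ∀ l1 a b l2, V (l1 ++ (a, b) :: l2) = V (l1 ++ (b, a) :: l2)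
  arn : ∀ a b c R, a ≠ b → b ≠ c → a ≠ c →
    V ((a, b) :: (b, c) :: R) + V ((b, c) :: (c, a) :: R) + V ((c, a) :: (a, b) :: R) = 0

variable {V : List (α × α) → ℤ}

lemma Arn.mv (h : Arn V) (l0 l1 : List (α × α)) (a : α × α) (l2 : List (α × α)) :
    V (l0 ++ (l1 ++ a :: l2)) = (-1) ^ l1.length * V (l0 ++ a :: (l1 ++ l2)) := by
  induction l1 generalizing l0 with
  | nil => simp
  | cons x l1 ih =>
    have := ih (l0 ++ [x])
    simp only [List.append_assoc, List.cons_append, List.nil_append] at this ⊢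
    rw [this, h.swap l0 x a]
    simp [pow_succ]

lemma Arn.mv0 (h : Arn V) (l1 : List (α × α)) (a : α × α) (l2 : List (α × α)) :
    V (l1 ++ a :: l2) = (-1) ^ l1.length * V (a :: (l1 ++ l2)) := h.mv [] l1 a l2

lemma neg_one_sq_pow (n : ℕ) : ((-1 : ℤ) ^ n) * (-1) ^ n = 1 := by
  rw [← mul_pow]; simp

lemma Arn.tele (h : Arn V) (X Y : List (α × α)) (a b x : α) (hab : a ≠ b) (hbx : b ≠ x) (hax : a ≠ x) :
    V ((b, x) :: (X ++ (a, b) :: Y)) - V ((a, x) :: (X ++ (a, b) :: Y)) =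
      - (-1) ^ X.length * V (X ++ (a, x) :: (x, b) :: Y) := by
  have e1 := h.mv [(b, x)] X (a, b) Y
  have e2 := h.mv [(a, x)] X (a, b) Y
  have e3 := h.mv0 X (a, x) ((x, b) :: Y)
  have e4 := h.mv [(a, x)] X (x, b) Y
  simp only [List.cons_append, List.nil_append] at e1 e2 e3 e4
  rw [e1, e2, e3, e4]
  have a0 := h.arn a b x (X ++ Y) hab hbx hax
  have s1 := h.swap [] (b, x) (a, b) (X ++ Y)
  have s2 := h.swap [] (a, x) (a, b) (X ++ Y)
  have s3 := h.sym [] x a ((a, b) :: (X ++ Y))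
  have s4 := h.swap [] (b, x) (x, a) (X ++ Y)
  have s5 := h.sym [] x a ((b, x) :: (X ++ Y))
  have s6 := h.sym [(a, x)] b x (X ++ Y)
  simp only [List.cons_append, List.nil_append] at s1 s2 s3 s4 s5 s6
  have k := neg_one_sq_pow X.length
  set q : ℤ := (-1) ^ X.length
  rw [s1, s2]
  have : V ((a, x) :: (x, b) :: (X ++ Y)) = V ((a, b) :: (b, x) :: (X ++ Y)) -
    V ((a, b) :: (a, x) :: (X ++ Y)) := by linarith
  rw [this]
  linear_combination (q * (V ((a, b) :: (b, x) :: (X ++ Y)) - V ((a, b) :: (a, x) :: (X ++ Y)))) * k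

lemma Arn.perm (h : Arn V) {l l' : List (α × α)} (hp : l.Perm l') :
    ∀ l0, V (l0 ++ l) = V (l0 ++ l') ∨ V (l0 ++ l) = - V (l0 ++ l') := by
  induction hp with
  | nil => intro l0; left; rfl
  | cons x _ ih =>
    intro l0
    have := ih (l0 ++ [x])
    simpa using this
  | swap x y l => intro l0; right; exact h.swap l0 y x l
  | trans _ _ i1 i2 =>
    intro l0
    rcases i1 l0 with a | a <;> rcases i2 l0 with b | b <;> rw [a, b] <;> simp

lemma Arn.perm0 (h : Arn V) {l l' : List (α × α)} (hp : l.Perm l') (h0 : V l' = 0) : V l = 0 := by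
  rcases h.perm hp [] with a | a <;> simpa [h0] using a

/-- forests -/
abbrev fe (P : List (List α)) : List (α × α) := P.flatMap pe

lemma leaf_vanish (h : Arn V) (l : α) (Q : List (List α)) (r : ℕ)
    (hV : ∀ p : List α, (p ++ Q.flatten).Nodup → p.length = r + 2 → V (pe p ++ fe Q) = 0)
    (l1 : List α) : ∀ (a : α) (l2 : List α), (l :: ((l1 ++ a :: l2) ++ Q.flatten)).Nodup →
    (l1 ++ a :: l2).length = r + 1 → V ((a, l) :: (pe (l1 ++ a :: l2) ++ fe Q)) = 0 := by
  induction l1 using List.reverseRecOn with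
  | nil =>
    intro a l2 hn hl
    rw [← List.nil_append ((a, l) :: _), h.sym]
    exact hV (l :: a :: l2) hn (by simpa using hl)
  | append_singleton l1 b ih =>
    intro a l2 hn hl
    have h1 := ih b (a :: l2) (by simpa using hn) (by simpa using hl)
    have e : pe (l1 ++ b :: a :: l2) = pe (l1 ++ [b]) ++ (b, a) :: pe (a :: l2) := by
      rw [pe_app]; rfl
    have hh := h.tele (pe (l1 ++ [b])) (pe (a :: l2) ++ fe Q) b a l
      (by rintro rfl; simp at hn; grind)
      (by rintro rfl; simp at hn)
      (by rintro rfl; simp at hn)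
    have e2 : pe (l1 ++ b :: l :: a :: l2) = pe (l1 ++ [b]) ++ (b, l) :: (l, a) :: pe (a :: l2) := by
      rw [pe_app]; rfl
    have h3 := hV (l1 ++ b :: l :: a :: l2) (by
      refine (List.Perm.nodup_iff ?_).1 hn
      have : (l1 ++ b :: l :: a :: l2 ++ Q.flatten) = (l1 ++ [b]) ++ l :: (a :: l2 ++ Q.flatten) := by
        simp
      rw [this]
      simpa using (List.perm_middle (a := l) (l₁ := l1 ++ [b]) (l₂ := a :: l2 ++ Q.flatten)).symm)
      (by simp at hl ⊢; omega)
    rw [e] at h1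
    rw [e2] at h3
    simp only [List.append_assoc, List.cons_append, List.nil_append] at h1 h3 hh ⊢
    rw [e]
    simp only [List.append_assoc, List.cons_append, List.nil_append]
    rw [h1, h3] at hh
    simpa using hh

/-- pairing with one more edge at a new vertex is determined by path forests. -/
lemma new_edge (h : Arn V) (l i : α) (hli : l ≠ i) (P : List (List α)) (hP : P.flatten.Nodup)
    (hl : l ∉ P.flatten)
    (hV : ∀ P' : List (List α), P'.flatten.Nodup → (fe P').length = (fe P).length + 1 → V (fe P') = 0) :
    V ((l, i) :: fe P) = 0 := by
  by_cases hi : i ∈ P.flatten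
  · obtain ⟨p, hp, hip⟩ := List.mem_flatten.1 hi
    obtain ⟨P1, P2, rfl⟩ := List.append_of_mem hp
    obtain ⟨l1, l2, rfl⟩ := List.append_of_mem hip
    have hperm : (P1 ++ (l1 ++ i :: l2) :: P2).Perm ((l1 ++ i :: l2) :: (P1 ++ P2)) := List.perm_middle
    rw [← List.nil_append ((l, i) :: _), h.sym, List.nil_append]
    refine h.perm0 (l' := (i, l) :: (pe (l1 ++ i :: l2) ++ fe (P1 ++ P2))) ?_ ?_
    · refine List.Perm.cons _ ?_
      exact hperm.flatMap_right pe
    · refine leaf_vanish h l (P1 ++ P2) (l1.length + l2.length) ?_ l1 i l2 ?_ (by simp; omega)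
      · intro p hp hlen
        refine hV (p :: (P1 ++ P2)) hp ?_
        have e1 := (hperm.flatMap_right pe).length_eq
        rw [fe, fe, e1]
        obtain ⟨x, p', rfl⟩ : ∃ x p', p = p' ++ [x] := by
          have : p ≠ [] := by rintro rfl; simp at hlen
          exact ⟨_, _, (List.dropLast_append_getLast this).symm⟩
        have e2 : (pe (l1 ++ i :: l2)).length = l1.length + l2.length := by
          obtain ⟨x, q, hq⟩ : ∃ x q, l1 ++ i :: l2 = q ++ [x] := by
            have : l1 ++ i :: l2 ≠ [] := by simp
            exact ⟨_, _, (List.dropLast_append_getLast this).symm⟩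
          rw [hq, pe_snoc_len]
          have := congrArg List.length hq
          simp at this
          omega
        simp only [List.flatMap_cons, List.length_append, pe_snoc_len, e2] at hlen ⊢
        simp at hlen
        omega
      · have := (hperm.flatten).nodup_iff.1 hP
        refine List.nodup_cons.2 ⟨?_, this⟩
        intro hmem
        exact hl ((hperm.flatten).mem_iff.2 hmem)
  · have := hV ([l, i] :: P) (by
      simp only [List.flatten_cons, List.cons_append, List.nil_append, List.nodup_cons, List.mem_cons]
      exact ⟨by simpa [hli] using hl, hi, hP⟩) (by simp [pe])
    simpa [pe] using this

section inv
variable [Finite α]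

lemma exists_perm_map {l l' : List α} (hl : l.Nodup) (hl' : l'.Nodup) (he : l.length = l'.length) :
    ∃ σ : Equiv.Perm α, l.map σ = l' := by
  classical
  have := Fintype.ofFinite α
  let f : Fin l.length → α := l.get
  let g : Fin l.length → α := fun i => l'.get (i.cast he)
  have hf : Function.Injective f := List.nodup_iff_injective_get.1 hl
  have hg : Function.Injective g := (List.nodup_iff_injective_get.1 hl').comp (Fin.cast_injective he)
  let e : {x // x ∈ Set.range f} ≃ {x // x ∈ Set.range g} :=
    (Equiv.ofInjective f hf).symm.trans (Equiv.ofInjective g hg)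
  refine ⟨e.extendSubtype, ?_⟩
  apply List.ext_getElem
  · simpa using he
  · intro i h1 h2
    have hi : i < l.length := by simpa using h1
    have h3 := e.extendSubtype_apply_of_mem (f ⟨i, hi⟩) ⟨⟨i, hi⟩, rfl⟩
    have h4 : (Equiv.ofInjective f hf).symm ⟨f ⟨i, hi⟩, ⟨⟨i, hi⟩, rfl⟩⟩ = ⟨i, hi⟩ :=
      Equiv.ofInjective_symm_apply hf _
    rw [List.getElem_map]
    change e.extendSubtype (f ⟨i, hi⟩) = _
    rw [h3]
    simp only [e, Equiv.trans_apply, h4]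
    rfl

lemma pe_map {β : Type} (f : α → β) : ∀ l : List α, pe (l.map f) = (pe l).map (Prod.map f f)
  | [] => rfl
  | [_] => rfl
  | a :: b :: l => by
    have := pe_map f (b :: l)
    simp only [List.map_cons] at this
    simp [pe, this]

lemma fe_map {β : Type} (f : α → β) (P : List (List α)) : fe (P.map (List.map f)) = (fe P).map (Prod.map f f) := by
  induction P with
  | nil => rfl
  | cons p P ih => simp only [fe, List.map_cons, List.flatMap_cons, List.map_append, pe_map] at *; rw [ih]

lemma shape {V : List (α × α) → ℤ}
    (hinv : ∀ (σ : Equiv.Perm α) (l : List (α × α)), V (l.map (Prod.map σ σ)) = V l)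
    {p p' : List α} {Q : List (List α)} (hp : (p ++ Q.flatten).Nodup) (hp' : (p' ++ Q.flatten).Nodup)
    (he : p.length = p'.length) : V (pe p ++ fe Q) = V (pe p' ++ fe Q) := by
  obtain ⟨σ, hσ⟩ := exists_perm_map hp hp' (by simp [he])
  rw [List.map_append] at hσ
  obtain ⟨h1, h2⟩ := List.append_inj hσ (by simpa using he)
  rw [← hinv σ, List.map_append, ← pe_map, h1, ← fe_map]
  congr 3
  have h3 : ∀ x ∈ Q.flatten, σ x = x := by
    intro x hx
    have h2' : Q.flatten.map σ = Q.flatten.map id := by simpa using h2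
    exact List.map_inj_left.1 h2' x hx
  conv_rhs => rw [← List.map_id Q]
  apply List.map_congr_left
  intro q hq
  conv_rhs => rw [id, ← List.map_id q]
  apply List.map_congr_left
  intro x hx
  exact h3 x (List.mem_flatten.2 ⟨q, hq, hx⟩)

lemma leaf_value (h : Arn V) (l : α) (Q : List (List α)) (r : ℕ) (v : ℤ)
    (hV : ∀ p : List α, (p ++ Q.flatten).Nodup → p.length = r + 2 → V (pe p ++ fe Q) = v)
    (l1 : List α) : ∀ (a : α) (l2 : List α), (l :: ((l1 ++ a :: l2) ++ Q.flatten)).Nodup →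
    (l1 ++ a :: l2).length = r + 1 → V ((a, l) :: (pe (l1 ++ a :: l2) ++ fe Q)) =
      if Even l1.length then v else 0 := by
  induction l1 using List.reverseRecOn with
  | nil =>
    intro a l2 hn hl
    rw [← List.nil_append ((a, l) :: _), h.sym]
    have := hV (l :: a :: l2) hn (by simpa using hl)
    simpa [pe] using this
  | append_singleton l1 b ih =>
    intro a l2 hn hl
    have h1 := ih b (a :: l2) (by simpa using hn) (by simpa using hl)
    have e : pe (l1 ++ b :: a :: l2) = pe (l1 ++ [b]) ++ (b, a) :: pe (a :: l2) := by
      rw [pe_app]; rfl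
    have hh := h.tele (pe (l1 ++ [b])) (pe (a :: l2) ++ fe Q) b a l
      (by rintro rfl; simp at hn; grind)
      (by rintro rfl; simp at hn)
      (by rintro rfl; simp at hn)
    have e2 : pe (l1 ++ b :: l :: a :: l2) = pe (l1 ++ [b]) ++ (b, l) :: (l, a) :: pe (a :: l2) := by
      rw [pe_app]; rfl
    have h3 := hV (l1 ++ b :: l :: a :: l2) (by
      refine (List.Perm.nodup_iff ?_).1 hn
      have : (l1 ++ b :: l :: a :: l2 ++ Q.flatten) = (l1 ++ [b]) ++ l :: (a :: l2 ++ Q.flatten) := by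
        simp
      rw [this]
      simpa using (List.perm_middle (a := l) (l₁ := l1 ++ [b]) (l₂ := a :: l2 ++ Q.flatten)).symm)
      (by simp at hl ⊢; omega)
    rw [e] at h1
    rw [e2] at h3
    simp only [List.append_assoc, List.cons_append, List.nil_append] at h1 h3 hh ⊢
    rw [e]
    simp only [List.append_assoc, List.cons_append]
    rw [h1, h3, pe_snoc_len] at hh
    rw [sub_eq_iff_eq_add.1 hh, List.length_append, List.length_singleton]
    by_cases hev : Even l1.length
    · have : ¬ Even (l1.length + 1) := by simpa [Nat.even_add_one] using hev
      simp [hev, this]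
    · have : Even (l1.length + 1) := by simpa [Nat.even_add_one] using hev
      have hod := hev
      rw [Nat.not_even_iff_odd] at hod
      simp [hod.neg_one_pow, this, hev]

lemma path_zero (h : Arn V)
    (hinv : ∀ (σ : Equiv.Perm α) (l : List (α × α)), V (l.map (Prod.map σ σ)) = V l)
    (p : List α) (Q : List (List α)) (hp : (p ++ Q.flatten).Nodup) (hlen : 3 ≤ p.length) :
    V (pe p ++ fe Q) = 0 := by
  obtain ⟨r, hr⟩ : ∃ r, p.length = r + 3 := ⟨p.length - 3, by omega⟩
  set v := V (pe p ++ fe Q) with hv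
  have hV : ∀ p' : List α, (p' ++ Q.flatten).Nodup → p'.length = (r + 1) + 2 →
      V (pe p' ++ fe Q) = v := fun p' hp' hl => shape hinv hp' hp (by omega)
  have hL := fun l => leaf_value h l Q (r + 1) v hV
  -- write p as a path with leaves
  by_cases hpar : Even r
  · -- even number r + 2 of edges
    obtain ⟨l, c, rfl⟩ : ∃ l c, p = l :: c := by
      cases p with
      | nil => simp at hr
      | cons a b => exact ⟨a, b, rfl⟩
    obtain ⟨c', x, rfl⟩ : ∃ c' x, c = c' ++ [x] := by
      have : c ≠ [] := by rintro rfl; simp at hr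
      exact ⟨_, _, (List.dropLast_append_getLast this).symm⟩
    have hc' : c'.length = r + 1 := by simp at hr; omega
    have e1 := hL l c' x [] (by simpa using hp) (by simp at hr ⊢; omega)
    have hodd : ¬ Even c'.length := by rw [hc']; simpa [Nat.even_add_one] using hpar
    rw [if_neg hodd] at e1
    have e2 := hV (c' ++ [x, l]) (by
      refine (List.Perm.nodup_iff ?_).1 hp
      have : c' ++ [x, l] ++ Q.flatten = (c' ++ [x]) ++ l :: Q.flatten := by simp
      rw [this]
      simpa using (List.perm_middle (a := l) (l₁ := c' ++ [x]) (l₂ := Q.flatten)).symm) (by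
        simp; omega)
    have e3 : pe (c' ++ [x, l]) = pe (c' ++ [x]) ++ [(x, l)] := by rw [pe_app]; rfl
    rw [e3, List.append_assoc, List.singleton_append, h.mv0, e1] at e2
    rw [← e2]; simp
  · have hodd : Odd r := Nat.not_even_iff_odd.1 hpar
    obtain ⟨l, x, c, rfl⟩ : ∃ l x c, p = l :: x :: c := by
      match p, hr with
      | a :: b :: c, _ => exact ⟨a, b, c, rfl⟩
    have hc : c.length = r + 1 := by simp at hr; omega
    -- S values
    have hS : ∀ (l1 : List α) (a : α) (l2 : List α), l1 ++ a :: l2 = c →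
        V ((a, x) :: (x, l) :: (pe (l1 ++ a :: l2) ++ fe Q)) = - ((l1.length / 2 : ℕ) + 1) * v := by
      intro l1
      induction l1 using List.reverseRecOn with
      | nil =>
        intro a l2 hc
        have e1 := hV (l :: x :: a :: l2) (by rw [← List.nil_append (a :: l2), hc]; exact hp)
          (by rw [← List.nil_append (a :: l2), hc]; exact hr)
        have s1 := h.swap [] (a, x) (x, l) (pe (a :: l2) ++ fe Q)
        have s2 := h.sym [] x l ((a, x) :: (pe (a :: l2) ++ fe Q))
        have s3 := h.sym [(l, x)] a x (pe (a :: l2) ++ fe Q)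
        simp only [List.nil_append, List.cons_append] at s1 s2 s3
        simp only [List.nil_append]
        rw [s1, s2, s3]
        simp only [pe, List.cons_append] at e1
        rw [e1]
        simp
      | append_singleton l1 b ih =>
        intro a l2 hc'
        have hc2 : l1 ++ b :: a :: l2 = c := by simpa using hc'
        have h1 := ih b (a :: l2) hc2
        have hn : (l :: x :: ((l1 ++ b :: a :: l2) ++ Q.flatten)).Nodup := by rw [hc2]; exact hp
        have e : pe (l1 ++ b :: a :: l2) = pe (l1 ++ [b]) ++ (b, a) :: pe (a :: l2) := by
          rw [pe_app]; rfl
        have hh := h.tele ((x, l) :: pe (l1 ++ [b])) (pe (a :: l2) ++ fe Q) b a x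
          (by rintro rfl; simp at hn; grind)
          (by rintro rfl; simp at hn)
          (by rintro rfl; simp at hn)
        have e2 : pe (l1 ++ b :: x :: a :: l2) = pe (l1 ++ [b]) ++ (b, x) :: (x, a) :: pe (a :: l2) := by
          rw [pe_app]; rfl
        have h3 := hL l (l1 ++ [b]) x (a :: l2) (by
          refine (List.Perm.nodup_iff ?_).1 hn
          refine List.Perm.cons _ ?_
          have : (l1 ++ [b] ++ x :: a :: l2 ++ Q.flatten) = (l1 ++ [b]) ++ x :: (a :: l2 ++ Q.flatten) := by
            simp
          rw [this]
          simpa using (List.perm_middle (a := x) (l₁ := l1 ++ [b]) (l₂ := a :: l2 ++ Q.flatten)).symm)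
          (by
            have := congrArg List.length hc2
            simp at this hc ⊢
            omega)
        have e4 : l1 ++ [b] ++ x :: a :: l2 = l1 ++ b :: x :: a :: l2 := by simp
        rw [e4, e2] at h3
        rw [e] at h1
        simp only [List.append_assoc, List.cons_append, List.nil_append] at h1 h3 hh ⊢
        rw [e]
        simp only [List.append_assoc, List.cons_append]
        rw [h1, h3, List.length_cons, pe_snoc_len] at hh
        rw [sub_eq_iff_eq_add.1 hh]
        simp only [List.length_append, List.length_singleton]
        by_cases hev : Even l1.length
        · have h5 : ¬ Even (l1.length + 1) := by simpa [Nat.even_add_one] using hev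
          obtain ⟨t, ht⟩ := hev
          have h6 : (l1.length + 1) / 2 = l1.length / 2 := by omega
          simp [h5, h6]
        · have h5 : Even (l1.length + 1) := by simpa [Nat.even_add_one] using hev
          rw [Nat.not_even_iff_odd] at hev
          obtain ⟨t, ht⟩ := hev
          have h6 : (l1.length + 1) / 2 = l1.length / 2 + 1 := by omega
          rw [if_pos h5, h6, h5.neg_one_pow]
          push_cast
          ring
    obtain ⟨c', y, rfl⟩ : ∃ c' x, c = c' ++ [x] := by
      have : c ≠ [] := by rintro rfl; simp at hc
      exact ⟨_, _, (List.dropLast_append_getLast this).symm⟩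
    have e1 := hS c' y [] rfl
    have e2 := hV (c' ++ [y, x, l]) (by
      refine (List.Perm.nodup_iff ?_).1 hp
      have : c' ++ [y, x, l] = (c' ++ [y]) ++ [x, l] := by simp
      rw [this]
      refine List.Perm.append_right _ ?_
      refine List.Perm.trans ?_ (List.perm_append_comm (l₁ := [x, l]))
      exact List.Perm.swap x l _) (by simp at hc ⊢; omega)
    have e3 : pe (c' ++ [y, x, l]) = pe (c' ++ [y]) ++ [(y, x), (x, l)] := by rw [pe_app]; rfl
    have m1 := h.mv0 (pe (c' ++ [y])) (y, x) ((x, l) :: fe Q)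
    have m2 := h.mv [(y, x)] (pe (c' ++ [y])) (x, l) (fe Q)
    rw [e3] at e2
    simp only [List.append_assoc, List.cons_append, List.nil_append] at e2 m1 m2
    rw [m1, m2, ← mul_assoc, neg_one_sq_pow, one_mul, e1] at e2
    have : (((c'.length / 2 : ℕ) : ℤ) + 2) * v = 0 := by linear_combination - e2
    rcases mul_eq_zero.1 this with h0 | h0
    · omega
    · exact h0

theorem forest_zero (h : Arn V)
    (hinv : ∀ (σ : Equiv.Perm α) (l : List (α × α)), V (l.map (Prod.map σ σ)) = V l)
    (P : List (List α)) (hP : P.flatten.Nodup) (hlen : 2 ≤ (fe P).length) : V (fe P) = 0 := by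
  by_cases hex : ∃ p ∈ P, 3 ≤ p.length
  · obtain ⟨p, hp, h3⟩ := hex
    obtain ⟨P1, P2, rfl⟩ := List.append_of_mem hp
    have hperm : (P1 ++ p :: P2).Perm (p :: (P1 ++ P2)) := List.perm_middle
    refine h.perm0 (hperm.flatMap_right pe) ?_
    exact path_zero h hinv p (P1 ++ P2) (hperm.flatten.nodup_iff.1 hP) h3
  · push Not at hex
    have key : ∀ (P : List (List α)), (∀ p ∈ P, p.length < 3) → 1 ≤ (fe P).length →
        ∃ a b P', P.Perm ([a, b] :: P') ∧ (fe P').length + 1 = (fe P).length := by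
      intro P hex h1
      obtain ⟨p, hp, hne⟩ : ∃ p ∈ P, pe p ≠ [] := by
        by_contra hcon
        push Not at hcon
        have : fe P = [] := List.flatMap_eq_nil_iff.2 hcon
        rw [this] at h1
        simp at h1
      obtain ⟨P1, P2, rfl⟩ := List.append_of_mem hp
      have hperm : (P1 ++ p :: P2).Perm (p :: (P1 ++ P2)) := List.perm_middle
      have h3 := hex p hp
      obtain ⟨a, b, rfl⟩ : ∃ a b, p = [a, b] := by
        match p, hne, h3 with
        | [], hne, _ => exact absurd rfl hne
        | [_], hne, _ => exact absurd rfl hne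
        | [a, b], _, _ => exact ⟨a, b, rfl⟩
      refine ⟨a, b, P1 ++ P2, hperm, ?_⟩
      rw [fe, fe, (hperm.flatMap_right pe).length_eq]
      simp [pe]
    obtain ⟨a, b, P1, hp1, hl1⟩ := key P hex (by omega)
    obtain ⟨c, d, P2, hp2, hl2⟩ := key P1 (fun p hp => hex p (hp1.mem_iff.2 (by simp [hp]))) (by omega)
    have hp3 : P.Perm ([a, b] :: [c, d] :: P2) := hp1.trans (hp2.cons _)
    refine h.perm0 (hp3.flatMap_right pe) ?_
    have hn := hp3.flatten.nodup_iff.1 hP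
    obtain ⟨σ, hσ⟩ := exists_perm_map (l := [a, b, c, d] ++ P2.flatten) (l' := [c, d, a, b] ++ P2.flatten)
      (by simpa using hn) (by
        refine (List.Perm.nodup_iff ?_).1 hn
        change ([a, b] ++ [c, d] ++ P2.flatten).Perm ([c, d] ++ [a, b] ++ P2.flatten)
        exact List.Perm.append_right _ List.perm_append_comm) (by simp)
    rw [List.map_append] at hσ
    obtain ⟨h1, h2⟩ := List.append_inj hσ (by simp)
    simp only [List.map_cons, List.map_nil, List.cons.injEq, and_true] at h1
    obtain ⟨ha, hb, hc, hd⟩ := h1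
    have h4 : (fe P2).map (Prod.map σ σ) = fe P2 := by
      rw [← fe_map]
      congr 1
      have h3 : ∀ x ∈ P2.flatten, σ x = x := by
        intro x hx
        have h2' : P2.flatten.map σ = P2.flatten.map id := by simpa using h2
        exact List.map_inj_left.1 h2' x hx
      conv_rhs => rw [← List.map_id P2]
      apply List.map_congr_left
      intro q hq
      conv_rhs => rw [id, ← List.map_id q]
      apply List.map_congr_left
      intro x hx
      exact h3 x (List.mem_flatten.2 ⟨q, hq, hx⟩)
    have h5 := hinv σ ((a, b) :: (c, d) :: fe P2)
    simp only [List.map_cons, Prod.map_apply, ha, hb, hc, hd, h4] at h5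
    have h6 := h.swap [] (a, b) (c, d) (fe P2)
    simp only [List.nil_append] at h6
    have h7 : V ((a, b) :: (c, d) :: fe P2) = 0 := by omega
    simpa [pe, fe] using h7
end inv
end comb
end TC

/-! Part 8 -/
set_option linter.unusedSectionVars false
namespace TC
section fib

/-- a nonvanishing continuous function as a map to the units -/
noncomputable def mkU {X : Type} [TopologicalSpace X] (f : X → ℂ) (hf : Continuous f) (h : ∀ x, f x ≠ 0) :
    C(X, ℂˣ) :=
  ⟨fun x => Units.mk0 (f x) (h x), by
    rw [Units.continuous_iff]
    refine ⟨hf, ?_⟩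
    have : (fun x => ((Units.mk0 (f x) (h x))⁻¹ : ℂˣ).val) = fun x => (f x)⁻¹ := by
      funext x; simp
    change Continuous (fun x => ((Units.mk0 (f x) (h x))⁻¹ : ℂˣ).val)
    rw [this]
    exact hf.inv₀ h⟩

@[simp] lemma mkU_apply {X : Type} [TopologicalSpace X] (f : X → ℂ) (hf : Continuous f) (h : ∀ x, f x ≠ 0)
    (x : X) : ((mkU f hf h x : ℂˣ) : ℂ) = f x := rfl

variable {B E ι : Type} [TopologicalSpace B] [TopologicalSpace E] [Fintype ι] [Nonempty ι]
  (s : ι → C(B, ℂ)) (j : C(E, B × ℂ)) (hjS : ∀ e i, (j e).2 ≠ s i (j e).1)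

/-- the complement of one section -/
abbrev Ei (i : ι) : Type := {p : B × ℂ | p.2 ≠ s i p.1}

noncomputable def qi (i : ι) : C(B × ℂ, Ei s i) :=
  ⟨fun p => ⟨(p.1, s i p.1 + Complex.exp p.2), by simp [Complex.exp_ne_zero]⟩, by fun_prop⟩

noncomputable def ui (i : ι) : C(Ei s i, ℂˣ) :=
  mkU (fun p => p.1.2 - s i p.1.1) (by fun_prop) (fun p => sub_ne_zero.2 p.2)

noncomputable def ji (i : ι) : C(E, Ei s i) := ⟨fun e => ⟨j e, hjS e i⟩, by fun_prop⟩

noncomputable def pj : C(E, B) := ⟨fun e => (j e).1, by fun_prop⟩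

noncomputable def uj (i : ι) : C(E, ℂˣ) :=
  mkU (fun e => (j e).2 - s i (j e).1) (by fun_prop) (fun e => sub_ne_zero.2 (hjS e i))

noncomputable def pi1 (i : ι) : C(Ei s i, B) := ⟨fun p => p.1.1, by fun_prop⟩

lemma fib_assemble (hs : ∀ i j, i ≠ j → ∀ b, s i b ≠ s j b) (hj : Function.Injective j)
    (r : C({p : B × ℂ | ∀ i, p.2 ≠ s i p.1}, E)) (hr : ∀ x, j (r x) = x) {k : ℕ} (c : Ch (k + 1) E)
    (h : ∀ i, ∃ b, push (ji s j hjS i) c = dS b) : ∃ b, c = dS b := by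
  classical
  obtain ⟨a, ha, hac⟩ := fib_detect s Finset.univ Finset.univ_nonempty
    (fun i _ j _ => hs i j) (push j c) (fun i _ => by
      obtain ⟨b, hb⟩ := h i
      refine ⟨push (incl _) b, push_incl_mem b, ?_⟩
      rw [← push_dS, ← hb, push_push]
      rfl)
  have e : {p : B × ℂ | ∀ i ∈ (Finset.univ : Finset ι), p.2 ≠ s i p.1} =
    {p : B × ℂ | ∀ i, p.2 ≠ s i p.1} := by ext; simp
  rw [e] at ha
  obtain ⟨y, hy⟩ := exists_incl ha
  refine ⟨push r y, ?_⟩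
  apply push_injective hj
  rw [push_dS, push_push]
  have : j.comp r = incl {p : B × ℂ | ∀ i, p.2 ≠ s i p.1} := by
    ext x : 1
    exact hr x
  rw [this, hy, hac]

lemma qi_ui (i : ι) : ∀ x y, Complex.exp y = ui s i x → qi s i (pi1 s i x, y) = x := by
  intro x y h
  apply Subtype.ext
  change (x.1.1, s i x.1.1 + Complex.exp y) = x.1
  rw [h]
  refine Prod.ext rfl ?_
  simp [ui]

lemma qi_per (i : ι) : ∀ b y, qi s i (b, y + tpi) = qi s i (b, y) := by
  intro b y
  apply Subtype.ext
  change (b, s i b + Complex.exp (y + tpi)) = (b, s i b + Complex.exp y)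
  rw [Complex.exp_add]
  have := exp_int 1
  simp only [Int.cast_one, one_mul] at this
  rw [this, mul_one]

theorem fib_wang_one (hjS : ∀ e i, (j e).2 ≠ s i (j e).1) (hs : ∀ i j, i ≠ j → ∀ b, s i b ≠ s j b) (hj : Function.Injective j)
    (r : C({p : B × ℂ | ∀ i, p.2 ≠ s i p.1}, E)) (hr : ∀ x, j (r x) = x) (c : Ch 1 E) (hc : dS c = 0) (hp : ∃ b, push (pj j) c = dS b) :
    ∃ b, c = dS b := by
  refine fib_assemble s j hjS hs hj r hr c (fun i => ?_)
  refine wang_one (pi1 s i) (ui s i) (qi s i) (qi_ui s i) _ (by rw [← push_dS, hc, map_zero]) ?_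
  obtain ⟨b, hb⟩ := hp
  refine ⟨b, ?_⟩
  rw [push_push, ← hb]; rfl

theorem fib_wang_succ (hs : ∀ i j, i ≠ j → ∀ b, s i b ≠ s j b) (hj : Function.Injective j)
    (r : C({p : B × ℂ | ∀ i, p.2 ≠ s i p.1}, E)) (hr : ∀ x, j (r x) = x) {k : ℕ} (c : Ch (k + 2) E) (hc : dS c = 0) (hp : ∃ b, push (pj j) c = dS b)
    (hp' : ∀ i, ∃ b, push (pj j) (cap (wd (uj s j hjS i)) c) = dS b) :
    ∃ b, c = dS b := by
  refine fib_assemble s j hjS hs hj r hr c (fun i => ?_)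
  refine wang_succ (pi1 s i) (ui s i) (qi s i) (qi_ui s i) (qi_per s i) _
    (by rw [← push_dS, hc, map_zero]) ?_ ?_
  · obtain ⟨b, hb⟩ := hp
    refine ⟨b, ?_⟩
    rw [push_push, ← hb]; rfl
  · obtain ⟨b, hb⟩ := hp' i
    refine ⟨b, ?_⟩
    rw [← hb, ← push_cap, push_push]; rfl

end fib
end TC

/-! Part 9 -/
set_option linter.unusedSectionVars false
namespace TC
section pairing
variable {X Y : Type} [TopologicalSpace X] [TopologicalSpace Y]

noncomputable def capL : List C(X, ℂˣ) → HT X →ₗ[ℤ] HT X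
  | [] => LinearMap.id
  | u :: us => (capL us).comp (KK u)

lemma capL_nil (x : HT X) : capL [] x = x := rfl
lemma capL_cons (u : C(X, ℂˣ)) (us : List C(X, ℂˣ)) (x : HT X) : capL (u :: us) x = capL us (KK u x) := rfl

lemma capL_swap (l1 l2 : List C(X, ℂˣ)) (u v : C(X, ℂˣ)) (x : HT X) :
    capL (l1 ++ u :: v :: l2) x = - capL (l1 ++ v :: u :: l2) x := by
  induction l1 generalizing x with
  | nil => simp only [List.nil_append, capL_cons]; rw [KK_anti, map_neg]
  | cons a l1 ih => simp only [List.cons_append, capL_cons]; exact ih _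

def Null (x : HT X) : Prop := ∀ us, eps (capL us x) = 0

lemma Null.neg {x : HT X} (h : Null x) : Null (-x) := fun us => by rw [map_neg, map_neg, h us, neg_zero]
lemma Null.KK {x : HT X} (h : Null x) (u : C(X, ℂˣ)) : Null (KK u x) := fun us => h (u :: us)

lemma Null_sq (v : C(X, ℂˣ)) (x : HT X) : Null (TC.KK v (TC.KK v x)) := by
  intro us
  have h := congrArg (fun y => eps (capL us y)) (KK_anti v v x)
  simp only [map_neg] at h
  omega

lemma base_change (v : C(X, ℂˣ)) (us : List C(X, ℂˣ)) (x : HT X) (h : Null (KK v x)) :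
    eps (capL (us.map (fun u => u * v)) x) = eps (capL us x) := by
  induction us generalizing x with
  | nil => rfl
  | cons u us ih =>
    simp only [List.map_cons, capL_cons]
    rw [KK_mul, map_add, map_add, h, add_zero]
    apply ih
    rw [KK_anti]
    exact (h.KK u).neg

noncomputable def VX (x : HT X) : List C(X, ℂˣ) → ℤ
  | [] => 0
  | u0 :: us => eps (capL (us.map (fun u => u / u0)) x)

lemma VX_cons (x : HT X) (u0 : C(X, ℂˣ)) (us) :
    VX x (u0 :: us) = eps (capL (us.map (fun u => u / u0)) x) := rfl

lemma VX_swap0 (x : HT X) (u v : C(X, ℂˣ)) (R : List C(X, ℂˣ)) :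
    VX x (u :: v :: R) = - VX x (v :: u :: R) := by
  simp only [VX_cons, List.map_cons, capL_cons]
  have e1 : KK (u / v) x = - KK (v / u) x := by rw [KK_div, KK_div]; abel
  rw [e1, map_neg, map_neg, neg_neg]
  rw [← base_change (v / u) (R.map (fun w => w / v)) _ (Null_sq _ _), List.map_map]
  congr 3
  apply List.map_congr_left
  intro w _
  simp

lemma VX_swap (x : HT X) (l1 : List C(X, ℂˣ)) (u v : C(X, ℂˣ)) (l2 : List C(X, ℂˣ)) :
    VX x (l1 ++ u :: v :: l2) = - VX x (l1 ++ v :: u :: l2) := by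
  cases l1 with
  | nil => exact VX_swap0 x u v l2
  | cons a l1 =>
    simp only [List.cons_append, VX_cons, List.map_append, List.map_cons]
    rw [capL_swap, map_neg]

lemma capL_congr {ι : Type} (f g : ι → C(X, ℂˣ)) (h : ∀ i x, KK (f i) x = KK (g i) x) (l : List ι) (x : HT X) :
    capL (l.map f) x = capL (l.map g) x := by
  induction l generalizing x with
  | nil => rfl
  | cons a l ih => simp only [List.map_cons, capL_cons]; rw [h, ih]

lemma VX_congr {ι : Type} (f g : ι → C(X, ℂˣ)) (h : ∀ i x, KK (f i) x = KK (g i) x) (l : List ι) (x : HT X) :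
    VX x (l.map f) = VX x (l.map g) := by
  cases l with
  | nil => rfl
  | cons a l =>
    simp only [List.map_cons, VX_cons, List.map_map]
    congr 1
    apply capL_congr
    intro i x
    simp only [Function.comp]
    rw [KK_div, KK_div, h, h]

lemma capL_hpush (f : C(X, Y)) (us : List C(Y, ℂˣ)) (x : HT X) :
    capL us (hpush f x) = hpush f (capL (us.map (fun u => u.comp f)) x) := by
  induction us generalizing x with
  | nil => rfl
  | cons a l ih => simp only [List.map_cons, capL_cons]; rw [← hpush_KK, ih]

lemma VX_hpush (f : C(X, Y)) (us : List C(Y, ℂˣ)) (x : HT X) :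
    VX (hpush f x) us = VX x (us.map (fun u => u.comp f)) := by
  cases us with
  | nil => rfl
  | cons a l =>
    simp only [List.map_cons, VX_cons, List.map_map]
    rw [capL_hpush, eps_hpush, List.map_map]
    rfl

lemma VX_KK (a : C(X, ℂˣ)) (x : HT X) (u0 : C(X, ℂˣ)) (us : List C(X, ℂˣ)) :
    VX (KK a x) (u0 :: us) = VX x (1 :: u0 :: us) - VX x (a :: u0 :: us) := by
  rw [VX_swap0 x 1, VX_swap0 x a]
  simp only [VX_cons, List.map_cons, capL_cons]
  rw [KK_div, KK_div, KK_one]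
  simp only [map_sub, map_zero]
  ring

lemma VX_arn (α β γ : C(X, ℂˣ)) (x : HT X) (h : Null (KK (γ / α) (KK (β / α) x))) (R : List C(X, ℂˣ)) :
    VX x (α :: β :: R) + VX x (β :: γ :: R) + VX x (γ :: α :: R) = 0 := by
  simp only [VX_cons, List.map_cons, capL_cons]
  have e1 : KK (γ / β) x = KK (γ / α) x - KK (β / α) x := by simp only [KK_div]; abel
  have e2 : KK (α / γ) x = - KK (γ / α) x := by simp only [KK_div]; abel
  rw [e1, e2]
  simp only [map_sub, map_neg]
  have key : ∀ (w : C(X, ℂˣ)) (y : HT X), Null (KK (w / α) y) →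
      eps (capL (R.map (fun u => u / w)) y) = eps (capL (R.map (fun u => u / α)) y) := by
    intro w y hy
    rw [← base_change (w / α) _ _ hy, List.map_map]
    congr 3
    apply List.map_congr_left
    intro w _
    simp
  have h' : Null (KK (β / α) (KK (γ / α) x)) := by rw [KK_anti]; exact h.neg
  rw [key β _ h', key β _ (Null_sq _ _), key γ _ (Null_sq _ _)]
  ring

lemma dS_cap {η : Sing 2 X → ℤ} (h : Cocyc η) {k : ℕ} (x : Ch (k + 3) X) :
    dS (cap η x) = - cap η (dS x) := by
  have := cap_dS η x
  have h0 : del1 η = fun _ => 0 := funext h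
  rw [h0, cap2_zero] at this
  exact eq_neg_of_add_eq_zero_left this

/-- twice punctured plane -/
abbrev PP : Type := {p : ℂ // p ≠ 0 ∧ p ≠ 1}

noncomputable def x0 : C(PP, ℂˣ) := mkU (fun p => p.1) (by fun_prop) (fun p => p.2.1)
noncomputable def x1 : C(PP, ℂˣ) := mkU (fun p => 1 - p.1) (by fun_prop) (fun p => sub_ne_zero.2 p.2.2.symm)

lemma PP_acyc (c : Ch 3 PP) (hc : dS c = 0) : ∃ b, c = dS b := by
  let s : Fin 2 → C(Unit, ℂ) := fun i => ContinuousMap.const _ (i : ℂ)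
  let j : C(PP, Unit × ℂ) := ⟨fun p => ((), p.1), by fun_prop⟩
  have hjS : ∀ e i, (j e).2 ≠ s i (j e).1 := by
    intro e i
    fin_cases i
    · simpa [s, j] using e.2.1
    · simpa [s, j] using e.2.2
  let r : C({p : Unit × ℂ | ∀ i, p.2 ≠ s i p.1}, PP) := ⟨fun p => ⟨p.1.2, by
    have h0 := p.2 0
    have h1 := p.2 1
    simp only [s] at h0 h1
    exact ⟨by simpa using h0, by simpa using h1⟩⟩, by fun_prop⟩
  refine fib_wang_succ s j hjS ?_ ?_ r ?_ c hc ?_ ?_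
  · intro i j hij b
    fin_cases i <;> fin_cases j <;> simp [s] at hij ⊢
  · intro a b h
    exact Subtype.ext (congrArg Prod.snd h)
  · intro x; rfl
  · exact pt_acyc _ (by rw [← push_dS, hc, map_zero])
  · intro i
    exact pt_acyc _ (by rw [← push_dS, dS_cap (wd_cocyc _), hc, map_zero, neg_zero, map_zero])

lemma steinberg (y : HT PP) : eps (KK x0 (KK x1 y)) = 0 := by
  obtain ⟨c, hc, rfl⟩ := HT_ex y
  unfold KK
  rw [hcap_cl, hcap_cl, eps_cl]
  obtain ⟨b, hb⟩ := PP_acyc (c 2) (congrFun hc 1)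
  change aug (dS (cap (wd x0) (cap (wd x1) (c 2)))) = 0
  have h1 := dS_cap (wd_cocyc x1) b
  have h0 := dS_cap (wd_cocyc x0) (cap (wd x1) b)
  rw [hb, eq_neg_iff_add_eq_zero.1 h1 |> eq_neg_of_add_eq_zero_right, map_neg, ← h0, dS_dS, map_zero]

lemma KK_negone (u v : C(X, ℂˣ)) (h : ∀ x, (u x : ℂ) = - v x) (y : HT X) : KK u y = KK v y := by
  have : u = ContinuousMap.const X (-1) * v := by
    ext x
    simp [h]
  rw [this, KK_mul, KK_const, zero_add]

lemma capL_comm2 (us : List C(X, ℂˣ)) (u v : C(X, ℂˣ)) (x : HT X) :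
    capL us (KK u (KK v x)) = KK u (KK v (capL us x)) := by
  induction us generalizing x with
  | nil => rfl
  | cons a us ih =>
    simp only [capL_cons]
    rw [KK_anti a u, KK_anti a v]; simp only [map_neg, neg_neg]; rw [ih]

lemma Null_arn (α β γ : C(X, ℂˣ)) (h : ∀ x, (α x : ℂ) + β x + γ x = 0) (x : HT X) :
    Null (KK (γ / α) (KK (β / α) x)) := by
  intro us
  rw [capL_comm2]
  generalize capL us x = z
  let f : C(X, PP) := ⟨fun x => ⟨- (((γ / α) x : ℂˣ) : ℂ), by simp, by
    have h1 : ((α x : ℂˣ) : ℂ) ≠ 0 := (α x).ne_zero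
    have h2 : ((β x : ℂˣ) : ℂ) ≠ 0 := (β x).ne_zero
    have := h x
    intro hh
    apply h2
    simp only [ContinuousMap.div_apply, Units.val_div_eq_div_val] at hh
    field_simp at hh
    linear_combination this + hh⟩, by fun_prop⟩
  rw [← KK_negone (x0.comp f) (γ / α) (fun x => rfl), ← KK_negone (x1.comp f) (β / α) (fun x => by
    have h1 : ((α x : ℂˣ) : ℂ) ≠ 0 := (α x).ne_zero
    have := h x
    change 1 - - (((γ / α) x : ℂˣ) : ℂ) = _
    simp only [ContinuousMap.div_apply, Units.val_div_eq_div_val]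
    field_simp
    linear_combination this)]
  rw [← eps_hpush f, hpush_KK, hpush_KK]
  exact steinberg _

end pairing
end TC

/-! Part 10 -/
set_option linter.unusedSectionVars false
namespace TC
section sgl
variable {X Y : Type} [TopologicalSpace X] [TopologicalSpace Y]

noncomputable def sg {k : ℕ} (c : Ch (k + 1) X) : Tot X := Pi.single (M := fun k => Ch (k + 1) X) k c

lemma sg_self {k : ℕ} (c : Ch (k + 1) X) : sg c k = c := Pi.single_eq_same _ _
lemma sg_ne {k i : ℕ} (c : Ch (k + 1) X) (h : i ≠ k) : sg c i = 0 := Pi.single_eq_of_ne h _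

lemma dd_sg {k : ℕ} (c : Ch (k + 1 + 1) X) : dd (sg c) = sg (dS c) := by
  funext i
  change dS (sg c (i + 1)) = _
  by_cases h : i = k
  · subst h; rw [sg_self, sg_self]
  · rw [sg_ne c (by omega), sg_ne _ h, map_zero]

lemma dd_sg0 (c : Ch 1 X) : dd (sg (k := 0) c) = 0 := by
  funext i
  change dS (sg c (i + 1)) = _
  rw [sg_ne c (by omega), map_zero]; rfl

lemma tcap_sg (η : Sing 2 X → ℤ) {k : ℕ} (c : Ch (k + 1 + 1) X) : tcap η (sg c) = sg (cap η c) := by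
  funext i
  change cap η (sg c (i + 1)) = _
  by_cases h : i = k
  · subst h; rw [sg_self, sg_self]
  · rw [sg_ne c (by omega), sg_ne _ h, map_zero]

lemma tpush_sg (f : C(X, Y)) {k : ℕ} (c : Ch (k + 1) X) : tpush f (sg c) = sg (push f c) := by
  funext i
  change push f (sg c i) = _
  by_cases h : i = k
  · subst h; rw [sg_self, sg_self]
  · rw [sg_ne c h, sg_ne _ h, map_zero]

lemma sg_dS {k : ℕ} {c : Ch (k + 1) X} (h : dS c = 0) : dd (sg c) = 0 := by
  cases k with
  | zero => exact dd_sg0 c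
  | succ k =>
    rw [dd_sg, h]
    funext i
    by_cases hi : i = k
    · subst hi; rw [sg_self]; rfl
    · rw [sg_ne _ hi]; rfl

lemma dS_of_sg {k : ℕ} {c : Ch (k + 1) X} (h : dd (sg c) = 0) (h0 : k = 0 → eps (cl _ h) = 0) : dS c = 0 := by
  cases k with
  | zero =>
    have := h0 rfl
    rw [eps_cl, sg_self] at this
    apply aug_injective
    rw [this, map_zero]
  | succ k =>
    rw [dd_sg] at h
    have := congrFun h k
    rwa [sg_self] at this

lemma VX_zero (l : List C(X, ℂˣ)) : VX (0 : HT X) l = 0 := by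
  cases l with
  | nil => rfl
  | cons a l => rw [VX_cons, map_zero, map_zero]

lemma cl_congr {c c' : Tot X} (h : c = c') (hc : dd c = 0) : cl c hc = cl c' (h ▸ hc) := by
  subst h; rfl

lemma VX_div (D : C(X, ℂˣ)) (x : HT X) (l : List C(X, ℂˣ)) : VX x (l.map (fun u => u / D)) = VX x l := by
  cases l with
  | nil => rfl
  | cons a l =>
    simp only [List.map_cons, VX_cons, List.map_map]
    congr 3
    apply List.map_congr_left
    intro u _
    simp
end sgl

section Ms

/-- normalised configurations -/
abbrev Ms (m : ℕ) : Type := {z : Fin (m + 2) → ℂ // Function.Injective z ∧ z 0 = 0 ∧ z 1 = 1}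

variable {m : ℕ}

lemma cco (i : Fin (m + 2)) : Continuous (fun z : Ms m => z.1 i) :=
  (continuous_apply i).comp continuous_subtype_val

abbrev Edge (m : ℕ) : Type := Fin (m + 2) × Fin (m + 2)

noncomputable def ed (p : Edge m) : C(Ms m, ℂˣ) :=
  mkU (fun z => if p.1 = p.2 then 1 else z.1 p.2 - z.1 p.1) (by
    split_ifs
    · fun_prop
    · exact (cco _).sub (cco _)) (fun z => by
    split_ifs with h
    · exact one_ne_zero
    · exact sub_ne_zero.2 (fun h' => h (z.2.1 h').symm))

lemma ed_apply {p : Edge m} (h : p.1 ≠ p.2) (z : Ms m) : (ed p z : ℂ) = z.1 p.2 - z.1 p.1 := by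
  change (if p.1 = p.2 then (1 : ℂ) else z.1 p.2 - z.1 p.1) = _
  rw [if_neg h]

lemma ed_self {p : Edge m} (h : p.1 = p.2) (z : Ms m) : (ed p z : ℂ) = 1 := by
  change (if p.1 = p.2 then (1 : ℂ) else z.1 p.2 - z.1 p.1) = _
  rw [if_pos h]

lemma ed_zero_one : ed (0, 1) = (1 : C(Ms m, ℂˣ)) := by
  ext z
  rw [ed_apply (by simp), z.2.2.1, z.2.2.2]
  simp

lemma VX_sym (x : HT (Ms m)) (l1 : List (Edge m)) (a b : Fin (m + 2)) (l2 : List (Edge m)) :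
    VX x ((l1 ++ (a, b) :: l2).map ed) = VX x ((l1 ++ (b, a) :: l2).map ed) := by
  let f : Bool × Edge m → C(Ms m, ℂˣ) := fun q => ed q.2
  let g : Bool × Edge m → C(Ms m, ℂˣ) := fun q => if q.1 then ed q.2.swap else ed q.2
  have h := VX_congr f g (by
    rintro ⟨q, e⟩ y
    cases q with
    | false => rfl
    | true =>
      simp only [f, g, if_true]
      by_cases he : e.1 = e.2
      · congr 2
        ext z
        rw [ed_self he, ed_self (by simpa using he.symm)]
      · apply KK_negone
        intro z
        rw [ed_apply he, ed_apply (by simpa using Ne.symm he)]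
        simp)
    (l1.map (fun e => (false, e)) ++ (true, (a, b)) :: l2.map (fun e => (false, e))) x
  simpa [f, g, Function.comp_def] using h

lemma VX_Arn (x : HT (Ms m)) : Arn (fun l : List (Edge m) => VX x (l.map ed)) where
  swap := by
    intro l1 a b l2
    simp only [List.map_append, List.map_cons]
    exact VX_swap x _ _ _ _
  sym := VX_sym x
  arn := by
    intro a b c R hab hbc hac
    simp only [List.map_cons]
    apply VX_arn
    apply Null_arn
    intro z
    rw [ed_apply hab, ed_apply hbc, ed_apply hac.symm]
    ring

noncomputable def fgt : C(Ms (m + 1), Ms m) :=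
  ⟨fun z => ⟨fun i => z.1 i.castSucc, fun _ _ h => Fin.castSucc_injective _ (z.2.1 h),
    z.2.2.1, z.2.2.2⟩, by
      apply Continuous.subtype_mk
      exact continuous_pi (fun i : Fin (m + 2) => cco i.castSucc)⟩

lemma ed_fgt (p : Edge m) : (ed p).comp fgt = ed (Prod.map Fin.castSucc Fin.castSucc p : Edge (m + 1)) := by
  ext z
  by_cases h : p.1 = p.2
  · rw [ContinuousMap.comp_apply, ed_self h, ed_self (by simpa using h)]
  · rw [ContinuousMap.comp_apply, ed_apply h, ed_apply (by simpa using h)]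
    rfl

lemma fe_castSucc (P : List (List (Fin (m + 2)))) :
    ((fe P).map ed).map (fun u => u.comp fgt) =
      (fe (P.map (List.map Fin.castSucc))).map (ed (m := m + 1)) := by
  rw [fe_map, List.map_map, List.map_map]
  apply List.map_congr_left
  intro p _
  exact ed_fgt p

lemma flatten_map_map {α β : Type} (f : α → β) (P : List (List α)) :
    (P.map (List.map f)).flatten = P.flatten.map f := List.map_flatten.symm

noncomputable def jM : C(Ms (m + 1), Ms m × ℂ) := ⟨fun z => (fgt z, z.1 (Fin.last _)), fgt.continuous.prodMk (cco _)⟩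

noncomputable def sM (i : Fin (m + 2)) : C(Ms m, ℂ) := ⟨fun z => z.1 i, cco i⟩

lemma jM_ne (z : Ms (m + 1)) (i : Fin (m + 2)) : (jM z).2 ≠ sM i (jM z).1 := by
  intro h
  exact (Fin.castSucc_lt_last i).ne (z.2.1 h.symm)

lemma snoc_inj {n : ℕ} {z : Fin n → ℂ} (hz : Function.Injective z) {w : ℂ} (hw : ∀ i, w ≠ z i) :
    Function.Injective (Fin.snoc z w : Fin (n + 1) → ℂ) := by
  intro a b
  induction a using Fin.lastCases with
  | last =>
    induction b using Fin.lastCases with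
    | last => simp
    | cast b => intro h; simp at h; exact absurd h (hw b)
  | cast a =>
    induction b using Fin.lastCases with
    | last => intro h; simp at h; exact absurd h.symm (hw a)
    | cast b => intro h; simp at h; rw [hz h]

noncomputable def rM : C({p : Ms m × ℂ | ∀ i, p.2 ≠ sM i p.1}, Ms (m + 1)) :=
  ⟨fun p => ⟨(Fin.snoc p.1.1.1 p.1.2 : Fin (m + 3) → ℂ), snoc_inj p.1.1.2.1 p.2, by
    have := Fin.snoc_castSucc (α := fun _ => ℂ) p.1.2 p.1.1.1 0
    rw [Fin.castSucc_zero] at this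
    rw [this, p.1.1.2.2.1], by
    have := Fin.snoc_castSucc (α := fun _ => ℂ) p.1.2 p.1.1.1 1
    rw [Fin.castSucc_one] at this
    rw [this, p.1.1.2.2.2]⟩, by
    apply Continuous.subtype_mk
    exact Continuous.finSnoc (A := fun _ => ℂ) (by fun_prop) (by fun_prop)⟩

lemma jM_rM (p : {p : Ms m × ℂ | ∀ i, p.2 ≠ sM i p.1}) : jM (rM p) = p := by
  apply Prod.ext
  · apply Subtype.ext
    funext i
    exact Fin.snoc_castSucc (α := fun _ => ℂ) p.1.2 p.1.1.1 i
  · exact Fin.snoc_last (α := fun _ => ℂ) p.1.2 p.1.1.1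

lemma jM_inj : Function.Injective (jM (m := m)) := by
  intro a b h
  apply Subtype.ext
  funext i
  induction i using Fin.lastCases with
  | last => exact congrArg Prod.snd h
  | cast i => exact congrFun (congrArg Subtype.val (congrArg Prod.fst h)) i

lemma uj_ed (i : Fin (m + 2)) : uj sM jM jM_ne i = ed (i.castSucc, Fin.last _) := by
  ext z
  rw [ed_apply (Fin.castSucc_lt_last i).ne]
  rfl

theorem detect : ∀ (m k : ℕ) (c : Ch (k + 1) (Ms m)) (hc : dd (sg c) = 0),
    (∀ P : List (List (Fin (m + 2))), P.flatten.Nodup → (fe P).length = k + 1 →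
      VX (cl _ hc) ((fe P).map ed) = 0) → ∃ b, c = dS b := by
  intro m
  induction m with
  | zero =>
    intro k c hc hV
    have h0 : dS c = 0 := dS_of_sg hc (by
      rintro rfl
      have := hV [[0, 1]] (by simp) (by simp [fe, pe])
      simpa [fe, pe, VX_cons, capL_nil] using this)
    have : Subsingleton (Ms 0) := ⟨fun a b => by
      apply Subtype.ext; funext i
      fin_cases i
      · exact a.2.2.1.trans b.2.2.1.symm
      · exact a.2.2.2.trans b.2.2.2.symm⟩
    let z0 : Ms 0 := ⟨fun i => i, by
      intro a b h
      fin_cases a <;> fin_cases b <;> simp at h ⊢, by simp, by simp⟩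
    exact contr_bd z0 ⟨fun x => x.1, by fun_prop⟩ (fun x => Subsingleton.elim _ _) (fun x => rfl) c h0
  | succ m ih =>
    intro k c hc hV
    have h0 : dS c = 0 := dS_of_sg hc (by
      rintro rfl
      have := hV [[0, 1]] (by simp) (by simp [fe, pe])
      simpa [fe, pe, VX_cons, capL_nil] using this)
    have hnd : ∀ P : List (List (Fin (m + 2))), P.flatten.Nodup →
        (P.map (List.map (Fin.castSucc (n := m + 2)))).flatten.Nodup := by
      intro P hP
      rw [flatten_map_map]
      exact hP.map (Fin.castSucc_injective _)
    have hfe : ∀ P : List (List (Fin (m + 2))),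
        (fe (P.map (List.map (Fin.castSucc (n := m + 2))))).length = (fe P).length := by
      intro P
      rw [fe_map, List.length_map]
    have hpc : dd (sg (push fgt c)) = 0 := by rw [← tpush_sg, ← tpush_dd, hc, map_zero]
    have hpx : hpush fgt (cl _ hc) = cl _ hpc := by
      rw [hpush_cl]; exact cl_congr (tpush_sg _ _) _
    have h1 : ∃ b, push fgt c = dS b := by
      refine ih k (push fgt c) hpc (fun P hP hl => ?_)
      rw [← hpx, VX_hpush, fe_castSucc]
      exact hV _ (hnd P hP) (by rw [hfe, hl])
    have hz : hpush fgt (cl _ hc) = 0 := by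
      rw [hpx, cl_eq_zero]
      obtain ⟨b, hb⟩ := h1
      exact ⟨sg b, by rw [dd_sg, hb]⟩
    cases k with
    | zero =>
      exact fib_wang_one sM jM jM_ne (fun i j hij b h => hij (b.2.1 h)) jM_inj rM jM_rM c h0 h1
    | succ k =>
      refine fib_wang_succ sM jM jM_ne (fun i j hij b h => hij (b.2.1 h)) jM_inj rM jM_rM c h0 h1 ?_
      intro i
      rw [uj_ed]
      set u : C(Ms (m + 1), ℂˣ) := ed (i.castSucc, Fin.last _) with hu
      have hk : hpush fgt (KK u (cl _ hc)) = hpush fgt (hcap (wd u) (wd_cocyc u) (cl _ hc)) := rfl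
      have hdc : dd (sg (push fgt (cap (wd u) c))) = 0 := by
        rw [← tpush_sg, ← tcap_sg, ← tpush_dd, dd_tcap (wd_cocyc u), hc, map_zero, neg_zero, map_zero]
      have hdx : hpush fgt (KK u (cl _ hc)) = cl _ hdc := by
        rw [hk, hcap_cl, hpush_cl]
        refine cl_congr ?_ _
        rw [tcap_sg, tpush_sg]
      refine ih k (push fgt (cap (wd u) c)) hdc (fun P hP hl => ?_)
      rw [← hdx, VX_hpush, fe_castSucc]
      have hQ := hnd P hP
      have hQl := hfe P
      set Q := P.map (List.map (Fin.castSucc (n := m + 2))) with hQdef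
      have e1 : VX (cl _ hc) (((0, 1) :: fe Q).map ed) = 0 := by
        have : ((0, 1) :: fe Q).map (ed (m := m + 1)) =
            (((0, 1) :: fe P).map (ed (m := m))).map (fun u => u.comp fgt) := by
          rw [List.map_cons, List.map_cons, List.map_cons, fe_castSucc, ed_fgt]
          rfl
        rw [this, ← VX_hpush, hz, VX_zero]
      have e2 : VX (cl _ hc) (((i.castSucc, Fin.last _) :: fe Q).map ed) = 0 := by
        have s := VX_sym (cl _ hc) [] i.castSucc (Fin.last _) (fe Q)
        rw [List.nil_append, List.nil_append] at s
        rw [s]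
        refine new_edge (VX_Arn (cl _ hc)) (Fin.last _) i.castSucc (Fin.castSucc_lt_last i).ne' Q hQ ?_ ?_
        · rw [hQdef, flatten_map_map, List.mem_map]
          rintro ⟨a, _, ha⟩
          exact (Fin.castSucc_lt_last a).ne ha
        · intro P' hP' hl'
          exact hV P' hP' (by rw [hl', hQl, hl])
      have hne : (fe Q).map (ed (m := m + 1)) ≠ [] := by
        intro h
        have := congrArg List.length h
        rw [List.length_map, hQl, hl] at this
        simp at this
      obtain ⟨u0, us, hus⟩ := List.exists_cons_of_ne_nil hne
      rw [List.map_cons, ed_zero_one, hus] at e1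
      rw [List.map_cons, ← hu, hus] at e2
      rw [hus, VX_KK, e1, e2, sub_zero]

/-! ### the action -/

noncomputable def actf (σ : Equiv.Perm (Fin (m + 2))) : C(Ms m, Ms m) :=
  ⟨fun z => ⟨fun i => (z.1 (σ i) - z.1 (σ 0)) / (z.1 (σ 1) - z.1 (σ 0)), by
    have h : z.1 (σ 1) - z.1 (σ 0) ≠ 0 := sub_ne_zero.2 (fun h => by
      have := σ.injective (z.2.1 h); simp at this)
    refine ⟨?_, by simp, div_self h⟩
    intro i j hij
    have := (div_left_inj' h).1 hij
    exact σ.injective (z.2.1 (sub_left_injective this))⟩, by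
    apply Continuous.subtype_mk
    apply continuous_pi
    intro i
    refine Continuous.div ((cco _).sub (cco _)) ((cco _).sub (cco _)) (fun z => ?_)
    exact sub_ne_zero.2 (fun h => by
      have := σ.injective (z.2.1 h); simp at this)⟩

lemma ed_actf (σ : Equiv.Perm (Fin (m + 2))) (p : Edge m) (hp : p.1 ≠ p.2) :
    (ed p).comp (actf σ) = ed (Prod.map σ σ p) / ed (σ 0, σ 1) := by
  ext z
  have h01 : σ 0 ≠ σ 1 := fun h => by have := σ.injective h; simp at this
  rw [ContinuousMap.comp_apply, ed_apply hp, ContinuousMap.div_apply, Units.val_div_eq_div_val,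
    ed_apply (by simpa using hp), ed_apply h01]
  change (z.1 (σ p.2) - z.1 (σ 0)) / (z.1 (σ 1) - z.1 (σ 0)) -
    (z.1 (σ p.1) - z.1 (σ 0)) / (z.1 (σ 1) - z.1 (σ 0)) = _
  rw [← sub_div]
  simp

lemma pe_loop {α : Type} : ∀ (l : List α) (_ : l.Nodup), ∀ e ∈ pe l, e.1 ≠ e.2
  | [], _, e, he => by simp [pe] at he
  | [_], _, e, he => by simp [pe] at he
  | a :: b :: l, h, e, he => by
    rw [pe, List.mem_cons] at he
    rcases he with rfl | he
    · intro hh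
      simp at hh
      simp [hh] at h
    · exact pe_loop (b :: l) (List.nodup_cons.1 h).2 e he

lemma fe_loop {α : Type} (P : List (List α)) (h : P.flatten.Nodup) : ∀ e ∈ fe P, e.1 ≠ e.2 := by
  intro e he
  rw [fe, List.mem_flatMap] at he
  obtain ⟨p, hp, he⟩ := he
  exact pe_loop p ((List.nodup_flatten.1 h).1 p hp) e he

theorem inv_bd {k : ℕ} (c : Ch (k + 2) (Ms m)) (hc : dS c = 0)
    (hinv : ∀ σ : Equiv.Perm (Fin (m + 2)), push (actf σ) c = c) : ∃ b, c = dS b := by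
  classical
  have hc' := sg_dS hc
  refine detect m (k + 1) c hc' (fun P hP hl => ?_)
  have hx : ∀ σ : Equiv.Perm (Fin (m + 2)), hpush (actf σ) (cl _ hc') = cl _ hc' := by
    intro σ
    rw [hpush_cl]
    refine cl_congr ?_ _
    rw [tpush_sg, hinv σ]
  generalize cl _ hc' = x at hx ⊢
  have hA := VX_Arn x
  let V : List (Edge m) → ℤ := fun l => if ∀ e ∈ l, e.1 ≠ e.2 then VX x (l.map ed) else 0
  have hVA : Arn V := by
    refine ⟨?_, ?_, ?_⟩
    · intro l1 a b l2
      have : (∀ e ∈ l1 ++ a :: b :: l2, e.1 ≠ e.2) ↔ (∀ e ∈ l1 ++ b :: a :: l2, e.1 ≠ e.2) := by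
        simp only [List.mem_append, List.mem_cons]
        constructor <;> (intro h e he; apply h; tauto)
      by_cases h : ∀ e ∈ l1 ++ a :: b :: l2, e.1 ≠ e.2
      · simp only [V]
        rw [if_pos h, if_pos (this.1 h)]
        exact hA.swap l1 a b l2
      · simp only [V]
        rw [if_neg h, if_neg (fun h' => h (this.2 h')), neg_zero]
    · intro l1 a b l2
      have : (∀ e ∈ l1 ++ (a, b) :: l2, e.1 ≠ e.2) ↔ (∀ e ∈ l1 ++ (b, a) :: l2, e.1 ≠ e.2) := by
        simp only [List.mem_append, List.mem_cons]
        constructor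
        · rintro h e (he | rfl | he)
          · exact h e (Or.inl he)
          · exact (h (a, b) (Or.inr (Or.inl rfl))).symm
          · exact h e (Or.inr (Or.inr he))
        · rintro h e (he | rfl | he)
          · exact h e (Or.inl he)
          · exact (h (b, a) (Or.inr (Or.inl rfl))).symm
          · exact h e (Or.inr (Or.inr he))
      by_cases h : ∀ e ∈ l1 ++ (a, b) :: l2, e.1 ≠ e.2
      · simp only [V]
        rw [if_pos h, if_pos (this.1 h)]
        exact hA.sym l1 a b l2
      · simp only [V]
        rw [if_neg h, if_neg (fun h' => h (this.2 h'))]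
    · intro a b c R hab hbc hac
      have key : ∀ e1 e2 : Edge m, e1.1 ≠ e1.2 → e2.1 ≠ e2.2 →
          ((∀ e ∈ e1 :: e2 :: R, e.1 ≠ e.2) ↔ ∀ e ∈ R, e.1 ≠ e.2) := by
        intro e1 e2 h1 h2
        simp only [List.forall_mem_cons]
        tauto
      simp only [V]
      simp only [key (a, b) (b, c) hab hbc, key (b, c) (c, a) hbc hac.symm, key (c, a) (a, b) hac.symm hab]
      by_cases h : ∀ e ∈ R, e.1 ≠ e.2
      · simp only [if_pos h]
        exact hA.arn a b c R hab hbc hac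
      · simp only [if_neg h]; rfl
  have hVi : ∀ (σ : Equiv.Perm (Fin (m + 2))) (l : List (Edge m)), V (l.map (Prod.map σ σ)) = V l := by
    intro σ l
    have : (∀ e ∈ l.map (Prod.map σ σ), e.1 ≠ e.2) ↔ ∀ e ∈ l, e.1 ≠ e.2 := by
      simp only [List.forall_mem_map, Prod.map_fst, Prod.map_snd, σ.injective.ne_iff]
    by_cases h : ∀ e ∈ l, e.1 ≠ e.2
    · simp only [V]
      rw [if_pos h, if_pos (this.2 h)]
      conv_rhs => rw [← hx σ, VX_hpush]
      rw [← VX_div (ed (σ 0, σ 1)), List.map_map, List.map_map, List.map_map]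
      congr 1
      apply List.map_congr_left
      intro p hp
      exact (ed_actf σ p (h p hp)).symm
    · simp only [V]
      rw [if_neg h, if_neg (fun h' => h (this.1 h'))]
  have := forest_zero hVA hVi P hP (by omega)
  simp only [V] at this
  rwa [if_pos (fe_loop P hP)] at this
end Ms
end TC

/-! Part 11 -/
namespace TC
set_option linter.unusedSectionVars false

section
variable {X Y Z : Type} [TopologicalSpace X] [TopologicalSpace Y] [TopologicalSpace Z]

lemma prism_push (H : C(Y × unitInterval, Z)) (f : C(X, Y)) {k : ℕ} (x : Ch k X) :
    prism H k (push f x) = prism (H.comp (f.prodMap (ContinuousMap.id _))) k x := by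
  have h := lin_ext (f := (prism H k).comp (push f))
    (g := prism (H.comp (f.prodMap (ContinuousMap.id _))) k) (fun σ => ?_) x
  · exact h
  · rw [LinearMap.comp_apply, push_single, ← real_iot, ← real_iot, prism_real, prism_real]
    rfl

lemma push_prism (H : C(X × unitInterval, Y)) (f : C(Y, Z)) {k : ℕ} (x : Ch k X) :
    push f (prism H k x) = prism (f.comp H) k x := by
  have h := lin_ext (f := (push f).comp (prism H k))
    (g := prism (f.comp H) k) (fun σ => ?_) x
  · exact h
  · rw [LinearMap.comp_apply, ← real_iot, prism_real, prism_real, push_real]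
    rfl

variable {G : Type} [Group G] [Fintype G]

/-- sum over the group -/
noncomputable def NN (act : G → C(X, X)) {k : ℕ} : Ch k X →ₗ[ℤ] Ch k X := ∑ g, push (act g)

lemma NN_apply (act : G → C(X, X)) {k : ℕ} (x : Ch k X) : NN act x = ∑ g, push (act g) x := by
  simp [NN]

lemma NN_dS (act : G → C(X, X)) {k : ℕ} (x : Ch (k + 1) X) : NN act (dS x) = dS (NN act x) := by
  simp only [NN_apply, push_dS, map_sum]

lemma NN_push {act : G → C(X, X)} (hmul : ∀ g h z, act g (act h z) = act (h * g) z) (h : G)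
    {k : ℕ} (x : Ch k X) : NN act (push (act h) x) = NN act x := by
  simp only [NN_apply, push_push]
  rw [← Equiv.sum_comp (Equiv.mulLeft h) (fun g => push (act g) x)]
  refine Finset.sum_congr rfl fun g _ => ?_
  have : (act g).comp (act h) = act (h * g) := by ext1 z; exact hmul g h z
  rw [this]; rfl

lemma push_NN {act : G → C(X, X)} (hmul : ∀ g h z, act g (act h z) = act (h * g) z) (h : G)
    {k : ℕ} (x : Ch k X) : push (act h) (NN act x) = NN act x := by
  simp only [NN_apply, map_sum, push_push]
  rw [← Equiv.sum_comp (Equiv.mulRight h) (fun g => push (act g) x)]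
  refine Finset.sum_congr rfl fun g _ => ?_
  have : (act h).comp (act g) = act (g * h) := by ext1 z; exact hmul h g z
  rw [this]; rfl

lemma p_NN {act : G → C(X, X)} (p : C(X, Y)) (hp : ∀ g z, p (act g z) = p z) {k : ℕ} (x : Ch k X) :
    push p (NN act x) = (Fintype.card G : ℤ) • push p x := by
  simp only [NN_apply, map_sum, push_push]
  have : ∀ g, p.comp (act g) = p := fun g => by ext1 z; exact hp g z
  simp [this]

lemma p_NN_zero {act : G → C(X, X)} (p : C(X, Y)) (hp : ∀ g z, p (act g z) = p z) {k : ℕ}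
    {x : Ch k X} (hx : NN act x = 0) : push p x = 0 := by
  have h := p_NN p hp x
  rw [hx, map_zero] at h
  have := smul_eq_zero.1 h.symm
  refine this.resolve_left ?_
  exact_mod_cast Fintype.card_ne_zero

lemma local_one [T1Space X] {act : G → C(X, X)} (hmul : ∀ g h z, act g (act h z) = act (h * g) z)
    (q : X) (H : C(X × unitInterval, X)) (h0 : ∀ z, ∃ g, H (z, 0) = act g q)
    (h1 : ∀ z, H (z, 1) = z) (he : ∀ g z t, H (act g z, t) = act g (H (z, t)))
    {j : ℕ} (a : Ch (j + 1) X) (ha : NN act (dS a) = 0) : ∃ e, NN act (a - dS e) = 0 := by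
  set ρ : C(X, X) := ⟨fun z => H (z, 0), by fun_prop⟩ with hρ
  have hpr : ∀ (k : ℕ) (x : Ch k X), NN act (prism H k x) = prism H k (NN act x) := by
    intro k x
    simp only [NN_apply, map_sum, push_prism, prism_push]
    refine Finset.sum_congr rfl fun g _ => ?_
    congr 2
    ext1 ⟨z, t⟩
    exact (he g z t).symm
  have hd := dS_prism H ρ (ContinuousMap.id X) (fun _ => rfl) h1 a
  let c1 : C(X, Unit) := ⟨fun _ => (), continuous_const⟩
  let c2 : C(Unit, X) := ⟨fun _ => q, continuous_const⟩
  have hfin : (Set.range fun g => act g q).Finite := Set.finite_range _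
  have hN : NN act (push ρ a) = NN act (push c2 (push c1 a)) := by
    have h := lin_ext (f := (NN act).comp (push ρ)) (g := (NN act).comp ((push c2).comp (push c1)))
      (fun σ => ?_) a
    · exact h
    · simp only [LinearMap.comp_apply, push_single]
      obtain ⟨g, hg⟩ := h0 (σ (vtx 0))
      have hc : ρ.comp σ = (act g).comp (c2.comp (c1.comp σ)) := by
        have hs : (Set.range (ρ.comp σ)).Subsingleton := by
          have hpc : IsPreconnected (Set.range (ρ.comp σ)) := isPreconnected_range (ρ.comp σ).continuous
          have hf : (Set.range (ρ.comp σ)).Finite := hfin.subset (by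
            rintro _ ⟨t, rfl⟩
            obtain ⟨g, hg⟩ := h0 (σ t)
            exact ⟨g, hg.symm⟩)
          by_contra hns
          rw [Set.not_subsingleton_iff] at hns
          exact hpc.infinite_of_nontrivial hns hf
        ext1 t
        exact (hs ⟨t, rfl⟩ ⟨vtx 0, rfl⟩).trans hg
      rw [hc, ← push_single (act g), NN_push hmul]
  have hz : dS (push c1 a) = 0 := by
    rw [← push_dS]
    exact p_NN_zero (act := act) c1 (fun _ _ => rfl) ha
  obtain ⟨b0, hb0⟩ := pt_acyc _ hz
  refine ⟨prism H (j + 1) a + push c2 b0, ?_⟩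
  rw [map_add, hd, push_id, ← push_dS, ← hb0]
  have e1 : a - (a - push ρ a - prism H j (dS a) + push c2 (push c1 a)) =
    push ρ a - push c2 (push c1 a) + prism H j (dS a) := by abel
  rw [e1, map_add, map_sub, hN, sub_self, hpr, ha, map_zero, add_zero]

lemma local_two {act : G → C(X, X)} (p : C(X, Y)) (hp : IsOpenQuotientMap p)
    (hfib : ∀ x y, p x = p y ↔ ∃ g, y = act g x)
    (q : X) (H : C(X × unitInterval, X)) (h0 : ∀ z, ∃ g, H (z, 0) = act g q)
    (h1 : ∀ z, H (z, 1) = z) (he : ∀ g z t, H (act g z, t) = act g (H (z, t)))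
    {j : ℕ} (d : Ch (j + 1) Y) (hd : dS d = 0) : ∃ f, d = dS f := by
  have hpa : ∀ g z, p (act g z) = p z := fun g z => ((hfib _ _).2 ⟨g, rfl⟩).symm
  let s := Function.surjInv hp.surjective
  have hs : ∀ y, p (s y) = y := Function.surjInv_eq hp.surjective
  let K : Y × unitInterval → Y := fun yt => p (H (s yt.1, yt.2))
  have hK : ∀ z t, K (p z, t) = p (H (z, t)) := by
    intro z t
    obtain ⟨g, hg⟩ := (hfib (s (p z)) z).1 (hs _)
    change p (H (s (p z), t)) = _
    conv_rhs => rw [hg, he, hpa]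
  have hc : Continuous K := by
    rw [← (hp.prodMap IsOpenQuotientMap.id).continuous_comp_iff]
    have : K ∘ Prod.map p id = fun zt : X × unitInterval => p (H zt) := by
      funext ⟨z, t⟩; exact hK z t
    rw [this]; fun_prop
  refine contr_bd (p q) ⟨K, hc⟩ ?_ ?_ d hd
  · intro y
    obtain ⟨g, hg⟩ := h0 (s y)
    change p (H (s y, 0)) = _
    rw [hg, hpa]
  · intro y
    change p (H (s y, 1)) = _
    rw [h1, hs]

lemma local_both [T1Space X] {act : G → C(X, X)}
    (hmul : ∀ g h z, act g (act h z) = act (h * g) z)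
    (p : C(X, Y)) (hp : IsOpenQuotientMap p)
    (hfib : ∀ x y, p x = p y ↔ ∃ g, y = act g x)
    (q : X) (H : C(X × unitInterval, X)) (h0 : ∀ z, ∃ g, H (z, 0) = act g q)
    (h1 : ∀ z, H (z, 1) = z) (he : ∀ g z t, H (act g z, t) = act g (H (z, t)))
    {j : ℕ} (a : Ch (j + 1) X) (ha : NN act (dS a) = 0) (d : Ch (j + 2) Y)
    (hd : push p a = dS d) :
    ∃ e f, NN act (a - dS e) = 0 ∧ dS f = push p e - d := by
  have hpa : ∀ g z, p (act g z) = p z := fun g z => ((hfib _ _).2 ⟨g, rfl⟩).symm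
  obtain ⟨e, he'⟩ := local_one hmul q H h0 h1 he a ha
  have h := p_NN_zero p hpa he'
  rw [map_sub, sub_eq_zero, push_dS, hd] at h
  obtain ⟨f, hf⟩ := local_two p hp hfib q H h0 h1 he (push p e - d) (by rw [map_sub, h, sub_self])
  exact ⟨e, f, he', hf.symm⟩

/-- a set over which the orbit projection is equivariantly contractible to an orbit -/
def Good (act : G → C(X, X)) (p : C(X, Y)) (V : Set Y) : Prop :=
  IsOpen V ∧ ∃ (q : p ⁻¹' V) (H : C((p ⁻¹' V) × unitInterval, p ⁻¹' V)),
    (∀ z, ∃ g, (H (z, 0)).1 = act g q.1) ∧ (∀ z, H (z, 1) = z) ∧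
    ∀ g z z' t, z'.1 = act g z.1 → (H (z', t)).1 = act g (H (z, t)).1

lemma local_good [T1Space X] {act : G → C(X, X)}
    (hmul : ∀ g h z, act g (act h z) = act (h * g) z)
    (p : C(X, Y)) (hp : IsOpenQuotientMap p)
    (hfib : ∀ x y, p x = p y ↔ ∃ g, y = act g x) {V : Set Y} (hV : Good act p V)
    {j : ℕ} {a : Ch (j + 1) X} (haV : a ∈ inS (p ⁻¹' V) (j + 1)) (ha : NN act (dS a) = 0)
    {d : Ch (j + 2) Y} (hdV : d ∈ inS V (j + 2)) (hd : push p a = dS d) :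
    ∃ e f, e ∈ inS (p ⁻¹' V) (j + 2) ∧ f ∈ inS V (j + 3) ∧
      NN act (a - dS e) = 0 ∧ dS f = push p e - d := by
  have hpa : ∀ g z, p (act g z) = p z := fun g z => ((hfib _ _).2 ⟨g, rfl⟩).symm
  obtain ⟨hVo, q, H, h0, h1, he⟩ := hV
  obtain ⟨a', rfl⟩ := exists_incl haV
  obtain ⟨d', rfl⟩ := exists_incl hdV
  let act' : G → C(p ⁻¹' V, p ⁻¹' V) := fun g => ⟨fun z => ⟨act g z.1, by
    have := z.2; simp only [Set.mem_preimage, hpa] at this ⊢; exact this⟩, by fun_prop⟩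
  let p' : C(p ⁻¹' V, V) := ⟨fun z => ⟨p z.1, z.2⟩, by fun_prop⟩
  have hN : ∀ {k : ℕ} (x : Ch k (p ⁻¹' V)), push (incl _) (NN act' x) = NN act (push (incl _) x) := by
    intro k x
    simp only [NN_apply, map_sum, push_push]
    rfl
  have hpp : ∀ {k : ℕ} (x : Ch k (p ⁻¹' V)), push (incl _) (push p' x) = push p (push (incl _) x) := by
    intro k x
    simp only [push_push]
    rfl
  have hp' : IsOpenQuotientMap p' := by
    refine ⟨?_, p'.continuous, ?_⟩
    · rintro ⟨y, hy⟩
      obtain ⟨x, rfl⟩ := hp.surjective y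
      exact ⟨⟨x, hy⟩, rfl⟩
    · exact hp.isOpenMap.restrictPreimage V
  obtain ⟨e, f, h2, h3⟩ := local_both (act := act') (fun g h z => Subtype.ext (hmul g h z.1)) p' hp'
    (fun x y => by
      constructor
      · intro h
        obtain ⟨g, hg⟩ := (hfib x.1 y.1).1 (congrArg Subtype.val h)
        exact ⟨g, Subtype.ext hg⟩
      · rintro ⟨g, rfl⟩
        exact Subtype.ext (hpa _ _).symm) q H (fun z => by
        obtain ⟨g, hg⟩ := h0 z
        exact ⟨g, Subtype.ext hg⟩) h1 (fun g z t => Subtype.ext (he g z _ t rfl)) a'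
        (by
          apply incl_injective
          rw [hN, push_dS, ha, map_zero]) d'
        (by
          apply incl_injective
          rw [hpp, hd, push_dS])
  refine ⟨push (incl _) e, push (incl _) f, push_incl_mem _, push_incl_mem _, ?_, ?_⟩
  · rw [← push_dS, ← map_sub, ← hN, h2, map_zero]
  · rw [← push_dS, h3, map_sub, hpp]
end
end TC

/-! Part 12 -/
namespace TC
set_option linter.unusedSectionVars false

section
variable {X Y : Type} [TopologicalSpace X] [PseudoMetricSpace Y]
variable {G : Type} [Group G] [Fintype G]

/-- pointed open covers -/
def PCov (U : Y → Set Y) : Prop := ∀ y, IsOpen (U y) ∧ y ∈ U y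

/-- approximate transfers in a given degree -/
def Transf (act : G → C(X, X)) (p : C(X, Y)) (j : ℕ) : Prop :=
  ∀ V : Y → Set Y, PCov V → ∃ U : Y → Set Y, PCov U ∧
    ∃ (τ : Ch (j + 1) Y →ₗ[ℤ] Ch (j + 1) X) (D : Ch (j + 1) Y →ₗ[ℤ] Ch (j + 1 + 1) Y),
      (∀ σ : Sing (j + 1) Y, cov U (Set.range σ) → ∃ y, Set.range σ ⊆ V y ∧
        τ (Finsupp.single σ 1) ∈ inS (p ⁻¹' V y) (j + 1) ∧
        D (Finsupp.single σ 1) ∈ inS (V y) (j + 1 + 1)) ∧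
      ∀ x ∈ sm (cov U) (j + 1), dS x = 0 → NN act (dS (τ x)) = 0 ∧ push p (τ x) - dS (D x) = x

lemma transf_zero {act : G → C(X, X)} (p : C(X, Y)) (hp : Function.Surjective p) :
    Transf act p 0 := by
  intro V hV
  refine ⟨V, hV, mp (fun σ => ContinuousMap.const _ (Function.surjInv hp (σ (vtx 0)))), 0, ?_, ?_⟩
  · rintro σ ⟨y, hy⟩
    refine ⟨y, hy, ?_, by simp⟩
    rw [mp_single]
    refine mem_sup_single _ ?_
    rintro _ ⟨t, rfl⟩
    change p (Function.surjInv hp _) ∈ V y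
    rw [Function.surjInv_eq hp]
    exact hy ⟨_, rfl⟩
  · intro x _ hx
    have h : push p (mp (fun σ : Sing 1 Y =>
        ContinuousMap.const (Del 1) (Function.surjInv hp (σ (vtx 0)))) x) = x := by
      refine lin_ext (f := (push p).comp (mp _)) (g := LinearMap.id) (fun σ => ?_) x
      simp only [LinearMap.comp_apply, mp_single, LinearMap.id_apply, push_single]
      congr 1
      ext1 t
      change p (Function.surjInv hp _) = _
      rw [Function.surjInv_eq hp]
      have : Subsingleton (Del 1) := inferInstance
      rw [Subsingleton.elim t]
    constructor
    · have : dS (mp (fun σ : Sing 1 Y =>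
        ContinuousMap.const (Del 1) (Function.surjInv hp (σ (vtx 0)))) x) = 0 := by
        apply push_inj0 p
        rw [push_dS, h, hx]
      rw [this, map_zero]
    · simpa using h

lemma transf_succ [Nonempty Y] [T1Space X] {act : G → C(X, X)}
    (hmul : ∀ g h z, act g (act h z) = act (h * g) z)
    (p : C(X, Y)) (hp : IsOpenQuotientMap p)
    (hfib : ∀ x y, p x = p y ↔ ∃ g, y = act g x)
    (hgood : ∀ y V, IsOpen V → y ∈ V → ∃ V' ⊆ V, y ∈ V' ∧ Good act p V') {j : ℕ}
    (ih : Transf act p j) : Transf act p (j + 1) := by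
  intro V hV
  choose W hWV hyW hW using fun y => hgood y (V y) (hV y).1 (hV y).2
  choose r hr hrW using fun y => Metric.isOpen_iff.1 (hW y).1 y (hyW y)
  have hr5 : ∀ y, 0 < r y / 5 := fun y => by have := hr y; positivity
  obtain ⟨U, hU, τ, D, hs, hcyc⟩ := ih (fun y => Metric.ball y (r y / 5))
    (fun y => ⟨Metric.isOpen_ball, Metric.mem_ball_self (hr5 y)⟩)
  let U' : Y → Set Y := fun y => U y ∩ Metric.ball y (r y / 5)
  have hUU : ∀ A, cov U' A → cov U A := by
    rintro A ⟨i, hi⟩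
    exact ⟨i, hi.trans Set.inter_subset_left⟩
  have key : ∀ σ : Sing (j + 1 + 1) Y, cov U' (Set.range σ) → ∃ y e f,
      Set.range σ ⊆ V y ∧ e ∈ inS (p ⁻¹' V y) (j + 1 + 1) ∧ f ∈ inS (V y) (j + 1 + 1 + 1) ∧
      NN act (τ (dS (Finsupp.single σ 1)) - dS e) = 0 ∧
      dS f = push p e - (Finsupp.single σ 1 + D (dS (Finsupp.single σ 1))) := by
    rintro σ ⟨y0, hy0⟩
    have hface : ∀ i : Fin (j + 1 + 1), Set.range (pull i.succAbove σ) ⊆ Set.range σ := by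
      rintro i _ ⟨t, rfl⟩
      exact ⟨_, rfl⟩
    choose c hc1 hc2 hc3 using fun i : Fin (j + 1 + 1) => hs (pull i.succAbove σ)
      ⟨y0, (hface i).trans (hy0.trans Set.inter_subset_left)⟩
    let C : Option (Fin (j + 1 + 1)) → Y := fun o => o.elim y0 c
    have hpt : ∀ o, ∃ w, w ∈ Metric.ball (C o) (r (C o) / 5) ∧ w ∈ Metric.ball y0 (r y0 / 5) := by
      intro o
      cases o with
      | none => exact ⟨σ (vtx 0), (hy0 ⟨_, rfl⟩).2, (hy0 ⟨_, rfl⟩).2⟩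
      | some i => exact ⟨pull i.succAbove σ (vtx 0), hc1 i ⟨_, rfl⟩, (hy0 (hface i ⟨_, rfl⟩)).2⟩
    obtain ⟨o, ho⟩ := Finite.exists_max (fun o => r (C o))
    have hsub : ∀ o', Metric.ball (C o') (r (C o') / 5) ⊆ W (C o) := by
      intro o' w hw
      apply hrW
      obtain ⟨w1, h1, h2⟩ := hpt o'
      obtain ⟨w2, h3, h4⟩ := hpt o
      rw [Metric.mem_ball] at *
      have a1 := ho o'
      have a2 : r y0 ≤ r (C o) := ho none
      have t1 := dist_triangle w (C o') (C o)
      have t2 := dist_triangle_left (C o') (C o) w1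
      have t3 := dist_triangle w1 y0 (C o)
      have t4 := dist_triangle_left y0 (C o) w2
      linarith
    have ha : τ (dS (Finsupp.single σ 1)) ∈ inS (p ⁻¹' W (C o)) (j + 1) := by
      rw [dS, dG_single, map_sum]
      refine Submodule.sum_mem _ fun i _ => ?_
      rw [map_smul]
      exact Submodule.smul_mem _ _ (inS_mono (Set.preimage_mono (hsub (some i))) (hc2 i))
    have hd : Finsupp.single σ 1 + D (dS (Finsupp.single σ 1)) ∈ inS (W (C o)) (j + 1 + 1) := by
      refine Submodule.add_mem _ (mem_sup_single _
        ((hy0.trans Set.inter_subset_right).trans (hsub none))) ?_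
      rw [dS, dG_single, map_sum]
      refine Submodule.sum_mem _ fun i _ => ?_
      rw [map_smul]
      exact Submodule.smul_mem _ _ (inS_mono (hsub (some i)) (hc3 i))
    have hsm : dS (Finsupp.single σ (1 : ℤ)) ∈ sm (cov U) (j + 1) :=
      dS_sm (Dn_cov U) (mem_sup_single _ ⟨y0, hy0.trans Set.inter_subset_left⟩)
    obtain ⟨q1, q2⟩ := hcyc _ hsm (dS_dS _)
    obtain ⟨e, f, h1, h2, h3, h4⟩ := local_good hmul p hp hfib (hW (C o)) ha q1 hd (by
      rw [map_add, ← q2]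
      rw [q2]
      rw [← sub_eq_iff_eq_add]; exact q2)
    exact ⟨C o, e, f, ((hy0.trans Set.inter_subset_right).trans (hsub none)).trans (hWV _),
      inS_mono (Set.preimage_mono (hWV _)) h1, inS_mono (hWV _) h2, h3, h4⟩
  classical
  choose! c e f k1 k2 k3 k4 k5 using key
  refine ⟨U', fun y => ⟨(hU y).1.inter Metric.isOpen_ball, (hU y).2, Metric.mem_ball_self (hr5 y)⟩,
    ext e, ext f, ?_, ?_⟩
  · intro σ hσ
    refine ⟨c σ, k1 σ hσ, ?_, ?_⟩
    · rw [ext_single, one_smul]; exact k2 σ hσ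
    · rw [ext_single, one_smul]; exact k3 σ hσ
  · intro x hx hdx
    have e1 : NN act (τ (dS x) - dS (ext e x)) = 0 := by
      have := sup_map hx ((NN act).comp (τ.comp dS - dS.comp (ext e))) ⊥ (fun σ hσ => by
        rw [Submodule.mem_bot]
        simp only [LinearMap.comp_apply, LinearMap.sub_apply, ext_single, one_smul]
        exact k4 σ hσ)
      rw [Submodule.mem_bot] at this
      exact this
    have e2 : dS (ext f x) - (push p (ext e x) - (x + D (dS x))) = 0 := by
      have := sup_map hx (dS.comp (ext f) - ((push p).comp (ext e) - (LinearMap.id + D.comp dS))) ⊥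
        (fun σ hσ => by
        rw [Submodule.mem_bot]
        simp only [LinearMap.comp_apply, LinearMap.sub_apply, ext_single, one_smul,
          LinearMap.add_apply, LinearMap.id_apply]
        rw [k5 σ hσ, sub_self])
      rw [Submodule.mem_bot] at this
      exact this
    rw [hdx, map_zero] at e1 e2
    rw [zero_sub, map_neg, neg_eq_zero] at e1
    refine ⟨e1, ?_⟩
    rw [add_zero, sub_eq_zero] at e2
    rw [e2]; abel

theorem transfer [T1Space X] {act : G → C(X, X)}
    (hmul : ∀ g h z, act g (act h z) = act (h * g) z)
    (p : C(X, Y)) (hp : IsOpenQuotientMap p)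
    (hfib : ∀ x y, p x = p y ↔ ∃ g, y = act g x)
    (hgood : ∀ y V, IsOpen V → y ∈ V → ∃ V' ⊆ V, y ∈ V' ∧ Good act p V') [Nonempty Y] {j : ℕ}
    (hinv : ∀ c : Ch (j + 1) X, dS c = 0 → (∀ g, push (act g) c = c) → ∃ b, c = dS b)
    (z : Ch (j + 1) Y) (hz : dS z = 0) : ∃ b, (Fintype.card G : ℤ) • z = dS b := by
  have hpa : ∀ g z, p (act g z) = p z := fun g z => ((hfib _ _).2 ⟨g, rfl⟩).symm
  have hT : Transf act p j := by
    clear hinv hz z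
    induction j with
    | zero => exact transf_zero p hp.surjective
    | succ j ih => exact transf_succ hmul p hp hfib hgood ih
  obtain ⟨U, hU, τ, D, -, hcyc⟩ := hT (fun _ => Set.univ) (fun _ => ⟨isOpen_univ, trivial⟩)
  obtain ⟨e, he⟩ := SS U (fun y => (hU y).1) (fun y => ⟨y, (hU y).2⟩) z (by rw [hz]; exact Submodule.zero_mem _)
  obtain ⟨h1, h2⟩ := hcyc _ he (by rw [map_sub, hz, dS_dS, sub_zero])
  obtain ⟨b, hb⟩ := hinv (NN act (τ (z - dS e))) (by rw [← NN_dS, h1]) (fun g => push_NN hmul g _)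
  have h3 := p_NN p hpa (τ (z - dS e))
  rw [hb, push_dS, sub_eq_iff_eq_add.1 h2] at h3
  refine ⟨push p b + (Fintype.card G : ℤ) • (e - D (z - dS e)), ?_⟩
  rw [map_add, h3, map_smul, ← smul_add]
  congr 1
  rw [map_sub (dS : Ch (j + 1 + 1) Y →ₗ[ℤ] Ch (j + 1) Y) e]
  generalize dS (D (z - dS e)) = u
  abel
end
end TC

/-! Part 13 -/
namespace TC
set_option linter.unusedSectionVars false

section
variable {m : ℕ}

/-- affine equivalence of tuples -/
def AE (w w' : Fin (m + 2) → ℂ) : Prop := ∃ a b : ℂ, b ≠ 0 ∧ ∀ i, w' i = b * w i + a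

/-- normalisation of tuples -/
noncomputable def nf (w : Fin (m + 2) → ℂ) : Fin (m + 2) → ℂ := fun i => (w i - w 0) / (w 1 - w 0)

lemma nf_AE {w w' : Fin (m + 2) → ℂ} (h : AE w w') : nf w' = nf w := by
  obtain ⟨a, b, hb, h⟩ := h
  funext i
  have e : ∀ j, w' j - w' 0 = b * (w j - w 0) := fun j => by rw [h, h]; ring
  simp only [nf, e]
  exact mul_div_mul_left _ _ hb

lemma AE_nf {w w' : Fin (m + 2) → ℂ} (h1 : w 1 ≠ w 0) (h2 : w' 1 ≠ w' 0) (h : nf w = nf w') :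
    AE w w' := by
  have h1' := sub_ne_zero.2 h1
  have h2' := sub_ne_zero.2 h2
  refine ⟨w' 0 - (w' 1 - w' 0) / (w 1 - w 0) * w 0, (w' 1 - w' 0) / (w 1 - w 0),
    div_ne_zero h2' h1', fun i => ?_⟩
  have := congrFun h i
  simp only [nf] at this
  field_simp at this ⊢
  linear_combination - this

lemma AE_nf_self {w : Fin (m + 2) → ℂ} (h1 : w 1 ≠ w 0) : AE w (nf w) := by
  have h1' := sub_ne_zero.2 h1
  refine ⟨- w 0 / (w 1 - w 0), (w 1 - w 0)⁻¹, inv_ne_zero h1', fun i => ?_⟩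
  simp only [nf]; ring

lemma AE.inj {w w' : Fin (m + 2) → ℂ} (h : AE w w') (hw : Function.Injective w) :
    Function.Injective w' := by
  obtain ⟨a, b, hb, h⟩ := h
  intro i j hij
  rw [h, h] at hij
  exact hw (mul_left_cancel₀ hb (add_right_cancel hij))

lemma inj_ne {w : Fin (m + 2) → ℂ} (hw : Function.Injective w) : w 1 ≠ w 0 := fun h => by
  have := hw h; simp at this

lemma nf_ms (z : Ms m) : nf z.1 = z.1 := by
  funext i
  simp [nf, z.2.2.1, z.2.2.2]

lemma ms_ne (z : Ms m) : z.1 1 ≠ z.1 0 := inj_ne z.2.1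

noncomputable def nr (w : Fin (m + 2) → ℂ) (hw : Function.Injective w) : Ms m :=
  ⟨nf w, (AE_nf_self (inj_ne hw)).inj hw, by simp [nf], by
    simp only [nf]; exact div_self (sub_ne_zero.2 (inj_ne hw))⟩

lemma actf_val (g : Equiv.Perm (Fin (m + 2))) (z : Ms m) : (actf g z).1 = nf (z.1 ∘ g) := rfl

lemma AE.comp {w w' : Fin (m + 2) → ℂ} (h : AE w w') (g : Equiv.Perm (Fin (m + 2))) :
    AE (w ∘ g) (w' ∘ g) := by
  obtain ⟨a, b, hb, h⟩ := h
  exact ⟨a, b, hb, fun i => h (g i)⟩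

lemma nf_nf_comp {w : Fin (m + 2) → ℂ} (h1 : w 1 ≠ w 0) (g : Equiv.Perm (Fin (m + 2))) :
    nf (nf w ∘ g) = nf (w ∘ g) := nf_AE ((AE_nf_self h1).comp g)

lemma actf_mul (g h : Equiv.Perm (Fin (m + 2))) (z : Ms m) :
    actf g (actf h z) = actf (h * g) z := by
  apply Subtype.ext
  rw [actf_val, actf_val, actf_val, nf_nf_comp]
  · rfl
  · exact inj_ne (z.2.1.comp h.injective)

lemma actf_one (z : Ms m) : actf 1 z = z := by
  apply Subtype.ext
  rw [actf_val]
  exact nf_ms z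

/-! the normalised slice -/
noncomputable def mn (w : Fin (m + 2) → ℂ) : ℂ := (∑ i, w i) / ((m : ℂ) + 2)
noncomputable def ell (v w : Fin (m + 2) → ℂ) : ℂ := ∑ i, w i * (starRingEnd ℂ) (v i)
noncomputable def hat (v w : Fin (m + 2) → ℂ) : Fin (m + 2) → ℂ := fun i => (w i - mn w) / ell v w
def MZ (v : Fin (m + 2) → ℂ) : Prop := ∑ i, v i = 0 ∧ ell v v = 1

lemma m2 : ((m : ℂ) + 2) ≠ 0 := by exact_mod_cast (by omega : m + 2 ≠ 0)

lemma sum_aff (w : Fin (m + 2) → ℂ) (a b : ℂ) :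
    ∑ i, (b * w i + a) = b * (∑ i, w i) + ((m : ℂ) + 2) * a := by
  rw [Finset.sum_add_distrib, Finset.mul_sum]; simp

lemma mn_AE {w w' : Fin (m + 2) → ℂ} {a b : ℂ} (h : ∀ i, w' i = b * w i + a) :
    mn w' = b * mn w + a := by
  have := m2 (m := m)
  simp only [mn, h, sum_aff]
  field_simp

lemma ell_AE {v w w' : Fin (m + 2) → ℂ} (hv : MZ v) {a b : ℂ} (h : ∀ i, w' i = b * w i + a) :
    ell v w' = b * ell v w := by
  have h0 : ∑ i, (starRingEnd ℂ) (v i) = 0 := by rw [← map_sum, hv.1, map_zero]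
  simp only [ell, h, add_mul, Finset.sum_add_distrib, ← Finset.mul_sum, h0, mul_assoc]
  simp

lemma hat_AE {v w w' : Fin (m + 2) → ℂ} (hv : MZ v) (h : AE w w') : hat v w' = hat v w := by
  obtain ⟨a, b, hb, h⟩ := h
  funext i
  simp only [hat, mn_AE h, ell_AE hv h, h i]
  rw [show b * w i + a - (b * mn w + a) = b * (w i - mn w) by ring]
  exact mul_div_mul_left _ _ hb

lemma ell_ne_AE {v w w' : Fin (m + 2) → ℂ} (hv : MZ v) (h : AE w w') (h0 : ell v w ≠ 0) :
    ell v w' ≠ 0 := by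
  obtain ⟨a, b, hb, h⟩ := h
  rw [ell_AE hv h]; exact mul_ne_zero hb h0

lemma ell_perm (v w : Fin (m + 2) → ℂ) (g : Equiv.Perm (Fin (m + 2))) :
    ell (v ∘ g) (w ∘ g) = ell v w :=
  Equiv.sum_comp g (fun i => w i * (starRingEnd ℂ) (v i))

lemma mn_perm (w : Fin (m + 2) → ℂ) (g : Equiv.Perm (Fin (m + 2))) : mn (w ∘ g) = mn w := by
  simp only [mn]
  rw [← Equiv.sum_comp g w]; rfl

lemma hat_perm (v w : Fin (m + 2) → ℂ) (g : Equiv.Perm (Fin (m + 2))) :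
    hat (v ∘ g) (w ∘ g) = hat v w ∘ g := by
  funext i
  simp only [hat, ell_perm, mn_perm, Function.comp_apply]

lemma MZ.perm {v : Fin (m + 2) → ℂ} (hv : MZ v) (g : Equiv.Perm (Fin (m + 2))) : MZ (v ∘ g) := by
  refine ⟨?_, by rw [ell_perm, hv.2]⟩
  rw [← hv.1]; exact Equiv.sum_comp g v

lemma AE_hat {v w : Fin (m + 2) → ℂ} (h : ell v w ≠ 0) : AE w (hat v w) :=
  ⟨- mn w / ell v w, (ell v w)⁻¹, inv_ne_zero h, fun i => by simp only [hat]; ring⟩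

lemma ell_hat {v w : Fin (m + 2) → ℂ} (hv : MZ v) (h : ell v w ≠ 0) : ell v (hat v w) = 1 := by
  rw [ell_AE (w := w) (a := - mn w / ell v w) (b := (ell v w)⁻¹) hv
    (fun i => by simp only [hat]; ring), inv_mul_cancel₀ h]

lemma sum_hat {v w : Fin (m + 2) → ℂ} : ∑ i, hat v w i = 0 := by
  have := m2 (m := m)
  simp only [hat]
  rw [← Finset.sum_div, Finset.sum_sub_distrib]
  simp only [mn, Finset.sum_const, Finset.card_univ, Fintype.card_fin, nsmul_eq_mul]
  push_cast
  rw [mul_div_cancel₀ _ this]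
  simp

/-- straight line path in the slice -/
noncomputable def up (v w : Fin (m + 2) → ℂ) (t : unitInterval) : Fin (m + 2) → ℂ :=
  fun i => (1 - ((t : ℝ) : ℂ)) * v i + ((t : ℝ) : ℂ) * hat v w i

lemma up_zero (v w : Fin (m + 2) → ℂ) : up v w 0 = v := by funext i; simp [up]
lemma up_one (v w : Fin (m + 2) → ℂ) : up v w 1 = hat v w := by funext i; simp [up]

lemma ell_up {v w : Fin (m + 2) → ℂ} (hv : MZ v) (h : ell v w ≠ 0) (t : unitInterval) :
    ell v (up v w t) = 1 := by
  have h1 := hv.2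
  have h2 := ell_hat hv h
  simp only [ell] at h1 h2 ⊢
  simp only [up, add_mul, Finset.sum_add_distrib, mul_assoc, ← Finset.mul_sum, h1, h2]
  ring

lemma sum_up {v w : Fin (m + 2) → ℂ} (hv : MZ v) (t : unitInterval) :
    ∑ i, up v w t i = 0 := by
  simp only [up, Finset.sum_add_distrib, ← Finset.mul_sum, hv.1, sum_hat]
  ring

lemma hat_up {v w : Fin (m + 2) → ℂ} (hv : MZ v) (h : ell v w ≠ 0) (t : unitInterval) :
    hat v (up v w t) = up v w t := by
  funext i
  simp [hat, ell_up hv h, mn, sum_up hv]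

lemma up_dist {v w : Fin (m + 2) → ℂ} {r : ℝ} (h : dist (hat v w) v < r) (t : unitInterval) :
    dist (up v w t) v < r := by
  have e : up v w t - v = ((t : ℝ) : ℂ) • (hat v w - v) := by
    funext i; simp [up]; ring
  rw [dist_eq_norm, e, norm_smul]
  rw [dist_eq_norm] at h
  have : ‖((t : ℝ) : ℂ)‖ ≤ 1 := by
    rw [Complex.norm_real, Real.norm_of_nonneg t.2.1]; exact t.2.2
  calc _ ≤ 1 * ‖hat v w - v‖ := by gcongr
    _ < r := by rwa [one_mul]

lemma up_perm (v w : Fin (m + 2) → ℂ) (g : Equiv.Perm (Fin (m + 2))) (t : unitInterval) :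
    up (v ∘ g) (w ∘ g) t = up v w t ∘ g := by
  funext i
  simp only [up, hat_perm, Function.comp_apply]

lemma up_AE {v w w' : Fin (m + 2) → ℂ} (hv : MZ v) (h : AE w w') (t : unitInterval) :
    up v w' t = up v w t := by
  funext i
  simp only [up, hat_AE hv h]

lemma MZ_AE {v v' : Fin (m + 2) → ℂ} (hv : MZ v) (hv' : MZ v') (h : AE v v') :
    ∃ b : ℂ, b * (starRingEnd ℂ) b = 1 ∧ ∀ i, v' i = b * v i := by
  obtain ⟨a, b, hb, h⟩ := h
  have h1 := hv'.1
  simp only [h, sum_aff, hv.1, mul_zero, zero_add, mul_eq_zero, m2, false_or] at h1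
  have h2 : ∀ i, v' i = b * v i := fun i => by rw [h, h1, add_zero]
  refine ⟨b, ?_, h2⟩
  have h3 := hv'.2
  have h4 := hv.2
  simp only [ell, h2, map_mul] at h3 h4
  rw [← h3, ← mul_one (b * _), ← h4, Finset.mul_sum]
  exact Finset.sum_congr rfl fun i _ => by ring

lemma up_rot {v v' w : Fin (m + 2) → ℂ} {b : ℂ} (hb : b * (starRingEnd ℂ) b = 1)
    (h : ∀ i, v' i = b * v i) (t : unitInterval) : ∀ i, up v' w t i = b * up v w t i := by
  have hb0 : (starRingEnd ℂ) b ≠ 0 := fun h => by simp [h] at hb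
  have e : ell v' w = (starRingEnd ℂ) b * ell v w := by
    simp only [ell, h, map_mul, Finset.mul_sum]
    exact Finset.sum_congr rfl fun i _ => by ring
  intro i
  have e2 : hat v' w i = b * hat v w i := by
    simp only [hat, e]
    rw [← mul_div_mul_left _ (ell v w) hb0, ← mul_div_assoc]
    congr 1
    linear_combination -(w i - mn w) * hb
  simp only [up, e2, h]
  ring

lemma nf_up_rot {v v' w : Fin (m + 2) → ℂ} (hv : MZ v) (hv' : MZ v') (h : AE v v')
    (t : unitInterval) : nf (up v' w t) = nf (up v w t) := by
  obtain ⟨b, hb, h⟩ := MZ_AE hv hv' h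
  refine nf_AE ⟨0, b, fun h0 => by simp [h0] at hb, fun i => ?_⟩
  rw [up_rot hb h, add_zero]

lemma exists_MZ (z : Ms m) : ∃ v, MZ v ∧ AE z.1 v := by
  set c : Fin (m + 2) → ℂ := fun i => z.1 i - mn z.1 with hc
  have hsum : ∑ i, c i = 0 := by
    have := m2 (m := m)
    simp only [hc]
    rw [Finset.sum_sub_distrib]
    simp only [mn, Finset.sum_const, Finset.card_univ, Fintype.card_fin, nsmul_eq_mul]
    push_cast
    rw [mul_div_cancel₀ _ this, sub_self]
  set R : ℝ := ∑ i, ‖c i‖ ^ 2 with hR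
  have hRpos : 0 < R := by
    have h01 : c 1 ≠ 0 ∨ c 0 ≠ 0 := by
      by_contra hh
      push Not at hh
      apply ms_ne z
      have := hh.1.trans hh.2.symm
      exact sub_left_injective this
    rcases h01 with h | h
    · exact Finset.sum_pos' (fun i _ => by positivity) ⟨1, Finset.mem_univ _, by positivity⟩
    · exact Finset.sum_pos' (fun i _ => by positivity) ⟨0, Finset.mem_univ _, by positivity⟩
  have hs : Real.sqrt R ≠ 0 := (Real.sqrt_pos.2 hRpos).ne'
  have hs' : ((Real.sqrt R : ℝ) : ℂ) ≠ 0 := by exact_mod_cast hs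
  have hell : ell c c = (R : ℂ) := by
    simp only [ell, hR, Complex.mul_conj']
    push_cast; rfl
  refine ⟨fun i => ((Real.sqrt R : ℝ) : ℂ)⁻¹ * c i, ⟨?_, ?_⟩, ?_⟩
  · rw [← Finset.mul_sum, hsum, mul_zero]
  · have : ell (fun i => ((Real.sqrt R : ℝ) : ℂ)⁻¹ * c i) (fun i => ((Real.sqrt R : ℝ) : ℂ)⁻¹ * c i)
      = ((Real.sqrt R : ℝ) : ℂ)⁻¹ * ((Real.sqrt R : ℝ) : ℂ)⁻¹ * ell c c := by
      simp only [ell, Finset.mul_sum, map_mul, map_inv₀, Complex.conj_ofReal]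
      exact Finset.sum_congr rfl fun i _ => by ring
    rw [this, hell]
    have hsq : ((Real.sqrt R : ℝ) : ℂ) * ((Real.sqrt R : ℝ) : ℂ) = (R : ℂ) := by
      exact_mod_cast Real.mul_self_sqrt hRpos.le
    rw [← hsq]
    field_simp
  · exact ⟨- ((Real.sqrt R : ℝ) : ℂ)⁻¹ * mn z.1, ((Real.sqrt R : ℝ) : ℂ)⁻¹, inv_ne_zero hs',
      fun i => by simp only [hc]; ring⟩

end
end TC

/-! Part 14 -/
namespace TC
set_option linter.unusedSectionVars false
open Filter in
open scoped Topology in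
lemma ev_ball {E : Type} [PseudoMetricSpace E] {v : E} {P : E → Prop} (h : ∀ᶠ w in 𝓝 v, P w) :
    ∀ᶠ r : ℝ in 𝓝[>] 0, ∀ w, dist w v < r → P w := by
  obtain ⟨ε, hε, h⟩ := Metric.eventually_nhds_iff.1 h
  filter_upwards [Ioo_mem_nhdsGT hε] with r hr w hw
  exact h (hw.trans hr.2)

section
open Filter
open scoped Topology
variable {m : ℕ}

lemma nf_cont {w : Fin (m + 2) → ℂ} (h : w 1 ≠ w 0) : ContinuousAt nf w := by
  refine continuousAt_pi.2 fun i => ?_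
  refine ContinuousAt.div ?_ ?_ (sub_ne_zero.2 h) <;> fun_prop

lemma mn_cont : Continuous (mn : (Fin (m + 2) → ℂ) → ℂ) := by
  unfold mn; fun_prop

lemma ell_cont (v : Fin (m + 2) → ℂ) : Continuous (ell v) := by
  unfold ell; fun_prop

lemma hat_cont {v w : Fin (m + 2) → ℂ} (h : ell v w ≠ 0) : ContinuousAt (hat v) w := by
  refine continuousAt_pi.2 fun i => ?_
  have h1 := (mn_cont (m := m)).continuousAt (x := w)
  have h2 := (ell_cont v).continuousAt (x := w)
  exact ((continuousAt_apply i w).sub h1).div h2 h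

lemma up_cont {v w : Fin (m + 2) → ℂ} (h : ell v w ≠ 0) (t : unitInterval) :
    ContinuousAt (fun x : (Fin (m + 2) → ℂ) × unitInterval => up v x.1 x.2) (w, t) := by
  refine continuousAt_pi.2 fun i => ?_
  have h1 : ContinuousAt (fun x : (Fin (m + 2) → ℂ) × unitInterval => hat v x.1) (w, t) :=
    ContinuousAt.comp (f := Prod.fst) (x := (w, t)) (hat_cont h) continuousAt_fst
  have h2 : ContinuousAt (fun x : (Fin (m + 2) → ℂ) × unitInterval => ((x.2 : ℝ) : ℂ)) (w, t) := by
    fun_prop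
  have h3 := (continuousAt_pi.1 h1) i
  exact ((continuousAt_const.sub h2).mul continuousAt_const).add (h2.mul h3)

lemma isOpen_inj : IsOpen {w : Fin (m + 2) → ℂ | Function.Injective w} := by
  have : {w : Fin (m + 2) → ℂ | Function.Injective w} =
      ⋂ i, ⋂ j, ⋂ (_ : i ≠ j), {w | w i ≠ w j} := by
    ext w
    simp only [Set.mem_ofPred_eq, Set.mem_iInter]
    constructor
    · intro h i j hij hw; exact hij (h hw)
    · intro h i j hij
      by_contra hne
      exact h i j hne hij
  rw [this]
  refine isOpen_iInter_of_finite fun i => isOpen_iInter_of_finite fun j =>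
    isOpen_iInter_of_finite fun _ => ?_
  exact isOpen_ne_fun (continuous_apply i) (continuous_apply j)

/-- the slice neighbourhood -/
def Nb (r : ℝ) (v : Fin (m + 2) → ℂ) : Set (Fin (m + 2) → ℂ) :=
  {w | ell v w ≠ 0 ∧ dist (hat v w) v < r}

lemma Nb_open (r : ℝ) (v : Fin (m + 2) → ℂ) : IsOpen (Nb r v) := by
  rw [isOpen_iff_mem_nhds]
  rintro w ⟨h1, h2⟩
  refine Filter.inter_mem ((ell_cont v).continuousAt.eventually_ne h1) ?_
  exact (hat_cont h1).preimage_mem_nhds (Metric.isOpen_ball.mem_nhds h2)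

lemma dist_perm (v w : Fin (m + 2) → ℂ) (g : Equiv.Perm (Fin (m + 2))) :
    dist (v ∘ g) (w ∘ g) ≤ dist v w := by
  rw [dist_pi_le_iff dist_nonneg]
  intro i
  exact dist_le_pi_dist v w (g i)

lemma Nb_perm {r : ℝ} {v w : Fin (m + 2) → ℂ} (hw : w ∈ Nb r v) (g : Equiv.Perm (Fin (m + 2))) :
    w ∘ g ∈ Nb r (v ∘ g) := by
  refine ⟨by rw [ell_perm]; exact hw.1, ?_⟩
  rw [hat_perm]
  exact (dist_perm _ _ g).trans_lt hw.2

lemma Nb_AE {r : ℝ} {v w w' : Fin (m + 2) → ℂ} (hv : MZ v) (h : AE w w') (hw : w ∈ Nb r v) :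
    w' ∈ Nb r v := ⟨ell_ne_AE hv h hw.1, by rw [hat_AE hv h]; exact hw.2⟩

lemma Nb_up {r : ℝ} {v w : Fin (m + 2) → ℂ} (hv : MZ v) (hw : w ∈ Nb r v) (t : unitInterval) :
    up v w t ∈ Nb r v :=
  ⟨by rw [ell_up hv hw.1]; exact one_ne_zero, by rw [hat_up hv hw.1]; exact up_dist hw.2 t⟩

lemma Nb_self {r : ℝ} (hr : 0 < r) {v : Fin (m + 2) → ℂ} (hv : MZ v) : v ∈ Nb r v := by
  have : hat v v = v := by
    funext i
    simp [hat, mn, hv.1, hv.2]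
  exact ⟨by rw [hv.2]; exact one_ne_zero, by rw [this, dist_self]; exact hr⟩

theorem good_exists {Y : Type} [TopologicalSpace Y] (p : C(Ms m, Y)) (hp : IsOpenQuotientMap p)
    (hfib : ∀ x y, p x = p y ↔ ∃ g, y = actf g x) (y : Y) (V : Set Y) (hV : IsOpen V)
    (hy : y ∈ V) : ∃ V' ⊆ V, y ∈ V' ∧ Good actf p V' := by
  have hpa : ∀ g z, p (actf g z) = p z := fun g z => ((hfib _ _).2 ⟨g, rfl⟩).symm
  obtain ⟨q0, rfl⟩ := hp.surjective y
  obtain ⟨q, hq, hqq⟩ := exists_MZ q0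
  have hqi : Function.Injective q := hqq.inj q0.2.1
  have hqg : ∀ g : Equiv.Perm (Fin (m + 2)), Function.Injective (q ∘ g) :=
    fun g => hqi.comp g.injective
  have hnq : ∀ g : Equiv.Perm (Fin (m + 2)), nf (q ∘ g) = (actf g q0).1 := fun g =>
    nf_AE (hqq.comp g)
  -- choice of the radius
  have hr1 : ∀ᶠ r : ℝ in 𝓝[>] 0, ∀ g : Equiv.Perm (Fin (m + 2)), ∀ w, dist w (q ∘ g) < r →
      Function.Injective w :=
    eventually_all.2 fun g => ev_ball (isOpen_inj.mem_nhds (hqg g))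
  have hr2 : ∀ᶠ r : ℝ in 𝓝[>] 0, ∀ w, dist w q < r →
      ∀ z : Ms m, z.1 = nf w → p z ∈ V := by
    apply ev_ball
    have ho : IsOpen (p ⁻¹' V) := hV.preimage p.continuous
    obtain ⟨O, hO, hOV⟩ := isOpen_induced_iff.1 ho
    have hmem : nf q ∈ O := by
      have : q0 ∈ Subtype.val ⁻¹' O := by rw [hOV]; exact hy
      rw [show nf q = q0.1 from (nf_AE hqq).trans (nf_ms q0)]
      exact this
    filter_upwards [(nf_cont (inj_ne hqi)).preimage_mem_nhds (hO.mem_nhds hmem)] with w hw z hz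
    have : z ∈ Subtype.val ⁻¹' O := by
      change z.1 ∈ O
      rw [hz]; exact hw
    rw [hOV] at this
    exact this
  have hr3 : ∀ᶠ r : ℝ in 𝓝[>] 0, ∀ g h : Equiv.Perm (Fin (m + 2)), ∀ w w', dist w (q ∘ g) < r →
      dist w' (q ∘ h) < r → nf w = nf w' → nf (q ∘ g) = nf (q ∘ h) := by
    refine eventually_all.2 fun g => eventually_all.2 fun h => ?_
    by_cases heq : nf (q ∘ g) = nf (q ∘ h)
    · exact Eventually.of_forall fun r w w' _ _ _ => heq
    · obtain ⟨A, B, hA, hB, ha, hb, hAB⟩ := t2_separation heq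
      have e1 := ev_ball ((nf_cont (inj_ne (hqg g))).preimage_mem_nhds (hA.mem_nhds ha))
      have e2 := ev_ball ((nf_cont (inj_ne (hqg h))).preimage_mem_nhds (hB.mem_nhds hb))
      filter_upwards [e1, e2] with r e1 e2 w w' h1 h2 h3
      have a1 : nf w ∈ A := e1 w h1
      have a2 : nf w' ∈ B := e2 w' h2
      rw [h3] at a1
      exact (Set.disjoint_left.1 hAB a1 a2).elim
  obtain ⟨r, ⟨⟨hr1, hr2⟩, hr3⟩, hr0⟩ := (((hr1.and hr2).and hr3).and self_mem_nhdsWithin).exists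
  have hr0 : 0 < r := hr0
  let N : Set (Ms m) := {z | z.1 ∈ Nb r q}
  have hN : IsOpen N := (Nb_open r q).preimage continuous_subtype_val
  have hmem : ∀ z, z ∈ p ⁻¹' (p '' N) ↔ ∃ g : Equiv.Perm (Fin (m + 2)), z.1 ∈ Nb r (q ∘ g) := by
    intro z
    constructor
    · rintro ⟨z0, hz0, hz⟩
      obtain ⟨g, rfl⟩ := (hfib _ _).1 hz
      refine ⟨g, ?_⟩
      rw [actf_val]
      exact Nb_AE (hq.perm g) (AE_nf_self (inj_ne (z0.2.1.comp g.injective))) (Nb_perm hz0 g)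
    · rintro ⟨g, hg⟩
      refine ⟨actf g⁻¹ z, ?_, hpa _ _⟩
      change nf (z.1 ∘ (g⁻¹ : Equiv.Perm (Fin (m + 2)))) ∈ Nb r q
      have h1 := Nb_perm hg g⁻¹
      have h2 : (q ∘ g) ∘ (g⁻¹ : Equiv.Perm (Fin (m + 2))) = q := by
        funext i; simp
      rw [h2] at h1
      exact Nb_AE hq (AE_nf_self (inj_ne (z.2.1.comp (g⁻¹).injective))) h1
  have hwd : ∀ (z : Ms m) (g h : Equiv.Perm (Fin (m + 2))), z.1 ∈ Nb r (q ∘ g) →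
      z.1 ∈ Nb r (q ∘ h) → ∀ t, nf (up (q ∘ g) z.1 t) = nf (up (q ∘ h) z.1 t) := by
    intro z g h hg hh t
    refine nf_up_rot (hq.perm h) (hq.perm g) (AE_nf (inj_ne (hqg h)) (inj_ne (hqg g)) ?_) t
    exact (hr3 g h _ _ hg.2 hh.2 ((nf_AE (AE_hat hg.1)).trans (nf_AE (AE_hat hh.1)).symm)).symm
  choose gg hgg using fun z : p ⁻¹' (p '' N) => (hmem z.1).1 z.2
  have hinj : ∀ (w : Fin (m + 2) → ℂ) (g : Equiv.Perm (Fin (m + 2))) t, w ∈ Nb r (q ∘ g) →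
      Function.Injective (up (q ∘ g) w t) := fun w g t hw => hr1 g _ (up_dist hw.2 t)
  let H : (p ⁻¹' (p '' N)) × unitInterval → p ⁻¹' (p '' N) := fun x =>
    ⟨nr (up (q ∘ gg x.1) x.1.1.1 x.2) (hinj _ _ _ (hgg x.1)), (hmem _).2 ⟨gg x.1, by
      change nf (up (q ∘ gg x.1) x.1.1.1 x.2) ∈ Nb r (q ∘ gg x.1)
      exact Nb_AE (hq.perm _) (AE_nf_self (inj_ne (hinj _ _ _ (hgg x.1))))
        (Nb_up (hq.perm _) (hgg x.1) x.2)⟩⟩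
  have hHv : ∀ x (g : Equiv.Perm (Fin (m + 2))), x.1.1.1 ∈ Nb r (q ∘ g) → (H x).1.1 = nf (up (q ∘ g) x.1.1.1 x.2) := by
    intro x g hx
    exact hwd x.1.1 (gg x.1) g (hgg x.1) hx x.2
  have hHc : Continuous H := by
    apply Continuous.subtype_mk
    apply Continuous.subtype_mk
    rw [continuous_iff_continuousAt]
    rintro ⟨z, t⟩
    have c1 : ContinuousAt (fun x : (p ⁻¹' (p '' N)) × unitInterval =>
        nf (up (q ∘ gg z) x.1.1.1 x.2)) (z, t) := by
      have c2 : ContinuousAt (fun x : (p ⁻¹' (p '' N)) × unitInterval => (x.1.1.1, x.2)) (z, t) := by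
        fun_prop
      have c3 := ContinuousAt.comp (f := fun x : (p ⁻¹' (p '' N)) × unitInterval => (x.1.1.1, x.2))
        (x := (z, t)) (up_cont (hgg z).1 t) c2
      exact ContinuousAt.comp (f := fun x : (p ⁻¹' (p '' N)) × unitInterval =>
        up (q ∘ gg z) x.1.1.1 x.2) (x := (z, t)) (nf_cont (inj_ne (hinj _ _ _ (hgg z)))) c3
    refine c1.congr ?_
    have c4 : Continuous (fun x : (p ⁻¹' (p '' N)) × unitInterval => x.1.1.1) := by fun_prop
    filter_upwards [c4.continuousAt.preimage_mem_nhds ((Nb_open r (q ∘ gg z)).mem_nhds (hgg z))]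
      with x hx
    exact (hHv x (gg z) hx).symm
  have hq0N : q0 ∈ N := by
    have h1 := Nb_AE hq (AE_nf_self (inj_ne hqi)) (Nb_self hr0 hq)
    rw [show nf q = q0.1 from (nf_AE hqq).trans (nf_ms q0)] at h1
    exact h1
  refine ⟨p '' N, ?_, ⟨q0, hq0N, rfl⟩, hp.isOpenMap _ hN, ⟨q0, q0, hq0N, rfl⟩, ⟨H, hHc⟩, ?_, ?_, ?_⟩
  · rintro _ ⟨z, hz, rfl⟩
    exact hr2 _ hz.2 z ((nf_ms z).symm.trans (nf_AE (AE_hat hz.1)).symm)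
  · intro z
    refine ⟨gg z, Subtype.ext ?_⟩
    rw [← hnq]
    change nf _ = _
    rw [up_zero]
  · intro z
    apply Subtype.ext; apply Subtype.ext
    change nf _ = _
    rw [up_one, nf_AE (AE_hat (hgg z).1), nf_ms]
  · intro g z z' t hz
    apply Subtype.ext
    have hz1 : z'.1.1 ∈ Nb r (q ∘ (gg z * g)) := by
      rw [hz, actf_val]
      exact Nb_AE (hq.perm _) (AE_nf_self (inj_ne (z.1.2.1.comp g.injective))) (Nb_perm (hgg z) g)
    refine (hHv (z', t) _ hz1).trans ?_
    rw [actf_val]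
    change nf (up (q ∘ (gg z * g)) z'.1.1 t) = nf (nf _ ∘ g)
    rw [nf_nf_comp (inj_ne (hinj _ _ _ (hgg z))), hz, actf_val,
      up_AE (hq.perm _) (AE_nf_self (inj_ne (z.1.2.1.comp g.injective))), ← up_perm]
    rfl
end
end TC

/-! Part 15 -/
namespace TC
set_option linter.unusedSectionVars false

section
variable {m : ℕ}

/-- the projection to the moduli space -/
def prj : C(Ms m, ConfigModAff (m + 2)) :=
  ⟨fun z => Quot.mk _ (Quot.mk _ ⟨z.1, z.2.1, fun _ => trivial⟩), by
    refine continuous_quot_mk.comp (continuous_quot_mk.comp ?_)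
    exact Continuous.subtype_mk continuous_subtype_val _⟩

/-- projection from ordered configurations -/
def opr (f : OrdConfig (m + 2) Set.univ) : ConfigModAff (m + 2) := Quot.mk _ (Quot.mk _ f)

lemma opr_AE {f g : OrdConfig (m + 2) Set.univ} (h : AE f.1 g.1) : opr f = opr g := by
  obtain ⟨a, b, hb, h⟩ := h
  exact Quot.sound ⟨a, b, hb, f, g, rfl, rfl, h⟩

lemma opr_perm {f g : OrdConfig (m + 2) Set.univ} (σ : Equiv.Perm (Fin (m + 2)))
    (h : g.1 = f.1 ∘ σ) : opr f = opr g :=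
  congrArg (Quot.mk _) (Quot.sound ⟨σ, h⟩)

lemma prj_actf (g : Equiv.Perm (Fin (m + 2))) (z : Ms m) : prj (actf g z) = prj z := by
  let f1 : OrdConfig (m + 2) Set.univ := ⟨z.1, z.2.1, fun _ => trivial⟩
  let f2 : OrdConfig (m + 2) Set.univ := ⟨z.1 ∘ g, z.2.1.comp g.injective, fun _ => trivial⟩
  let f3 : OrdConfig (m + 2) Set.univ := ⟨(actf g z).1, (actf g z).2.1, fun _ => trivial⟩
  have h1 : opr f1 = opr f2 := opr_perm g rfl
  have h2 : opr f2 = opr f3 := opr_AE (AE_nf_self (inj_ne f2.2.1))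
  exact (h1.trans h2).symm

def orel : Setoid (Ms m) where
  r x y := ∃ g, y = actf g x
  iseqv := by
    refine ⟨fun x => ⟨1, (actf_one x).symm⟩, ?_, ?_⟩
    · rintro x y ⟨g, rfl⟩
      exact ⟨g⁻¹, by rw [actf_mul, mul_inv_cancel, actf_one]⟩
    · rintro x y z ⟨g, rfl⟩ ⟨h, rfl⟩
      exact ⟨g * h, by rw [actf_mul]⟩

noncomputable def onr (f : OrdConfig (m + 2) Set.univ) : Ms m := nr f.1 f.2.1

noncomputable def inv1 : UConfig (m + 2) Set.univ → Quotient (orel (m := m)) :=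
  Quot.lift (fun f => Quotient.mk _ (onr f)) (by
    rintro f g ⟨σ, h⟩
    refine Quotient.sound ⟨σ, Subtype.ext ?_⟩
    rw [actf_val]
    change nf g.1 = nf (nf f.1 ∘ σ)
    rw [nf_nf_comp (inj_ne f.2.1), h])

noncomputable def inv2 : ConfigModAff (m + 2) → Quotient (orel (m := m)) :=
  Quot.lift inv1 (by
    rintro _ _ ⟨a, b, hb, f, g, rfl, rfl, h⟩
    change Quotient.mk _ (onr f) = Quotient.mk _ (onr g)
    congr 1
    exact Subtype.ext (nf_AE ⟨a, b, hb, h⟩).symm)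

lemma inv2_prj (z : Ms m) : inv2 (prj z) = Quotient.mk _ z := by
  change Quotient.mk _ (onr _) = _
  congr 1
  exact Subtype.ext (nf_ms z)

lemma prj_fib (x y : Ms m) : prj x = prj y ↔ ∃ g, y = actf g x := by
  constructor
  · intro h
    have := congrArg inv2 h
    rw [inv2_prj, inv2_prj] at this
    exact Quotient.exact this
  · rintro ⟨g, rfl⟩
    exact (prj_actf g x).symm

lemma onr_cont : Continuous (onr (m := m)) := by
  refine Continuous.subtype_mk ?_ _
  rw [continuous_iff_continuousAt]
  intro f
  exact ContinuousAt.comp (f := fun f : OrdConfig (m + 2) Set.univ => f.1) (x := f)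
    (nf_cont (inj_ne f.2.1)) continuous_subtype_val.continuousAt

lemma prj_onr (f : OrdConfig (m + 2) Set.univ) : prj (onr f) = opr f := by
  exact (opr_AE (g := ⟨(onr f).1, (onr f).2.1, fun _ => trivial⟩) (AE_nf_self (inj_ne f.2.1))).symm

lemma opr_quot : IsQuotientMap (opr (m := m)) :=
  (isQuotientMap_quot_mk (r := affRel (m + 2))).comp isQuotientMap_quot_mk

lemma prj_quot : IsQuotientMap (prj (m := m)) := by
  have h : (prj (m := m) : Ms m → _) ∘ onr = opr := funext prj_onr
  exact IsQuotientMap.of_comp onr_cont prj.continuous (h ▸ opr_quot)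

lemma prj_open : IsOpenQuotientMap (prj (m := m)) := by
  refine ⟨prj_quot.surjective, prj.continuous, ?_⟩
  intro U hU
  rw [← prj_quot.isOpen_preimage]
  have : prj ⁻¹' (prj '' U) = ⋃ g, (actf g : Ms m → Ms m) ⁻¹' U := by
    ext z
    simp only [Set.mem_preimage, Set.mem_image, Set.mem_iUnion]
    constructor
    · rintro ⟨w, hw, h⟩
      obtain ⟨g, hg⟩ := (prj_fib _ _).1 h.symm
      exact ⟨g, hg ▸ hw⟩
    · rintro ⟨g, hg⟩
      exact ⟨_, hg, prj_actf g z⟩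
  rw [this]
  exact isOpen_iUnion fun g => hU.preimage (actf g).continuous

instance : LocallyCompactSpace (Ms m) := by
  have h : IsLocallyClosed {z : Fin (m + 2) → ℂ | Function.Injective z ∧ z 0 = 0 ∧ z 1 = 1} := by
    have h1 : IsClosed {z : Fin (m + 2) → ℂ | z 0 = 0 ∧ z 1 = 1} :=
      (isClosed_eq (continuous_apply 0) continuous_const).inter
        (isClosed_eq (continuous_apply 1) continuous_const)
    exact isOpen_inj.isLocallyClosed.inter h1.isLocallyClosed
  exact h.locallyCompactSpace

instance : SecondCountableTopology (ConfigModAff (m + 2)) :=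
  prj_quot.secondCountableTopology prj_open.isOpenMap

instance : LocallyCompactSpace (ConfigModAff (m + 2)) := prj_open.locallyCompactSpace

instance : T2Space (ConfigModAff (m + 2)) := by
  rw [t2Space_iff_of_isOpenQuotientMap prj_open]
  have : {q : Ms m × Ms m | prj q.1 = prj q.2} = ⋃ g, {q : Ms m × Ms m | q.2 = actf g q.1} := by
    ext q
    simp only [Set.mem_iUnion]
    exact prj_fib _ _
  rw [this]
  exact isClosed_iUnion_of_finite fun g => isClosed_eq (by fun_prop) (by fun_prop)

instance : Nonempty (Ms m) := by
  refine ⟨⟨fun i => ((i : ℕ) : ℂ), ?_, by simp, by simp⟩⟩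
  intro i j h
  have h' : ((i : ℕ) : ℂ) = ((j : ℕ) : ℂ) := h
  exact Fin.ext (by exact_mod_cast h')

theorem chain_torsion {k : ℕ} (z : Ch (k + 2) (ConfigModAff (m + 2))) (hz : dS z = 0) :
    ∃ b, (((m + 2).factorial : ℕ) : ℤ) • z = dS b := by
  let _ : PseudoMetricSpace (ConfigModAff (m + 2)) :=
    TopologicalSpace.pseudoMetrizableSpacePseudoMetric _
  have : Nonempty (ConfigModAff (m + 2)) := ⟨prj (Classical.arbitrary _)⟩
  have h := transfer (act := actf) actf_mul prj prj_open prj_fib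
    (fun y V hV hy => good_exists prj prj_open prj_fib y V hV hy) (j := k + 1)
    (fun c hc hi => inv_bd c hc hi) z hz
  rw [Fintype.card_perm, Fintype.card_fin] at h
  exact h
end
end TC

/-! Part 16 -/
namespace TC

section
variable (Y : Type) [TopologicalSpace Y]

noncomputable abbrev KC : ChainComplex (ModuleCat ℤ) ℕ :=
  (AlgebraicTopology.alternatingFaceMapComplex (ModuleCat ℤ)).obj
      (((CategoryTheory.SimplicialObject.whiskering _ _).obj (ModuleCat.free ℤ)).obj
        (TopCat.toSSet.obj (TopCat.of Y)))

noncomputable def sEq (k : ℕ) : (TopCat.toSSet.obj (TopCat.of Y)).obj (Opposite.op (SimplexCategory.mk k)) ≃ Sing (k + 1) Y :=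
  TopCat.toSSetObjEquiv (TopCat.of Y) (Opposite.op (SimplexCategory.mk k))

noncomputable def phi (k : ℕ) : ((KC Y).X k : Type) ≃ₗ[ℤ] Ch (k + 1) Y :=
  Finsupp.domLCongr (sEq Y k)

lemma phi_single (k : ℕ) (s : (TopCat.toSSet.obj (TopCat.of Y)).obj (Opposite.op (SimplexCategory.mk k))) :
    phi Y k (ModuleCat.freeMk s) = Finsupp.single (sEq Y k s) 1 :=
  Finsupp.domLCongr_single (R := ℤ) (sEq Y k) s (1 : ℤ)

lemma sEq_face (k : ℕ) (i : Fin (k + 2)) (s) :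
    sEq Y k ((TopCat.toSSet.obj (TopCat.of Y)).δ i s) = pull i.succAbove (sEq Y (k + 1) s) := by
  rfl

lemma modsum_apply {M N : ModuleCat ℤ} {q : ℕ} (c : Fin q → ℤ) (f : Fin q → (M ⟶ N)) (v : M) :
    (∑ i, c i • f i).hom v = ∑ i, c i • (f i).hom v := by
  simp [ModuleCat.hom_sum, ModuleCat.hom_zsmul]

/-- The free generator attached to a singular simplex, in the complex. -/
noncomputable def fm (k : ℕ) (s : (TopCat.toSSet.obj (TopCat.of Y)).obj (Opposite.op (SimplexCategory.mk k))) :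
    ((KC Y).X k : Type) := ModuleCat.freeMk s

lemma phi_fm (k : ℕ) (s) : phi Y k (fm Y k s) = Finsupp.single (sEq Y k s) 1 := phi_single Y k s

lemma KC_d_freeMk (k : ℕ) (s : (TopCat.toSSet.obj (TopCat.of Y)).obj (Opposite.op (SimplexCategory.mk (k + 1)))) :
    (KC Y).d (k + 1) k (fm Y (k + 1) s) =
      ∑ i : Fin (k + 2), (-1 : ℤ) ^ (i : ℕ) •
        fm Y k ((TopCat.toSSet.obj (TopCat.of Y)).δ i s) := by
  have h := AlgebraicTopology.AlternatingFaceMapComplex.obj_d_eq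
    (((CategoryTheory.SimplicialObject.whiskering _ _).obj (ModuleCat.free ℤ)).obj
        (TopCat.toSSet.obj (TopCat.of Y))) k
  have h2 := congrArg (fun f => (ModuleCat.Hom.hom f) (fm Y (k + 1) s)) h
  refine h2.trans ?_
  refine (modsum_apply _ _ _).trans ?_
  refine Finset.sum_congr rfl (fun i _ => ?_)
  refine congrArg (fun v : ((KC Y).X k : Type) => (-1 : ℤ) ^ (i : ℕ) • v) ?_
  exact ModuleCat.free_map_apply ((TopCat.toSSet.obj (TopCat.of Y)).δ i) s

lemma phi_d (k : ℕ) (w : ((KC Y).X (k + 1) : Type)) :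
    phi Y k ((KC Y).d (k + 1) k w) = dS (phi Y (k + 1) w) := by
  have h : (KC Y).d (k + 1) k ≫ ModuleCat.ofHom (phi Y k).toLinearMap =
      ModuleCat.ofHom (dS.comp (phi Y (k + 1)).toLinearMap) := by
    refine ModuleCat.free_hom_ext (fun s => ?_)
    have e1 : phi Y k ((KC Y).d (k + 1) k (fm Y (k + 1) s)) =
        dS (phi Y (k + 1) (fm Y (k + 1) s)) := by
      rw [KC_d_freeMk, map_sum, phi_fm, dS, dG_single]
      refine Finset.sum_congr rfl (fun i _ => ?_)
      rw [map_zsmul, phi_fm, sEq_face]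
    exact e1
  exact congrArg (fun f => (ModuleCat.Hom.hom f) w) h

lemma final_torsion (N : ℤ) (k : ℕ)
    (H : ∀ z : Ch (k + 2) Y, dS z = 0 → ∃ b, N • z = dS b)
    (x : SingularHomology ℤ (k + 1) Y) : N • x = 0 := by
  change ((KC Y).homology (k + 1) : Type) at x
  have hs : Function.Surjective ((KC Y).homologyπ (k + 1)) :=
    (ModuleCat.epi_iff_surjective _).1 inferInstance
  have hi : Function.Injective ((KC Y).iCycles (k + 1)) :=
    (ModuleCat.mono_iff_injective _).1 inferInstance
  obtain ⟨y, rfl⟩ := hs x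
  have hz : (KC Y).d (k + 1) k ((KC Y).iCycles (k + 1) y) = 0 :=
    congrArg (fun f => (ModuleCat.Hom.hom f) y) ((KC Y).iCycles_d (k + 1) k)
  obtain ⟨b, hb⟩ := H (phi Y (k + 1) ((KC Y).iCycles (k + 1) y)) (by
    rw [← phi_d, hz, map_zero])
  obtain ⟨w, rfl⟩ := (phi Y (k + 2)).surjective b
  have h1 : N • (KC Y).iCycles (k + 1) y = (KC Y).d (k + 2) (k + 1) w := by
    apply (phi Y (k + 1)).injective
    rw [phi_d, ← hb, map_zsmul]
  have h2 : N • y = (KC Y).toCycles (k + 2) (k + 1) w := by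
    apply hi
    have h3 : (KC Y).iCycles (k + 1) ((KC Y).toCycles (k + 2) (k + 1) w)
        = (KC Y).d (k + 2) (k + 1) w :=
      congrArg (fun f => (ModuleCat.Hom.hom f) w) ((KC Y).toCycles_i (k + 2) (k + 1))
    rw [h3, map_zsmul, h1]
  have h4 : (KC Y).homologyπ (k + 1) ((KC Y).toCycles (k + 2) (k + 1) w) = 0 :=
    congrArg (fun f => (ModuleCat.Hom.hom f) w) ((KC Y).toCycles_comp_homologyπ (k + 2) (k + 1))
  have h5 : (KC Y).homologyπ (k + 1) (N • y) = 0 := by rw [h2, h4]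
  rw [map_zsmul] at h5
  exact h5
end
end TC

/-- For `n ≥ 2` and `k ≥ 1`, every class in `H_k(C_n(ℂ)/(ℂ⋊ℂ*); ℤ) = H_k(M_{0,n+1}/Σ_n; ℤ)`
is killed by `n!`. -/
theorem configModAff_homology_torsion (n k : ℕ) (hn : 2 ≤ n) (hk : 1 ≤ k)
    (x : SingularHomology ℤ k (ConfigModAff n)) :
    (n.factorial : ℤ) • x = 0 := by
  obtain ⟨m, rfl⟩ := Nat.exists_eq_add_of_le' hn
  obtain ⟨k, rfl⟩ := Nat.exists_eq_add_of_le' hk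
  exact TC.final_torsion _ _ k (fun z hz => TC.chain_torsion z hz) x
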